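/- For every constant c ≥ 1 there is a constant C such that for all integers n ≥ 2 and f ≥ 1 there exists a decoder function D (depending only on n, f, and c) with the following property: for every finite simple graph G = (V,E) on n vertices there exists a finitely supported probability distribution over labeling functions L_V : V → {0,1}^b with b ≤ C·f²·(log₂ n)⁶, such that for every fixed s,t ∈ V and F ⊆ V ∖ {s,t} with |F| ≤ f, with probability at least 1 − n^{−c} over the random labeling, D applied to (L_V(s), L_V(t), {L_V(v) : v ∈ F}) outputs true if and only if s and t lie in the same connected component of the induced subgraph G − F on V ∖ F. -/

import Mathlib

open scoped Classical

namespace VFL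
set_option linter.all false
set_option autoImplicit false
open scoped Classical
open Finset
noncomputable section
universe u
variable {V : Type u} [Fintype V] [DecidableEq V]

/-! ### Section 1: graph basics -/

theorem reach_of_adj {V : Type u} {A B : SimpleGraph V} (h : ∀ u v, A.Adj u v → B.Reachable u v)
    {a b : V} (hab : A.Reachable a b) : B.Reachable a b := by
  obtain ⟨w⟩ := hab
  induction w with
  | nil => exact SimpleGraph.Reachable.refl _
  | cons hadj _ ih => exact (h _ _ hadj).trans ih

/-- invariants propagate along reachability -/
theorem reach_inv {V : Type u} {A : SimpleGraph V} (P : V → Prop)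
    (h : ∀ u v, A.Adj u v → P u → P v) {a b : V} (hab : A.Reachable a b) (ha : P a) : P b := by
  obtain ⟨w⟩ := hab
  induction w with
  | nil => exact ha
  | cons hadj _ ih => exact ih (h _ _ hadj ha)

/-- If the component of `a` in `A` only sees adjacent pairs of `B`. -/
theorem reach_restrict {V : Type u} {A B : SimpleGraph V} {a b : V}
    (h : ∀ u v, A.Reachable a u → A.Adj u v → B.Adj u v)
    (hab : A.Reachable a b) : B.Reachable a b := by
  have := reach_inv (A := A) (fun v => A.Reachable a v ∧ B.Reachable a v)
    (fun u v huv hu => ⟨hu.1.trans huv.reachable, hu.2.trans (h u v hu.1 huv).reachable⟩) hab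
    ⟨SimpleGraph.Reachable.refl _, SimpleGraph.Reachable.refl _⟩
  exact this.2

/-- delete vertices -/
def del (G : SimpleGraph V) (B : Finset V) : SimpleGraph V where
  Adj x y := G.Adj x y ∧ x ∉ B ∧ y ∉ B
  symm := ⟨fun x y h => ⟨h.1.symm, h.2.2, h.2.1⟩⟩
  loopless := ⟨fun x h => G.loopless.irrefl x h.1⟩

theorem del_le (G : SimpleGraph V) (B : Finset V) : del G B ≤ G := fun _ _ h => h.1

theorem del_reach_notMem {G : SimpleGraph V} {B : Finset V} {a b : V}
    (h : (del G B).Reachable a b) (ha : a ∉ B) : b ∉ B :=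
  reach_inv (A := del G B) (fun v => v ∉ B) (fun u v huv _ => huv.2.2) h ha

/-! ### Section 2: levels -/

/-- subgraph of vertices of level at most i -/
def Gle (G : SimpleGraph V) (lev : V → ℕ) (i : ℕ) : SimpleGraph V where
  Adj x y := G.Adj x y ∧ lev x ≤ i ∧ lev y ≤ i
  symm := ⟨fun x y h => ⟨h.1.symm, h.2.2, h.2.1⟩⟩
  loopless := ⟨fun x h => G.loopless.irrefl x h.1⟩

theorem Gle_le (G : SimpleGraph V) (lev : V → ℕ) (i : ℕ) : Gle G lev i ≤ G := fun _ _ h => h.1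

theorem Gle_mono (G : SimpleGraph V) (lev : V → ℕ) {i j : ℕ} (h : i ≤ j) :
    Gle G lev i ≤ Gle G lev j := fun _ _ h' => ⟨h'.1, h'.2.1.trans h, h'.2.2.trans h⟩

def Gam (G : SimpleGraph V) (lev : V → ℕ) (x : V) : Finset V :=
  univ.filter fun y => (Gle G lev (lev x)).Reachable x y

theorem mem_Gam {G : SimpleGraph V} {lev : V → ℕ} {x y : V} :
    y ∈ Gam G lev x ↔ (Gle G lev (lev x)).Reachable x y := by simp [Gam]

theorem self_mem_Gam (G : SimpleGraph V) (lev : V → ℕ) (x : V) : x ∈ Gam G lev x :=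
  mem_Gam.2 (SimpleGraph.Reachable.refl _)

theorem lev_le_of_mem_Gam {G : SimpleGraph V} {lev : V → ℕ} {x y : V} (h : y ∈ Gam G lev x) :
    lev y ≤ lev x :=
  reach_inv (A := Gle G lev (lev x)) (fun v => lev v ≤ lev x) (fun u v huv _ => huv.2.2) (mem_Gam.1 h) le_rfl

theorem Gam_eq_of_mem {G : SimpleGraph V} {lev : V → ℕ} {x y z : V} (hx : z ∈ Gam G lev x)
    (hy : z ∈ Gam G lev y) (h : lev x = lev y) : Gam G lev x = Gam G lev y := by
  rw [mem_Gam] at hx hy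
  ext w
  rw [mem_Gam, mem_Gam, h]
  rw [h] at hx
  exact ⟨fun hw => (hy.trans hx.symm).trans hw, fun hw => (hx.trans hy.symm).trans hw⟩

theorem lev_eq_of_Gam_eq {G : SimpleGraph V} {lev : V → ℕ} {x y : V}
    (h : Gam G lev x = Gam G lev y) : lev x = lev y :=
  le_antisymm (lev_le_of_mem_Gam (h ▸ self_mem_Gam G lev x))
    (lev_le_of_mem_Gam (h.symm ▸ self_mem_Gam G lev y))

/-- Γ computed for a different level function agreeing on the component. -/
theorem Gam_congr {G : SimpleGraph V} {lev lev' : V → ℕ} {x : V}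
    (h : ∀ y, lev y ≤ lev x → (lev' y ≤ lev' x))
    (h' : ∀ y, lev' y ≤ lev' x → (lev y ≤ lev x)) : Gam G lev x = Gam G lev' x := by
  have : Gle G lev (lev x) = Gle G lev' (lev' x) := by
    ext a b
    simp only [Gle]
    constructor
    · rintro ⟨h1, h2, h3⟩; exact ⟨h1, h _ h2, h _ h3⟩
    · rintro ⟨h1, h2, h3⟩; exact ⟨h1, h' _ h2, h' _ h3⟩
  ext y
  rw [mem_Gam, mem_Gam, this]

def cnt (G : SimpleGraph V) (lev : V → ℕ) (i : ℕ) : ℕ :=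
  ((univ.filter fun x => lev x = i).image (Gam G lev)).card

/-- The level function is good. -/
structure LevelsGood (G : SimpleGraph V) (lev : V → ℕ) : Prop where
  pow : ∀ x, 2 ^ (lev x) ≤ Fintype.card V
  tough : ∀ (i : ℕ) (B Y : Finset V), (∀ v ∈ B, lev v ≤ i) → (∀ y ∈ Y, lev y = i ∧ y ∉ B) →
    (∀ y ∈ Y, ∀ y' ∈ Y, y ≠ y' → ¬ (del (Gle G lev i) B).Reachable y y') →
    Y.card ≤ cnt G lev i + (3 * i + 2) * B.card

theorem levels_min (G : SimpleGraph V) : ∃ lev : V → ℕ, ∀ lev' : V → ℕ,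
    2 * ∑ x, lev x + (univ.image (Gam G lev')).card ≤
      2 * ∑ x, lev' x + (univ.image (Gam G lev)).card := by
  have key : ∀ lev : V → ℕ, (univ.image (Gam G lev)).card ≤ Fintype.card V :=
    fun lev => Finset.card_image_le
  obtain ⟨lev, hlev⟩ : ∃ lev, ∀ lev' : V → ℕ,
      2 * ∑ x, lev x + Fintype.card V - (univ.image (Gam G lev)).card ≤
        2 * ∑ x, lev' x + Fintype.card V - (univ.image (Gam G lev')).card :=
    ⟨_, fun lev' => Function.argmin_le (fun lev : V → ℕ =>
      2 * ∑ x, lev x + Fintype.card V - (univ.image (Gam G lev)).card) lev'⟩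
  refine ⟨lev, fun lev' => ?_⟩
  have := hlev lev'
  have h1 := key lev
  have h2 := key lev'
  omega

theorem levels_decay (G : SimpleGraph V) (lev : V → ℕ)
    (hmin : ∀ lev' : V → ℕ, 2 * ∑ x, lev x + (univ.image (Gam G lev')).card ≤
      2 * ∑ x, lev' x + (univ.image (Gam G lev)).card) (i : ℕ) :
    2 * (univ.filter fun x => i + 1 ≤ lev x).card ≤ (univ.filter fun x => i ≤ lev x).card := by
  have h := hmin (fun x => min (lev x) i)
  have h1 : (univ.image (Gam G lev)).card ≤
      (univ.image (Gam G (fun x => min (lev x) i))).card + (univ.filter fun x => i ≤ lev x).card := by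
    have : univ.image (Gam G lev) ⊆ univ.image (Gam G (fun x => min (lev x) i)) ∪
        (univ.filter fun x => i ≤ lev x).image (Gam G lev) := by
      intro X hX
      simp only [mem_image, mem_univ, true_and, mem_union, mem_filter] at hX ⊢
      obtain ⟨x, rfl⟩ := hX
      by_cases hx : i ≤ lev x
      · right; exact ⟨x, hx, rfl⟩
      · left
        refine ⟨x, (Gam_congr ?_ ?_).symm⟩ <;> intro y hy <;> omega
    calc _ ≤ _ := card_le_card this
      _ ≤ _ := card_union_le _ _
      _ ≤ _ := by gcongr; exact card_image_le
  have h2 : ∑ x, min (lev x) i + (univ.filter fun x => i + 1 ≤ lev x).card ≤ ∑ x, lev x := by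
    rw [card_filter, ← sum_add_distrib]
    apply sum_le_sum
    intro x _
    split_ifs <;> omega
  omega

theorem levels_tough (G : SimpleGraph V) (lev : V → ℕ)
    (hmin : ∀ lev' : V → ℕ, 2 * ∑ x, lev x + (univ.image (Gam G lev')).card ≤
      2 * ∑ x, lev' x + (univ.image (Gam G lev)).card) (i : ℕ) (B Y : Finset V)
    (hB : ∀ v ∈ B, lev v ≤ i) (hY : ∀ y ∈ Y, lev y = i ∧ y ∉ B)
    (hYY : ∀ y ∈ Y, ∀ y' ∈ Y, y ≠ y' → ¬ (del (Gle G lev i) B).Reachable y y') :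
    Y.card ≤ cnt G lev i + (3 * i + 2) * B.card := by
  set lev' : V → ℕ := fun x => if x ∈ B then i + 1 else lev x with hlev'
  have h := hmin lev'
  have hB1 : ∀ x ∈ B, lev' x = i + 1 := fun x hx => by simp [hlev', hx]
  have hB2 : ∀ x, x ∉ B → lev' x = lev x := fun x hx => by simp [hlev', hx]
  have hsum : ∑ x, lev' x ≤ ∑ x, lev x + (i + 1) * B.card := by
    have : (i + 1) * B.card = ∑ x : V, if x ∈ B then (i + 1) else 0 := by
      rw [← sum_filter, sum_const, smul_eq_mul, mul_comm]; congr 2; ext; simp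
    rw [this, ← sum_add_distrib]
    apply sum_le_sum
    intro x _
    by_cases hx : x ∈ B
    · rw [hB1 x hx]; simp [hx]
    · rw [hB2 x hx]; simp
  -- three families
  set Ahi := (univ.filter fun x => i < lev x).image (Gam G lev)
  set Alo := (univ.filter fun x => lev x < i).image (Gam G lev)
  set Afree := Alo.filter fun X => Disjoint X B
  have hcc : (univ.image (Gam G lev)).card ≤ Ahi.card + Alo.card + cnt G lev i := by
    have : univ.image (Gam G lev) ⊆ (Ahi ∪ Alo) ∪
        ((univ.filter fun x => lev x = i).image (Gam G lev)) := by
      intro X hX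
      simp only [Ahi, Alo, mem_image, mem_univ, true_and, mem_union, mem_filter] at hX ⊢
      obtain ⟨x, rfl⟩ := hX
      rcases lt_trichotomy (lev x) i with hx | hx | hx
      · exact Or.inl (Or.inr ⟨x, hx, rfl⟩)
      · exact Or.inr ⟨x, hx, rfl⟩
      · exact Or.inl (Or.inl ⟨x, hx, rfl⟩)
    calc _ ≤ _ := card_le_card this
      _ ≤ _ := card_union_le _ _
      _ ≤ _ := by
        have := card_union_le Ahi Alo
        unfold cnt
        omega
  have hlo : Alo.card ≤ Afree.card + i * B.card := by
    have h1 : Alo.card = Afree.card + (Alo.filter fun X => ¬ Disjoint X B).card :=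
      (card_filter_add_card_filter_not _).symm
    have h2 : (Alo.filter fun X => ¬ Disjoint X B).card ≤ (range i ×ˢ B).card := by
      have hex : ∀ X ∈ (Alo.filter fun X => ¬ Disjoint X B), ∃ p : ℕ × V,
          p ∈ range i ×ˢ B ∧ ∃ x, lev x = p.1 ∧ X = Gam G lev x ∧ p.2 ∈ X := by
        intro X hX
        simp only [mem_filter, Alo, mem_image, mem_univ, true_and] at hX
        obtain ⟨⟨x, hx, rfl⟩, hd⟩ := hX
        obtain ⟨v, hv, hvB⟩ := not_disjoint_iff.1 hd
        exact ⟨(lev x, v), by simp [hx, hvB], x, rfl, rfl, hv⟩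
      rcases isEmpty_or_nonempty V with hV | hV
      · rw [card_eq_zero.2]
        · exact Nat.zero_le _
        · by_contra hne
          obtain ⟨X, hX⟩ := nonempty_iff_ne_empty.2 hne
          obtain ⟨p, _⟩ := hex X hX
          exact hV.elim p.2
      choose! p hp using hex
      refine card_le_card_of_injOn p (fun X hX => (hp X hX).1) ?_
      intro X hX X' hX' he
      obtain ⟨_, x, h1, h2, h3⟩ := hp X hX
      obtain ⟨_, x', h1', h2', h3'⟩ := hp X' hX'
      rw [he] at h3 h1
      have h4 : (p X').2 ∈ Gam G lev x := (congrArg (fun Z => (p X').2 ∈ Z) h2).mp h3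
      have h4' : (p X').2 ∈ Gam G lev x' := (congrArg (fun Z => (p X').2 ∈ Z) h2').mp h3'
      rw [h2, h2']
      exact Gam_eq_of_mem h4 h4' (h1.trans h1'.symm)
    rw [card_product, card_range] at h2
    omega
  have hYinj : (Y.image (Gam G lev')).card = Y.card := by
    apply card_image_of_injOn
    intro y hy y' hy' he
    by_contra hne
    apply hYY y hy y' hy' hne
    have h1 : y' ∈ Gam G lev' y := by
      have := self_mem_Gam G lev' y'
      rwa [← he] at this
    rw [mem_Gam, hB2 y (hY y hy).2, (hY y hy).1] at h1
    refine h1.mono ?_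
    intro a b hab
    have key : ∀ a, lev' a ≤ i → lev a ≤ i ∧ a ∉ B := by
      intro a ha
      have : a ∉ B := fun haB => by have := hB1 a haB; omega
      exact ⟨(hB2 a this) ▸ ha, this⟩
    exact ⟨⟨hab.1, (key a hab.2.1).1, (key b hab.2.2).1⟩, (key a hab.2.1).2, (key b hab.2.2).2⟩
  have hcc' : Ahi.card + Afree.card + Y.card ≤ (univ.image (Gam G lev')).card := by
    have hd1 : Disjoint Ahi Afree := by
      rw [disjoint_left]
      intro X hX hX'
      simp only [Ahi, Afree, Alo, mem_filter, mem_image, mem_univ, true_and] at hX hX'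
      obtain ⟨x, hx, rfl⟩ := hX
      obtain ⟨⟨x', hx', he⟩, _⟩ := hX'
      have := lev_eq_of_Gam_eq he
      omega
    have hfree : ∀ x, lev x < i → Disjoint (Gam G lev x) B → Gam G lev x = Gam G lev' x := by
      intro x hx hdis
      have hxB : x ∉ B := disjoint_left.1 hdis (self_mem_Gam G lev x)
      ext y
      rw [mem_Gam, mem_Gam, hB2 x hxB]
      constructor
      · apply reach_restrict
        intro u v hu huv
        have hv : v ∉ B := disjoint_left.1 hdis (mem_Gam.2 (hu.trans huv.reachable))
        have hu' : u ∉ B := disjoint_left.1 hdis (mem_Gam.2 hu)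
        exact ⟨huv.1, by rw [hB2 u hu']; exact huv.2.1, by rw [hB2 v hv]; exact huv.2.2⟩
      · intro hr
        refine hr.mono ?_
        intro a b hab
        have key : ∀ a, lev' a ≤ lev x → lev a ≤ lev x := by
          intro a ha
          have : a ∉ B := fun haB => by have := hB1 a haB; omega
          exact (hB2 a this) ▸ ha
        exact ⟨hab.1, key a hab.2.1, key b hab.2.2⟩
    have hhi : ∀ x, i < lev x → Gam G lev x = Gam G lev' x ∧ lev' x = lev x := by
      intro x hx
      have hxB : x ∉ B := fun hxB => by have := hB x hxB; omega
      refine ⟨Gam_congr ?_ ?_, hB2 x hxB⟩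
      · intro y hy
        by_cases hyB : y ∈ B
        · rw [hB1 y hyB, hB2 x hxB]; omega
        · rw [hB2 y hyB, hB2 x hxB]; omega
      · intro y hy
        by_cases hyB : y ∈ B
        · have := hB y hyB; omega
        · rw [hB2 y hyB, hB2 x hxB] at hy; omega
    have hd2 : Disjoint (Ahi ∪ Afree) (Y.image (Gam G lev')) := by
      rw [disjoint_left]
      intro X hX hX'
      obtain ⟨y, hy, rfl⟩ := mem_image.1 hX'
      have hy1 : lev' y = i := by rw [hB2 y (hY y hy).2, (hY y hy).1]
      rcases mem_union.1 hX with hX | hX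
      · simp only [Ahi, mem_filter, mem_image, mem_univ, true_and] at hX
        obtain ⟨x, hx, he⟩ := hX
        rw [(hhi x hx).1] at he
        have := lev_eq_of_Gam_eq he
        have := (hhi x hx).2
        omega
      · simp only [Afree, Alo, mem_filter, mem_image, mem_univ, true_and] at hX
        obtain ⟨⟨x, hx, he⟩, hdis⟩ := hX
        have hdis' := hdis
        rw [← he] at hdis
        have hxB : x ∉ B := disjoint_left.1 hdis (self_mem_Gam G lev x)
        rw [hfree x hx hdis] at he
        have := lev_eq_of_Gam_eq he
        have := hB2 x hxB
        omega
    rw [← hYinj, ← card_union_of_disjoint hd1, ← card_union_of_disjoint hd2]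
    apply card_le_card
    intro X hX
    simp only [mem_union] at hX
    rcases hX with (hX | hX) | hX
    · simp only [Ahi, mem_filter, mem_image, mem_univ, true_and] at hX ⊢
      obtain ⟨x, hx, rfl⟩ := hX
      exact ⟨x, (hhi x hx).1.symm⟩
    · simp only [Afree, Alo, mem_filter, mem_image, mem_univ, true_and] at hX ⊢
      obtain ⟨⟨x, hx, rfl⟩, hdis⟩ := hX
      exact ⟨x, (hfree x hx hdis).symm⟩
    · obtain ⟨y, _, rfl⟩ := mem_image.1 hX
      exact mem_image_of_mem _ (mem_univ _)
  have : (3 * i + 2) * B.card = 2 * ((i + 1) * B.card) + i * B.card := by ring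
  omega

theorem levels_exists (G : SimpleGraph V) : ∃ lev, LevelsGood G lev := by
  obtain ⟨lev, hmin⟩ := levels_min G
  refine ⟨lev, ?_, levels_tough G lev hmin⟩
  have h1 : ∀ i, 2 ^ i * (univ.filter fun x => i ≤ lev x).card ≤ Fintype.card V := by
    intro i
    induction i with
    | zero => simpa using card_le_univ _
    | succ i ih =>
      have := levels_decay G lev hmin i
      calc _ = 2 ^ i * (2 * (univ.filter fun x => i + 1 ≤ lev x).card) := by ring
        _ ≤ _ := Nat.mul_le_mul_left _ this
        _ ≤ _ := ih
  intro x
  have h2 : 0 < (univ.filter fun y => lev x ≤ lev y).card :=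
    card_pos.2 ⟨x, by simp⟩
  calc 2 ^ lev x = 2 ^ lev x * 1 := by ring
    _ ≤ _ := Nat.mul_le_mul_left _ h2
    _ ≤ _ := h1 _

end
end VFL

namespace VFL
set_option linter.all false
set_option autoImplicit false
open scoped Classical
open Finset
noncomputable section
universe u
variable {V : Type u} [Fintype V] [DecidableEq V]

/-! ### Section 3: low degree Steiner forests -/

/-- degree, computed classically -/
def dg (T : SimpleGraph V) (v : V) : ℕ := (univ.filter fun w => T.Adj v w).card

theorem dg_mono {T T' : SimpleGraph V} (h : T ≤ T') (v : V) : dg T v ≤ dg T' v :=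
  card_le_card fun w hw => by
    simp only [mem_filter, mem_univ, true_and] at hw ⊢; exact h hw

theorem dg_sup_le (T T' : SimpleGraph V) (v : V) : dg (T ⊔ T') v ≤ dg T v + dg T' v := by
  unfold dg
  refine le_trans (card_le_card ?_) (card_union_le _ _)
  intro w hw
  simpa using hw

theorem dg_lt_card (T : SimpleGraph V) (v : V) : dg T v < Fintype.card V := by
  unfold dg
  apply card_lt_univ_of_notMem (x := v)
  simp

/-- delete an edge -/
def dele (T : SimpleGraph V) (a b : V) : SimpleGraph V where
  Adj x y := T.Adj x y ∧ ¬ (x = a ∧ y = b) ∧ ¬ (x = b ∧ y = a)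
  symm := ⟨fun x y h => ⟨h.1.symm, fun h' => h.2.2 ⟨h'.2, h'.1⟩, fun h' => h.2.1 ⟨h'.2, h'.1⟩⟩⟩
  loopless := ⟨fun x h => T.loopless.irrefl x h.1⟩

theorem dele_le (T : SimpleGraph V) (a b : V) : dele T a b ≤ T := fun _ _ h => h.1

theorem dele_comm (T : SimpleGraph V) (a b : V) : dele T a b = dele T b a := by
  ext x y; simp only [dele]; tauto

theorem dg_dele {T : SimpleGraph V} {a b : V} (h : T.Adj a b) :
    dg (dele T a b) a + 1 ≤ dg T a := by
  unfold dg
  apply card_lt_card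
  rw [ssubset_iff_of_subset]
  · exact ⟨b, by simpa using h, by simp [dele]⟩
  · intro w hw
    simp only [mem_filter, mem_univ, true_and] at hw ⊢; exact hw.1

theorem reach_split {T : SimpleGraph V} {a b x y : V} (h : T.Reachable x y) :
    (dele T a b).Reachable x y ∨ ((dele T a b).Reachable x a ∧ (dele T a b).Reachable b y) ∨
      ((dele T a b).Reachable x b ∧ (dele T a b).Reachable a y) := by
  obtain ⟨w⟩ := h
  induction w with
  | nil => exact Or.inl (SimpleGraph.Reachable.refl _)
  | @cons x x1 y hadj _ ih =>
    by_cases h1 : x = a ∧ x1 = b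
    · obtain ⟨rfl, rfl⟩ := h1
      rcases ih with ih | ⟨_, ih⟩ | ⟨_, ih⟩
      · exact Or.inr (Or.inl ⟨SimpleGraph.Reachable.refl _, ih⟩)
      · exact Or.inr (Or.inl ⟨SimpleGraph.Reachable.refl _, ih⟩)
      · exact Or.inl ih
    · by_cases h2 : x = b ∧ x1 = a
      · obtain ⟨rfl, rfl⟩ := h2
        rcases ih with ih | ⟨_, ih⟩ | ⟨_, ih⟩
        · exact Or.inr (Or.inr ⟨SimpleGraph.Reachable.refl _, ih⟩)
        · exact Or.inl ih
        · exact Or.inr (Or.inr ⟨SimpleGraph.Reachable.refl _, ih⟩)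
      · have hx : (dele T a b).Reachable x x1 :=
          SimpleGraph.Adj.reachable (G := dele T a b) ⟨hadj, h1, h2⟩
        rcases ih with ih | ⟨i1, i2⟩ | ⟨i1, i2⟩
        · exact Or.inl (hx.trans ih)
        · exact Or.inr (Or.inl ⟨hx.trans i1, i2⟩)
        · exact Or.inr (Or.inr ⟨hx.trans i1, i2⟩)

/-- A path graph between two connected vertices. -/
theorem path_graph (A : SimpleGraph V) {x y : V} (h : A.Reachable x y) :
    ∃ P : SimpleGraph V, P ≤ A ∧ P.Reachable x y ∧ (∀ v, dg P v ≤ 2) ∧ dg P x ≤ 1 ∧ dg P y ≤ 1 ∧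
      ∀ a b, P.Adj a b → ¬ (dele P a b).Reachable x y := by
  -- minimal number of edges
  obtain ⟨P, ⟨hPA, hPr⟩, hmin⟩ : ∃ P : SimpleGraph V, (P ≤ A ∧ P.Reachable x y) ∧
      ∀ P' : SimpleGraph V, (P' ≤ A ∧ P'.Reachable x y) → ∑ v, dg P v ≤ ∑ v, dg P' v := by
    have : Nonempty {P : SimpleGraph V // P ≤ A ∧ P.Reachable x y} := ⟨⟨A, le_rfl, h⟩⟩
    refine ⟨_, (Function.argmin (fun P : {P : SimpleGraph V // P ≤ A ∧ P.Reachable x y} =>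
      ∑ v, dg P.1 v)).2, fun P' hP' => Function.argmin_le (fun P :
        {P : SimpleGraph V // P ≤ A ∧ P.Reachable x y} => ∑ v, dg P.1 v) ⟨P', hP'⟩⟩
  have hcut : ∀ a b, P.Adj a b → ¬ (dele P a b).Reachable x y := by
    intro a b hab hr
    have h1 := hmin (dele P a b) ⟨(dele_le P a b).trans hPA, hr⟩
    have h2 : ∑ v, dg (dele P a b) v < ∑ v, dg P v :=
      sum_lt_sum (fun v _ => dg_mono (dele_le P a b) v) ⟨a, mem_univ _, dg_dele hab⟩
    omega
  -- for each edge one end is still attached to x, another to y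
  have hsp : ∀ a b, P.Adj a b → ((dele P a b).Reachable x a ∧ (dele P a b).Reachable b y) ∨
      ((dele P a b).Reachable x b ∧ (dele P a b).Reachable a y) := fun a b hab =>
    (reach_split hPr).resolve_left (hcut a b hab)
  -- generic uniqueness : edges from v in direction toward y
  have huniq : ∀ v b b', P.Adj v b → P.Adj v b' → b ≠ b' →
      (dele P v b).Reachable x v → (dele P v b').Reachable x v → False := by
    intro v b b' hb hb' hne h1 h2
    have h3 : (dele P v b).Reachable b y := by
      rcases hsp v b hb with h | h
      · exact h.2
      · exact absurd (h1.trans h.2) (hcut v b hb)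
    have h3' : (dele P v b').Reachable b' y := by
      rcases hsp v b' hb' with h | h
      · exact h.2
      · exact absurd (h2.trans h.2) (hcut v b' hb')
    -- b' reaches y without edge vb'. either uses vb or not
    have : (dele (dele P v b') v b).Reachable b' y ∨
      (((dele (dele P v b') v b).Reachable b' v ∧ (dele (dele P v b') v b).Reachable b y) ∨
      ((dele (dele P v b') v b).Reachable b' b ∧ (dele (dele P v b') v b).Reachable v y)) :=
      reach_split h3'
    have hle : dele (dele P v b') v b ≤ dele P v b := by
      intro p q hpq; exact ⟨hpq.1.1, hpq.2⟩
    have hle' : dele (dele P v b') v b ≤ dele P v b' := dele_le _ _ _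
    rcases this with h | h | h
    · have e : (dele P v b).Adj v b' := ⟨hb', fun h => hne h.2.symm, fun h => hb.ne h.1⟩
      exact hcut v b hb ((h1.trans e.reachable).trans (h.mono hle))
    · have e : (dele P v b').Adj v b := ⟨hb, fun h => hne h.2, fun h => hb'.ne h.1⟩
      exact hcut v b' hb' ((h2.trans e.reachable).trans (h.2.mono hle'))
    · exact hcut v b hb (h1.trans (h.2.mono hle))
  have huniq' : ∀ v b b', P.Adj v b → P.Adj v b' → b ≠ b' →
      (dele P v b).Reachable v y → (dele P v b').Reachable v y → False := by
    intro v b b' hb hb' hne h1 h2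
    have h3 : (dele P v b).Reachable b x := by
      rcases hsp v b hb with h | h
      · exact absurd (h.1.trans h1) (hcut v b hb)
      · exact h.1.symm
    have h3' : (dele P v b').Reachable b' x := by
      rcases hsp v b' hb' with h | h
      · exact absurd (h.1.trans h2) (hcut v b' hb')
      · exact h.1.symm
    have : (dele (dele P v b') v b).Reachable b' x ∨
      (((dele (dele P v b') v b).Reachable b' v ∧ (dele (dele P v b') v b).Reachable b x) ∨
      ((dele (dele P v b') v b).Reachable b' b ∧ (dele (dele P v b') v b).Reachable v x)) :=
      reach_split h3'
    have hle : dele (dele P v b') v b ≤ dele P v b := by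
      intro p q hpq; exact ⟨hpq.1.1, hpq.2⟩
    have hle' : dele (dele P v b') v b ≤ dele P v b' := dele_le _ _ _
    rcases this with h | h | h
    · have e : (dele P v b).Adj v b' := ⟨hb', fun h => hne h.2.symm, fun h => hb.ne h.1⟩
      exact hcut v b hb (((h.mono hle).symm.trans e.symm.reachable).trans h1)
    · have e : (dele P v b').Adj v b := ⟨hb, fun h => hne h.2, fun h => hb'.ne h.1⟩
      exact hcut v b' hb' (((h.2.mono hle').symm.trans e.symm.reachable).trans h2)
    · exact hcut v b hb ((h.2.mono hle).symm.trans h1)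
  have hA : ∀ v, (univ.filter fun b => P.Adj v b ∧ (dele P v b).Reachable x v).card ≤ 1 := by
    intro v
    rw [card_le_one]
    intro b hb b' hb'
    simp only [mem_filter, mem_univ, true_and] at hb hb'
    by_contra hne
    exact huniq v b b' hb.1 hb'.1 hne hb.2 hb'.2
  have hB : ∀ v, (univ.filter fun b => P.Adj v b ∧ (dele P v b).Reachable v y).card ≤ 1 := by
    intro v
    rw [card_le_one]
    intro b hb b' hb'
    simp only [mem_filter, mem_univ, true_and] at hb hb'
    by_contra hne
    exact huniq' v b b' hb.1 hb'.1 hne hb.2 hb'.2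
  refine ⟨P, hPA, hPr, ?_, ?_, ?_, hcut⟩
  · intro v
    have : dg P v ≤ (univ.filter fun b => P.Adj v b ∧ (dele P v b).Reachable x v).card +
        (univ.filter fun b => P.Adj v b ∧ (dele P v b).Reachable v y).card := by
      refine le_trans (card_le_card ?_) (card_union_le _ _)
      intro b hb
      simp only [mem_filter, mem_univ, true_and, mem_union] at hb ⊢
      rcases hsp v b hb with h | h
      · exact Or.inl ⟨hb, h.1⟩
      · exact Or.inr ⟨hb, h.2⟩
    have := hA v
    have := hB v
    omega
  · refine le_trans (card_le_card ?_) (hA x)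
    intro b hb
    simp only [mem_filter, mem_univ, true_and] at hb ⊢
    exact ⟨hb, SimpleGraph.Reachable.refl _⟩
  · refine le_trans (card_le_card ?_) (hB y)
    intro b hb
    simp only [mem_filter, mem_univ, true_and] at hb ⊢
    exact ⟨hb, SimpleGraph.Reachable.refl _⟩

/-- Steiner condition -/
def Conn (H T : SimpleGraph V) (U : Finset V) : Prop :=
  T ≤ H ∧ ∀ u ∈ U, ∀ u' ∈ U, H.Reachable u u' → T.Reachable u u'

structure MinT (H T : SimpleGraph V) (U : Finset V) : Prop where
  conn : Conn H T U
  min : ∀ T', Conn H T' U → ∑ v, (Fintype.card V + 4) ^ dg T v ≤ ∑ v, (Fintype.card V + 4) ^ dg T' v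

theorem exists_minT (H : SimpleGraph V) (U : Finset V) : ∃ T, MinT H T U := by
  have : Nonempty {T : SimpleGraph V // Conn H T U} := ⟨⟨H, le_rfl, fun _ _ _ _ h => h⟩⟩
  exact ⟨_, (Function.argmin (fun T : {T : SimpleGraph V // Conn H T U} =>
      ∑ v, (Fintype.card V + 4) ^ dg T.1 v)).2, fun P' hP' => Function.argmin_le (fun T :
        {T : SimpleGraph V // Conn H T U} => ∑ v, (Fintype.card V + 4) ^ dg T.1 v) ⟨P', hP'⟩⟩

namespace MinT
variable {H T : SimpleGraph V} {U : Finset V}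

theorem not_conn (hT : MinT H T U) {a b : V} (hab : T.Adj a b) : ¬ Conn H (dele T a b) U := by
  intro hc
  have h1 := hT.min _ hc
  have h2 : ∑ v, (Fintype.card V + 4) ^ dg (dele T a b) v < ∑ v, (Fintype.card V + 4) ^ dg T v :=
    sum_lt_sum (fun v _ => Nat.pow_le_pow_right (by omega) (dg_mono (dele_le T a b) v))
      ⟨a, mem_univ _, Nat.pow_lt_pow_right (by omega) (dg_dele hab)⟩
  omega

theorem bridge (hT : MinT H T U) {a b : V} (hab : T.Adj a b) : ¬ (dele T a b).Reachable a b := by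
  intro hr
  refine hT.not_conn hab ⟨(dele_le T a b).trans hT.conn.1, fun u hu u' hu' h => ?_⟩
  refine reach_of_adj ?_ (hT.conn.2 u hu u' hu' h)
  intro p q hpq
  by_cases h1 : p = a ∧ q = b
  · rw [h1.1, h1.2]; exact hr
  by_cases h2 : p = b ∧ q = a
  · rw [h2.1, h2.2]; exact hr.symm
  exact SimpleGraph.Adj.reachable (G := dele T a b) ⟨hpq, h1, h2⟩

theorem essential (hT : MinT H T U) {a b : V} (hab : T.Adj a b) :
    ∃ u ∈ U, (dele T a b).Reachable a u := by
  have := hT.not_conn hab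
  simp only [Conn, not_and, not_forall] at this
  obtain ⟨u, hu, u', hu', h, hn⟩ := this ((dele_le T a b).trans hT.conn.1)
  rcases (reach_split (hT.conn.2 u hu u' hu' h)).resolve_left hn with h | h
  · exact ⟨u, hu, h.1.symm⟩
  · exact ⟨u', hu', h.2⟩

end MinT
end
end VFL

namespace VFL
set_option linter.all false
set_option autoImplicit false
open scoped Classical
open Finset
noncomputable section
universe u
variable {V : Type u} [Fintype V] [DecidableEq V]

/-- root of a component -/
def rt (T : SimpleGraph V) (x : V) : V := (T.connectedComponentMk x).out

theorem rt_reach (T : SimpleGraph V) (x : V) : T.Reachable x (rt T x) := by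
  have : T.connectedComponentMk (rt T x) = T.connectedComponentMk x := Quot.out_eq _
  exact (SimpleGraph.ConnectedComponent.exact this).symm

theorem rt_eq {T : SimpleGraph V} {x y : V} (h : T.Reachable x y) : rt T x = rt T y := by
  unfold rt; rw [SimpleGraph.ConnectedComponent.sound h]

/-- depth -/
def dep (T : SimpleGraph V) (x : V) : ℕ := T.dist x (rt T x)

theorem dep_step {T : SimpleGraph V} {x : V} (h : x ≠ rt T x) : ∃ x', T.Adj x x' ∧ dep T x' < dep T x := by
  obtain ⟨w, hw⟩ := (rt_reach T x).exists_walk_length_eq_dist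
  unfold dep
  generalize hz : rt T x = z at *
  cases w with
  | nil => exact absurd rfl h
  | @cons _ x' _ hadj p =>
    refine ⟨x', hadj, ?_⟩
    rw [← rt_eq hadj.reachable, hz, ← hw, SimpleGraph.Walk.length_cons]
    exact Nat.lt_succ_of_le (SimpleGraph.dist_le p)

/-- monotone edges below depth k -/
def low (T : SimpleGraph V) (k : ℕ) : SimpleGraph V where
  Adj x y := T.Adj x y ∧ dep T x ≤ k ∧ dep T y ≤ k ∧ dep T x ≠ dep T y
  symm := ⟨fun x y h => ⟨h.1.symm, h.2.2.1, h.2.1, h.2.2.2.symm⟩⟩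
  loopless := ⟨fun x h => T.loopless.irrefl x h.1⟩

theorem low_reach (T : SimpleGraph V) : ∀ (k : ℕ) (x : V), dep T x ≤ k →
    (low T k).Reachable x (rt T x) := by
  intro k x
  induction h : dep T x using Nat.strong_induction_on generalizing x with
  | _ m ih =>
    intro hk
    by_cases hx : x = rt T x
    · rw [← hx]
    · obtain ⟨x', hadj, hlt⟩ := dep_step hx
      have h1 := ih (dep T x') (h ▸ hlt) x' rfl (by omega)
      rw [← rt_eq hadj.reachable] at h1
      have : (low T k).Adj x x' := ⟨hadj, by omega, by omega, by omega⟩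
      exact this.reachable.trans h1

namespace MinT
variable {H T : SimpleGraph V} {U : Finset V}

theorem dep_ne (hT : MinT H T U) {v p : V} (h : T.Adj v p) : dep T v ≠ dep T p := by
  intro he
  apply hT.bridge h
  have hle : low T (dep T v) ≤ dele T v p := by
    intro a b hab
    refine ⟨hab.1, ?_, ?_⟩
    · rintro ⟨rfl, rfl⟩; exact hab.2.2.2 he
    · rintro ⟨rfl, rfl⟩; exact hab.2.2.2 he.symm
  have h1 := (low_reach T (dep T v) v le_rfl).mono hle
  have h2 := (low_reach T (dep T v) p he.symm.le).mono hle
  rw [← rt_eq h.reachable] at h2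
  exact h1.trans h2.symm

theorem parent_unique (hT : MinT H T U) {v p p' : V} (h : T.Adj v p) (h' : T.Adj v p')
    (hp : dep T p < dep T v) (hp' : dep T p' < dep T v) : p = p' := by
  by_contra hne
  apply hT.bridge h
  have hle : low T (dep T v - 1) ≤ dele T v p := by
    intro a b hab
    have h1 := hab.2.1
    have h2 := hab.2.2.1
    refine ⟨hab.1, ?_, ?_⟩
    · rintro ⟨rfl, rfl⟩; omega
    · rintro ⟨rfl, rfl⟩; omega
  have h1 := (low_reach T (dep T v - 1) p (by omega)).mono hle
  have h2 := (low_reach T (dep T v - 1) p' (by omega)).mono hle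
  rw [← rt_eq h.reachable] at h1
  rw [← rt_eq h'.reachable] at h2
  have e : (dele T v p).Adj v p' := ⟨h', fun h => hne h.2.symm, fun h'' => h.ne h''.1⟩
  exact e.reachable.trans (h2.trans h1.symm)

theorem child_U (hT : MinT H T U) {v w : V} (h : T.Adj v w) (hd : dep T v < dep T w) :
    ∃ u ∈ U, (del T (univ.filter fun x => dep T x ≤ dep T v)).Reachable w u := by
  obtain ⟨u, hu, hr⟩ := hT.essential h.symm
  refine ⟨u, hu, ?_⟩
  have hle : low T (dep T v) ≤ dele T w v := by
    intro a b hab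
    have h1 := hab.2.1
    have h2 := hab.2.2.1
    refine ⟨hab.1, ?_, ?_⟩
    · rintro ⟨rfl, rfl⟩; omega
    · rintro ⟨rfl, rfl⟩; omega
  have key : ∀ z, (dele T w v).Reachable w z → dep T v < dep T z := by
    intro z hz
    by_contra hlt
    apply hT.bridge h.symm
    have h1 := (low_reach T (dep T v) v le_rfl).mono hle
    have h2 := (low_reach T (dep T v) z (by omega)).mono hle
    rw [← rt_eq (hz.mono (dele_le T w v)), ← rt_eq h.reachable] at h2
    exact hz.trans (h2.trans h1.symm)
  refine reach_restrict ?_ hr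
  intro a b ha hab
  refine ⟨hab.1, ?_, ?_⟩
  · have := key a ha
    simp; omega
  · have := key b (ha.trans hab.reachable)
    simp; omega

theorem sep (hT : MinT H T U) {v w w' : V} (h : T.Adj v w) (h' : T.Adj v w') (hne : w ≠ w') :
    ¬ (del T {v}).Reachable w w' := by
  intro hr
  apply hT.bridge h
  have hle : del T {v} ≤ dele T v w := by
    intro a b hab
    refine ⟨hab.1, ?_, ?_⟩
    · rintro ⟨rfl, rfl⟩; exact hab.2.1 (by simp)
    · rintro ⟨rfl, rfl⟩; exact hab.2.2 (by simp)
  have e : (dele T v w).Adj v w' := ⟨h', fun h => hne h.2.symm, fun h'' => h.ne h''.1⟩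
  exact e.reachable.trans (hr.mono hle).symm

theorem count (hT : MinT H T U) (S : Finset V) :
    ∃ Y : Finset V, Y ⊆ U ∧ Disjoint Y S ∧
      (∀ y ∈ Y, ∀ y' ∈ Y, y ≠ y' → ¬ (del T S).Reachable y y') ∧
      (U.image H.connectedComponentMk).card + ∑ v ∈ S, dg T v ≤ Y.card + 2 * S.card := by
  induction S using Finset.induction_on_max_value (dep T) with
  | empty =>
    have hex : ∀ C ∈ U.image H.connectedComponentMk, ∃ u, u ∈ U ∧ H.connectedComponentMk u = C := by
      intro C hC; simpa using hC
    rcases isEmpty_or_nonempty V with hV | hV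
    · refine ⟨∅, by simp, by simp, by simp, ?_⟩
      have : U = ∅ := by ext x; exact hV.elim x
      simp [this]
    choose! g hg using hex
    have hinj : Set.InjOn g (U.image H.connectedComponentMk : Finset _) := by
      intro C hC C' hC' he
      rw [← (hg C hC).2, ← (hg C' hC').2, he]
    refine ⟨(U.image H.connectedComponentMk).image g, ?_, by simp, ?_, ?_⟩
    · intro y hy
      obtain ⟨C, hC, rfl⟩ := mem_image.1 hy
      exact (hg C hC).1
    · intro y hy y' hy' hne hr
      obtain ⟨C, hC, rfl⟩ := mem_image.1 hy
      obtain ⟨C', hC', rfl⟩ := mem_image.1 hy'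
      apply hne
      have : H.connectedComponentMk (g C) = H.connectedComponentMk (g C') :=
        SimpleGraph.ConnectedComponent.sound (hr.mono ((del_le T _).trans hT.conn.1))
      rw [(hg C hC).2, (hg C' hC').2] at this
      rw [this]
    · rw [card_image_of_injOn hinj]; simp
  | insert v S hv hmax ih =>
    obtain ⟨Y, hYU, hYS, hYY, hcard⟩ := ih
    set ch := univ.filter fun w => T.Adj v w ∧ dep T v < dep T w with hch
    have hchcard : dg T v ≤ ch.card + 1 := by
      have : (univ.filter fun w => T.Adj v w ∧ dep T w < dep T v).card ≤ 1 := by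
        rw [card_le_one]
        intro b hb b' hb'
        simp only [mem_filter, mem_univ, true_and] at hb hb'
        exact hT.parent_unique hb.1 hb'.1 hb.2 hb'.2
      have h2 : dg T v ≤ ch.card + (univ.filter fun w => T.Adj v w ∧ dep T w < dep T v).card := by
        refine le_trans (card_le_card ?_) (card_union_le _ _)
        intro b hb
        simp only [hch, mem_filter, mem_univ, true_and, mem_union] at hb ⊢
        have := hT.dep_ne hb
        rcases lt_or_gt_of_ne this with h | h
        · exact Or.inl ⟨hb, h⟩
        · exact Or.inr ⟨hb, h⟩
      omega
    have hex : ∀ w, w ∈ ch → ∃ u, u ∈ U ∧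
        (del T (univ.filter fun x => dep T x ≤ dep T v)).Reachable w u := by
      intro w hw
      simp only [hch, mem_filter, mem_univ, true_and] at hw
      obtain ⟨u, hu⟩ := hT.child_U hw.1 hw.2
      exact ⟨u, hu⟩
    have : Nonempty V := ⟨v⟩
    choose! g hg using hex
    have hadj : ∀ w ∈ ch, T.Adj v w := fun w hw => by
      simp only [hch, mem_filter, mem_univ, true_and] at hw; exact hw.1
    have hle1 : del T (univ.filter fun x => dep T x ≤ dep T v) ≤ del T {v} := by
      intro a b hab
      refine ⟨hab.1, ?_, ?_⟩
      · have := hab.2.1; simp at this ⊢; rintro rfl; omega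
      · have := hab.2.2; simp at this ⊢; rintro rfl; omega
    have hle2 : del T (univ.filter fun x => dep T x ≤ dep T v) ≤ del T S := by
      intro a b hab
      refine ⟨hab.1, ?_, ?_⟩
      · have := hab.2.1; simp at this; intro haS; have := hmax a haS; omega
      · have := hab.2.2; simp at this; intro haS; have := hmax b haS; omega
    have hgdep : ∀ w ∈ ch, dep T v < dep T (g w) := by
      intro w hw
      have := del_reach_notMem (hg w hw).2 (by
        simp only [hch, mem_filter, mem_univ, true_and] at hw; simp; omega)
      simpa using this
    have hSv : ∀ w ∈ ch, w ∉ S := fun w hw hwS => by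
      have h1 := hmax w hwS
      simp only [hch, mem_filter, mem_univ, true_and] at hw; omega
    have hgv : ∀ w ∈ ch, (del T S).Reachable v (g w) := by
      intro w hw
      have e : (del T S).Adj v w := ⟨hadj w hw, hv, hSv w hw⟩
      exact e.reachable.trans ((hg w hw).2.mono hle2)
    have hsep : ∀ w ∈ ch, ∀ w' ∈ ch, w ≠ w' → ¬ (del T {v}).Reachable (g w) (g w') := by
      intro w hw w' hw' hne hr
      apply hT.sep (hadj w hw) (hadj w' hw') hne
      exact (((hg w hw).2.mono hle1).trans hr).trans ((hg w' hw').2.mono hle1).symm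
    have hinj : Set.InjOn g ch := by
      intro w hw w' hw' he
      by_contra hne
      exact hsep w hw w' hw' hne (he ▸ SimpleGraph.Reachable.refl _)
    set Y1 := Y.filter fun y => ¬ (del T S).Reachable v y with hY1
    have hY1c : Y.card ≤ Y1.card + 1 := by
      have h1 : (Y.filter fun y => (del T S).Reachable v y).card ≤ 1 := by
        rw [card_le_one]
        intro a ha b hb
        simp only [mem_filter] at ha hb
        by_contra hne
        exact hYY a ha.1 b hb.1 hne (ha.2.symm.trans hb.2)
      have h2 := card_filter_add_card_filter_not (s := Y) (fun y => (del T S).Reachable v y)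
      simp only [← hY1] at h2
      omega
    have hdis : Disjoint Y1 (ch.image g) := by
      rw [disjoint_left]
      intro y hy hy'
      obtain ⟨w, hw, rfl⟩ := mem_image.1 hy'
      exact (mem_filter.1 hy).2 (hgv w hw)
    have hleS : del T (insert v S) ≤ del T S := by
      intro a b hab
      refine ⟨hab.1, fun h => hab.2.1 (mem_insert_of_mem h), fun h => hab.2.2 (mem_insert_of_mem h)⟩
    have hleV : del T (insert v S) ≤ del T {v} := by
      intro a b hab
      refine ⟨hab.1, fun h => hab.2.1 ?_, fun h => hab.2.2 ?_⟩
      · rw [mem_singleton.1 h]; exact mem_insert_self _ _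
      · rw [mem_singleton.1 h]; exact mem_insert_self _ _
    refine ⟨Y1 ∪ ch.image g, ?_, ?_, ?_, ?_⟩
    · intro y hy
      rcases mem_union.1 hy with hy | hy
      · exact hYU (mem_filter.1 hy).1
      · obtain ⟨w, hw, rfl⟩ := mem_image.1 hy
        exact (hg w hw).1
    · rw [disjoint_left]
      intro y hy hyS
      rcases mem_union.1 hy with hy | hy
      · rcases mem_insert.1 hyS with rfl | hyS
        · exact (mem_filter.1 hy).2 (SimpleGraph.Reachable.refl _)
        · exact disjoint_left.1 hYS (mem_filter.1 hy).1 hyS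
      · obtain ⟨w, hw, rfl⟩ := mem_image.1 hy
        have h1 := hgdep w hw
        rcases mem_insert.1 hyS with hyS | hyS
        · rw [hyS] at h1; omega
        · have := hmax _ hyS; omega
    · intro y hy y' hy' hne hr
      rcases mem_union.1 hy with hy | hy <;> rcases mem_union.1 hy' with hy' | hy'
      · exact hYY y (mem_filter.1 hy).1 y' (mem_filter.1 hy').1 hne (hr.mono hleS)
      · obtain ⟨w, hw, rfl⟩ := mem_image.1 hy'
        exact (mem_filter.1 hy).2 ((hgv w hw).trans (hr.mono hleS).symm)
      · obtain ⟨w, hw, rfl⟩ := mem_image.1 hy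
        exact (mem_filter.1 hy').2 ((hgv w hw).trans (hr.mono hleS))
      · obtain ⟨w, hw, rfl⟩ := mem_image.1 hy
        obtain ⟨w', hw', rfl⟩ := mem_image.1 hy'
        exact hsep w hw w' hw' (fun h => hne (by rw [h])) (hr.mono hleV)
    · rw [card_union_of_disjoint hdis, card_image_of_injOn hinj, sum_insert hv,
        card_insert_of_notMem hv]
      omega

/-- the vertex is in the support of the forest -/
def touched (T : SimpleGraph V) (U : Finset V) (v : V) : Prop := v ∈ U ∨ ∃ w, T.Adj v w

theorem touched_U (hT : MinT H T U) {v : V} (h : touched T U v) : ∃ u ∈ U, T.Reachable v u := by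
  rcases h with h | ⟨w, hw⟩
  · exact ⟨v, h, SimpleGraph.Reachable.refl _⟩
  · obtain ⟨u, hu, hr⟩ := hT.essential hw
    exact ⟨u, hu, hr.mono (dele_le _ _ _)⟩

/-- edges avoiding S whose endpoints are x, y or untouched -/
def freeG (H T : SimpleGraph V) (U S : Finset V) (x y : V) : SimpleGraph V where
  Adj a b := H.Adj a b ∧ (a ∉ S ∧ b ∉ S) ∧ (a = x ∨ a = y ∨ ¬ touched T U a) ∧
    (b = x ∨ b = y ∨ ¬ touched T U b)
  symm := ⟨fun a b h => ⟨h.1.symm, ⟨h.2.1.2, h.2.1.1⟩, h.2.2.2, h.2.2.1⟩⟩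
  loopless := ⟨fun x h => H.loopless.irrefl x h.1⟩

theorem exch_core (hT : MinT H T U) {j : ℕ} (hj : 3 ≤ j) {x y : V}
    (hx : touched T U x) (hy : touched T U y) (hxj : dg T x + 1 < j) (hyj : dg T y + 1 < j)
    (hr : (freeG H T U (univ.filter fun v => j ≤ dg T v + 1) x y).Reachable x y) :
    (del T (univ.filter fun v => j ≤ dg T v)).Reachable x y := by
  by_contra hn
  have hxy : x ≠ y := by rintro rfl; exact hn (SimpleGraph.Reachable.refl _)
  have hTr : T.Reachable x y := by
    obtain ⟨u, hu, h1⟩ := hT.touched_U hx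
    obtain ⟨u', hu', h2⟩ := hT.touched_U hy
    have h3 : H.Reachable x y := hr.mono (fun a b (h : (freeG H T U _ x y).Adj a b) => h.1)
    have h4 : H.Reachable u u' :=
      ((h1.mono hT.conn.1).symm.trans h3).trans (h2.mono hT.conn.1)
    exact (h1.trans (hT.conn.2 u hu u' hu' h4)).trans h2.symm
  -- find the edge
  obtain ⟨w, w', hww, hwS, hcut⟩ : ∃ w w', T.Adj w w' ∧ j ≤ dg T w ∧
      ¬ (dele T w w').Reachable x y := by
    obtain ⟨P, hPT, hPr, -, -, -, hPc⟩ := path_graph T hTr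
    obtain ⟨w, w', hP, hwj⟩ : ∃ w w', P.Adj w w' ∧ j ≤ dg T w := by
      by_contra hno
      push Not at hno
      apply hn
      refine hPr.mono ?_
      intro a b hab
      refine ⟨hPT hab, ?_, ?_⟩
      · have := hno a b hab; simpa using this
      · have := hno b a hab.symm; simpa using this
    have hle : dele P w w' ≤ dele T w w' := fun p q h => ⟨hPT h.1, h.2⟩
    refine ⟨w, w', hPT hP, hwj, fun h0 => hT.bridge (hPT hP) ?_⟩
    rcases (reach_split hPr).resolve_left (hPc w w' hP) with h | h
    · exact (h.1.mono hle).symm.trans (h0.trans (h.2.mono hle).symm)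
    · exact (h.2.mono hle).trans (h0.symm.trans (h.1.mono hle))
  obtain ⟨P, hPA, hPr, hP2, hPx, hPy, -⟩ := path_graph _ hr
  set T' := dele T w w' ⊔ P with hT'
  have hconn : Conn H T' U := by
    refine ⟨sup_le ((dele_le _ _ _).trans hT.conn.1) (hPA.trans fun a b h => h.1), ?_⟩
    intro u hu u' hu' h
    refine reach_of_adj ?_ (hT.conn.2 u hu u' hu' h)
    have hxyT : T'.Reachable x y := hPr.mono le_sup_right
    have hwwT : T'.Reachable w w' := by
      have hle : dele T w w' ≤ T' := le_sup_left
      rcases (reach_split hTr).resolve_left hcut with h | h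
      · exact (h.1.mono hle).symm.trans (hxyT.trans (h.2.mono hle).symm)
      · exact (h.2.mono hle).trans (hxyT.symm.trans (h.1.mono hle))
    intro p q hpq
    by_cases h1 : p = w ∧ q = w'
    · rw [h1.1, h1.2]; exact hwwT
    by_cases h2 : p = w' ∧ q = w
    · rw [h2.1, h2.2]; exact hwwT.symm
    exact (SimpleGraph.Adj.reachable (G := dele T w w') ⟨hpq, h1, h2⟩).mono le_sup_left
  have hmin := hT.min T' hconn
  set W := Fintype.card V + 4 with hW
  have hW1 : 1 ≤ W := by omega
  have hP0 : ∀ v, v ≠ x → v ≠ y → touched T U v → dg P v = 0 := by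
    intro v h1 h2 h3
    unfold dg
    rw [card_eq_zero, filter_eq_empty_iff]
    intro b _ hb
    rcases (hPA hb).2.2.1 with h | h | h
    · exact h1 h
    · exact h2 h
    · exact h h3
  have hnot : ∀ v, ¬ touched T U v → dg T v = 0 := by
    intro v h1
    unfold dg
    rw [card_eq_zero, filter_eq_empty_iff]
    intro b _ hb
    exact h1 (Or.inr ⟨b, hb⟩)
  have hdT' : ∀ v, dg T' v ≤ dg T v + dg P v := fun v =>
    (dg_sup_le _ _ v).trans (Nat.add_le_add_right (dg_mono (dele_le _ _ _) v) _)
  have hterm : ∀ v, v ≠ w → W ^ dg T' v ≤ W ^ dg T v + W ^ (j - 1) := by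
    intro v hv
    have hd := hdT' v
    by_cases hvx : v = x
    · rw [hvx] at hd ⊢
      exact (Nat.pow_le_pow_right hW1 (by omega)).trans (Nat.le_add_left _ _)
    by_cases hvy : v = y
    · rw [hvy] at hd ⊢
      exact (Nat.pow_le_pow_right hW1 (by omega)).trans (Nat.le_add_left _ _)
    by_cases ht : touched T U v
    · have := hP0 v hvx hvy ht
      exact (Nat.pow_le_pow_right hW1 (by omega)).trans (Nat.le_add_right _ _)
    · have := hnot v ht
      have := hP2 v
      exact (Nat.pow_le_pow_right hW1 (by omega)).trans (Nat.le_add_left _ _)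
  have hwterm : dg T' w + 1 ≤ dg T w := by
    have h1 : dg T' w ≤ dg (dele T w w') w + dg P w := dg_sup_le (dele T w w') P w
    have h2 := dg_dele hww
    have h3 := hP0 w (by rintro rfl; omega) (by rintro rfl; omega) (Or.inr ⟨w', hww⟩)
    omega
  have hs1 : ∑ v ∈ univ.erase w, W ^ dg T' v ≤
      ∑ v ∈ univ.erase w, W ^ dg T v + (Fintype.card V - 1) * W ^ (j - 1) := by
    have : (Fintype.card V - 1) * W ^ (j - 1) = ∑ v ∈ univ.erase w, W ^ (j - 1) := by
      rw [sum_const, card_erase_of_mem (mem_univ _), smul_eq_mul, card_univ]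
    rw [this, ← sum_add_distrib]
    exact sum_le_sum fun v hv => hterm v (mem_erase.1 hv).1
  have e1 := Finset.add_sum_erase univ (fun v => W ^ dg T v) (mem_univ w)
  have e2 := Finset.add_sum_erase univ (fun v => W ^ dg T' v) (mem_univ w)
  have h1 : W ^ dg T' w ≤ W ^ (dg T w - 1) := Nat.pow_le_pow_right hW1 (by omega)
  have h2 : W ^ (j - 1) ≤ W ^ (dg T w - 1) := Nat.pow_le_pow_right hW1 (by omega)
  have h3 : W ^ dg T w = W * W ^ (dg T w - 1) := by
    rw [← pow_succ']; congr 1; omega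
  have h4 : 0 < W ^ (dg T w - 1) := Nat.pow_pos (by omega)
  have h5 : (Fintype.card V - 1) * W ^ (j - 1) ≤ (Fintype.card V) * W ^ (dg T w - 1) :=
    Nat.mul_le_mul (by omega) h2
  have h6 : W * W ^ (dg T w - 1) = Fintype.card V * W ^ (dg T w - 1) + 4 * W ^ (dg T w - 1) := by
    rw [hW]; ring
  omega

theorem exch (hT : MinT H T U) {j : ℕ} (hj : 3 ≤ j) {a b : V}
    (ha : a ∈ U) (hb : b ∈ U) (haj : dg T a + 1 < j)
    (hr : (del H (univ.filter fun v => j ≤ dg T v + 1)).Reachable a b) :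
    (del T (univ.filter fun v => j ≤ dg T v)).Reachable a b := by
  set S := univ.filter fun v => j ≤ dg T v + 1 with hS
  have key := reach_inv (A := del H S) (fun z => ∃ x, touched T U x ∧ dg T x + 1 < j ∧
    (del T (univ.filter fun v => j ≤ dg T v)).Reachable a x ∧ (freeG H T U S x x).Reachable x z ∧
    (touched T U z → z = x)) ?_ hr ⟨a, Or.inl ha, haj, SimpleGraph.Reachable.refl _,
      SimpleGraph.Reachable.refl _, fun _ => rfl⟩
  · obtain ⟨x, _, _, h1, _, h2⟩ := key
    rw [h2 (Or.inl hb)]; exact h1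
  · rintro z z' hzz ⟨x, hx, hxj, hax, hxz, hz⟩
    by_cases ht : touched T U z'
    · have hz'j : dg T z' + 1 < j := by
        have := hzz.2.2; simp [hS] at this; omega
      refine ⟨z', ht, hz'j, hax.trans ?_, SimpleGraph.Reachable.refl _, fun _ => rfl⟩
      refine hT.exch_core hj hx ht hxj hz'j ?_
      have h1 : (freeG H T U S x z').Reachable x z := hxz.mono (by
        intro p q h
        refine ⟨h.1, h.2.1, ?_, ?_⟩
        · rcases h.2.2.1 with h | h | h <;> tauto
        · rcases h.2.2.2 with h | h | h <;> tauto)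
      have h2 : (freeG H T U S x z').Adj z z' := by
        refine ⟨hzz.1, ⟨hzz.2.1, hzz.2.2⟩, ?_, Or.inr (Or.inl rfl)⟩
        by_cases h : touched T U z
        · exact Or.inl (hz h)
        · exact Or.inr (Or.inr h)
      exact h1.trans h2.reachable
    · refine ⟨x, hx, hxj, hax, hxz.trans ?_, fun h => absurd h ht⟩
      apply SimpleGraph.Adj.reachable
      refine ⟨hzz.1, ⟨hzz.2.1, hzz.2.2⟩, ?_, Or.inr (Or.inr ht)⟩
      by_cases h : touched T U z
      · exact Or.inl (hz h)
      · exact Or.inr (Or.inr h)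

theorem shrink (hT : MinT H T U) (K : ℕ) (htough : ∀ (B Y : Finset V), (∀ v ∈ B, ∃ w, H.Adj v w) →
      (∀ y ∈ Y, y ∈ U ∧ y ∉ B) →
      (∀ y ∈ Y, ∀ y' ∈ Y, y ≠ y' → ¬ (del H B).Reachable y y') →
      Y.card ≤ (U.image H.connectedComponentMk).card + K * B.card) {j : ℕ} (hj : 3 ≤ j) :
    j * (univ.filter fun v => j ≤ dg T v).card ≤
      2 * (univ.filter fun v => j ≤ dg T v).card +
      (K + 1) * (univ.filter fun v => j ≤ dg T v + 1).card := by
  obtain ⟨Y, hYU, hYS, hYY, hc⟩ := hT.count (univ.filter fun v => j ≤ dg T v)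
  set S := univ.filter fun v => j ≤ dg T v with hS
  set B := univ.filter fun v => j ≤ dg T v + 1 with hB
  have h1 := htough B (Y \ B) (by
    intro v hv
    simp only [hB, mem_filter, mem_univ, true_and] at hv
    have : 0 < dg T v := by omega
    obtain ⟨w, hw⟩ := card_pos.1 this
    exact ⟨w, hT.conn.1 (by simpa using hw)⟩) (by
    intro y hy
    rw [mem_sdiff] at hy
    exact ⟨hYU hy.1, hy.2⟩) (by
    intro y hy y' hy' hne hr
    rw [mem_sdiff] at hy hy'
    refine hYY y hy.1 y' hy'.1 hne (hT.exch hj (hYU hy.1) (hYU hy'.1) ?_ hr)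
    have := hy.2; simp [hB] at this; omega)
  have h2 : j * S.card ≤ ∑ v ∈ S, dg T v := by
    rw [mul_comm, ← smul_eq_mul]
    apply card_nsmul_le_sum
    intro v hv
    simpa [hS] using hv
  have h3 : Y.card ≤ (Y \ B).card + B.card := by
    have := le_card_sdiff B Y; omega
  have : (K + 1) * B.card = K * B.card + B.card := by ring
  omega

theorem bounded (hT : MinT H T U) (K : ℕ) (htough : ∀ (B Y : Finset V), (∀ v ∈ B, ∃ w, H.Adj v w) →
      (∀ y ∈ Y, y ∈ U ∧ y ∉ B) →
      (∀ y ∈ Y, ∀ y' ∈ Y, y ≠ y' → ¬ (del H B).Reachable y y') →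
      Y.card ≤ (U.image H.connectedComponentMk).card + K * B.card) (l : ℕ)
    (hl : Fintype.card V < 2 ^ l) (v : V) : dg T v < 2 * K + 4 + l := by
  have h1 : ∀ m, 2 ^ m * (univ.filter fun v => 2 * K + 4 + m ≤ dg T v).card ≤ Fintype.card V := by
    intro m
    induction m with
    | zero => simpa using card_le_univ _
    | succ m ih =>
      have h := hT.shrink K htough (j := 2 * K + 4 + (m + 1)) (by omega)
      have e : (univ.filter fun v => 2 * K + 4 + (m + 1) ≤ dg T v + 1) =
        (univ.filter fun v => 2 * K + 4 + m ≤ dg T v) := by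
        ext v; simp only [mem_filter, mem_univ, true_and]; omega
      rw [e] at h
      set a := (univ.filter fun v => 2 * K + 4 + (m + 1) ≤ dg T v).card
      set b := (univ.filter fun v => 2 * K + 4 + m ≤ dg T v).card
      have h2 : 2 * a ≤ b := by
        by_contra hlt
        push Not at hlt
        have : (K + 1) * b < (K + 1) * (2 * a) := Nat.mul_lt_mul_of_pos_left hlt (by omega)
        nlinarith
      calc 2 ^ (m + 1) * a = 2 ^ m * (2 * a) := by ring
        _ ≤ 2 ^ m * b := Nat.mul_le_mul_left _ h2
        _ ≤ _ := ih
  by_contra hv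
  push Not at hv
  have h2 : 0 < (univ.filter fun v => 2 * K + 4 + l ≤ dg T v).card :=
    card_pos.2 ⟨v, by simpa using hv⟩
  have h3 := h1 l
  have := Nat.mul_le_mul_left (2 ^ l) h2
  omega

end MinT

/-- The low-degree Steiner forest of a level. -/
theorem steiner (G : SimpleGraph V) (lev : V → ℕ) (hlev : LevelsGood G lev) (l : ℕ)
    (hl : Fintype.card V < 2 ^ l) (i : ℕ) :
    ∃ T : SimpleGraph V, T ≤ Gle G lev i ∧
      (∀ u u', lev u = i → lev u' = i → (Gle G lev i).Reachable u u' → T.Reachable u u') ∧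
      ∀ v, dg T v ≤ 2 * (3 * i + 2) + 4 + l := by
  set U := univ.filter fun v => lev v = i with hU
  have hUm : ∀ v, v ∈ U ↔ lev v = i := fun v => by simp [hU]
  obtain ⟨T, hT⟩ := exists_minT (Gle G lev i) U
  refine ⟨T, hT.conn.1, fun u u' hu hu' h => hT.conn.2 u ((hUm u).2 hu) u' ((hUm u').2 hu') h, ?_⟩
  intro v
  refine (hT.bounded (3 * i + 2) ?_ l hl v).le
  intro B Y hB hY hYY
  have hcnt : cnt G lev i = (U.image (Gle G lev i).connectedComponentMk).card := by
    unfold cnt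
    have h1 : (U.image (Gle G lev i).connectedComponentMk) =
        (U.image (Gam G lev)).image (fun X => if h : X.Nonempty then
          (Gle G lev i).connectedComponentMk h.choose else
          (Gle G lev i).connectedComponentMk v) := by
      rw [image_image]
      apply image_congr
      intro x hx
      have hne : (Gam G lev x).Nonempty := ⟨x, self_mem_Gam _ _ _⟩
      simp only [Function.comp, hne, dif_pos]
      have := mem_Gam.1 hne.choose_spec
      rw [(hUm x).1 hx] at this
      exact SimpleGraph.ConnectedComponent.sound this
    apply le_antisymm
    · have : (U.image (Gam G lev)) = (U.image (Gle G lev i).connectedComponentMk).image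
        (fun C => univ.filter fun y => (Gle G lev i).connectedComponentMk y = C) := by
        rw [image_image]
        apply image_congr
        intro x hx
        ext y
        rw [mem_Gam, (hUm x).1 hx]
        simp only [Function.comp, mem_filter, mem_univ, true_and]
        rw [SimpleGraph.ConnectedComponent.eq]
        exact ⟨fun h => h.symm, fun h => h.symm⟩
      rw [← hU, this]
      exact card_image_le
    · rw [h1]
      exact card_image_le
  rw [← hcnt]
  refine hlev.tough i B Y ?_ ?_ hYY
  · intro v hv
    obtain ⟨w, hw⟩ := hB v hv
    exact hw.2.1
  · intro y hy
    exact ⟨(hUm y).1 (hY y hy).1, (hY y hy).2⟩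

end
end VFL

namespace VFL
set_option linter.all false
set_option autoImplicit false
open scoped Classical
open Finset
noncomputable section
universe u
variable {V : Type u} [Fintype V] [DecidableEq V]

/-! ### Section 4: Euler lists -/

theorem euler_aux (A : SimpleGraph V) (r : V) (k : ℕ) : ∀ w : List V, r ∈ w → List.IsChain A.Adj w →
    (∀ v ∈ w, A.Reachable r v) →
    (∀ v, w.count v ≤ 1 + (w.toFinset.filter fun u => A.Adj v u).card) →
    Fintype.card V - w.toFinset.card = k →
    ∃ w : List V, List.IsChain A.Adj w ∧ (∀ v, v ∈ w ↔ A.Reachable r v) ∧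
      ∀ v, w.count v ≤ 1 + dg A v := by
  induction k using Nat.strong_induction_on with
  | _ k ih =>
  intro w hr hch hre hc hk
  by_cases hall : ∀ v u, v ∈ w → A.Adj v u → u ∈ w
  · refine ⟨w, hch, fun v => ⟨hre v, fun h => ?_⟩, fun v => (hc v).trans ?_⟩
    · exact reach_inv (fun v => v ∈ w) (fun a b hab ha => hall a b ha hab) h hr
    · unfold dg
      gcongr
      exact subset_univ _
  · push Not at hall
    obtain ⟨v, u, hv, hadj, hu⟩ := hall
    obtain ⟨w1, w2, rfl⟩ := List.append_of_mem hv
    have hne : u ≠ v := hadj.ne'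
    have hR : (w1 ++ v :: u :: v :: w2).toFinset = insert u (w1 ++ v :: w2).toFinset := by
      ext z; simp
    have hu' : u ∉ (w1 ++ v :: w2).toFinset := by rw [List.mem_toFinset]; exact hu
    refine ih _ ?_ (w1 ++ v :: u :: v :: w2) ?_ ?_ ?_ ?_ rfl
    · rw [hR, card_insert_of_notMem hu']
      have := card_le_univ (insert u (w1 ++ v :: w2).toFinset)
      rw [card_insert_of_notMem hu'] at this
      omega
    · simp only [List.mem_append, List.mem_cons] at hr ⊢; tauto
    · rw [List.isChain_append] at hch ⊢
      refine ⟨hch.1, ?_, by simpa using hch.2.2⟩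
      rw [List.isChain_cons_cons, List.isChain_cons_cons]
      exact ⟨hadj, hadj.symm, hch.2.1⟩
    · intro z hz
      have : z ∈ (w1 ++ v :: w2) ∨ z = u := by
        simp only [List.mem_append, List.mem_cons] at hz ⊢; tauto
      rcases this with h | rfl
      · exact hre z h
      · exact (hre v hv).trans hadj.reachable
    · intro z
      rw [hR]
      have h0 := hc z
      have hsub : ((w1 ++ v :: w2).toFinset.filter fun u => A.Adj z u).card ≤
        ((insert u (w1 ++ v :: w2).toFinset).filter fun u => A.Adj z u).card := by
        gcongr; exact subset_insert _ _
      by_cases hzv : z = v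
      · subst hzv
        rw [filter_insert, if_pos hadj, card_insert_of_notMem (by simp at hu' ⊢; tauto)]
        simp only [List.count_append, List.count_cons_self, List.count_cons_of_ne hne] at h0 ⊢
        omega
      · by_cases hzu : z = u
        · subst hzu
          have : (w1 ++ v :: w2).count z = 0 := List.count_eq_zero.2 hu
          simp only [List.count_append, List.count_cons_self,
            List.count_cons_of_ne hne.symm] at this ⊢
          omega
        · simp only [List.count_append, List.count_cons_of_ne (Ne.symm hzv),
            List.count_cons_of_ne (Ne.symm hzu)] at h0 ⊢
          omega

theorem euler (A : SimpleGraph V) (r : V) :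
    ∃ w : List V, List.IsChain A.Adj w ∧ (∀ v, v ∈ w ↔ A.Reachable r v) ∧
      ∀ v, w.count v ≤ 1 + dg A v := by
  refine euler_aux A r _ [r] (by simp) (by simp) ?_ ?_ rfl
  · intro v hv
    simp at hv; subst hv; exact SimpleGraph.Reachable.refl _
  · intro v
    have : [r].count v ≤ [r].length := List.count_le_length
    simp at this ⊢; omega

/-! ### Section 5: the hierarchy -/

/-- outer neighbors -/
def nb (G : SimpleGraph V) (X : Finset V) : Finset V :=
  univ.filter fun y => y ∉ X ∧ ∃ x ∈ X, G.Adj x y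

theorem mem_nb {G : SimpleGraph V} {X : Finset V} {y : V} :
    y ∈ nb G X ↔ y ∉ X ∧ ∃ x ∈ X, G.Adj x y := by simp [nb]

structure Hier (G : SimpleGraph V) (K : V → Finset V) (V0 S : Finset V) (Vis : ℕ) where
  R : Finset V
  cl : V → V
  W : V → List V
  R_sub : R ⊆ V0
  cl_mem : ∀ x, cl x ∈ R
  mem_K : ∀ x, x ∈ K (cl x)
  unatt : ∀ c ∈ R, Disjoint (nb G (K c)) S
  cl_sub : ∀ c ∈ R, ∀ x ∈ K c, K (cl x) ⊆ K c
  nb_sup : ∀ c ∈ R, ∀ y ∈ nb G (K c), K c ⊆ K (cl y)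
  adj_cases : ∀ x y, G.Adj x y → cl x = cl y ∨ y ∈ nb G (K (cl x)) ∨ x ∈ nb G (K (cl y))
  nb_cases : ∀ c ∈ R, ∀ x ∈ nb G (K c), ∀ y ∈ nb G (K c),
    cl x = cl y ∨ y ∈ nb G (K (cl x)) ∨ x ∈ nb G (K (cl y))
  top : ∀ (A : SimpleGraph V), A ≤ G → ∀ x, ∃ d, A.Reachable x d ∧
    ∀ y, A.Reachable x y → y ∈ K (cl d)
  W_sub : ∀ c, ∀ v ∈ W c, c ∈ R ∧ v ∈ K c
  W_chain : ∀ c, List.IsChain G.Adj (W c)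
  W_mem : ∀ x, x ∈ W (cl x)
  W_vis : ∀ v, v ∉ S → ∑ c, (W c).count v ≤ Vis
  W_len : ∀ c, (W c).length ≤ Fintype.card V ^ 2

section hier
variable (G : SimpleGraph V) (lev : V → ℕ)

theorem laminar {G : SimpleGraph V} {lev : V → ℕ} {y y' z : V} (h : z ∈ Gam G lev y)
    (h' : z ∈ Gam G lev y') (hl : lev y ≤ lev y') : Gam G lev y ⊆ Gam G lev y' := by
  intro w hw
  rw [mem_Gam] at *
  exact h'.trans ((h.symm.trans hw).mono (Gle_mono G lev hl))

theorem Gam_adj {G : SimpleGraph V} {lev : V → ℕ} {y u z : V} (h : u ∈ Gam G lev y)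
    (hadj : G.Adj u z) (hz : lev z ≤ lev y) : z ∈ Gam G lev y := by
  have h1 := lev_le_of_mem_Gam h
  rw [mem_Gam] at *
  have : (Gle G lev (lev y)).Adj u z := ⟨hadj, h1, hz⟩
  exact h.trans this.reachable

theorem Gam_sub_of_mem {G : SimpleGraph V} {lev : V → ℕ} {x y : V} (h : x ∈ Gam G lev y) :
    Gam G lev x ⊆ Gam G lev y := laminar (self_mem_Gam _ _ _) h (lev_le_of_mem_Gam h)

/-- neighbors of Γ have higher level -/
theorem lev_lt_of_nb {G : SimpleGraph V} {lev : V → ℕ} {y z : V} (h : z ∈ nb G (Gam G lev y)) :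
    lev y < lev z := by
  obtain ⟨h1, u, hu, hadj⟩ := mem_nb.1 h
  by_contra hlt
  exact h1 (Gam_adj hu hadj (by omega))

/-- and every Γ containing such a neighbor contains the original Γ -/
theorem sub_of_nb {G : SimpleGraph V} {lev : V → ℕ} {y z c : V} (h : z ∈ nb G (Gam G lev y))
    (hc : z ∈ Gam G lev c) : Gam G lev y ⊆ Gam G lev c := by
  have h0 := lev_lt_of_nb h
  have h3 := lev_le_of_mem_Gam hc
  obtain ⟨h1, u, hu, hadj⟩ := mem_nb.1 h
  have h4 := lev_le_of_mem_Gam hu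
  exact laminar hu (Gam_adj hc hadj.symm (by omega)) (by omega)

def rep (x : V) : V := @Function.invFun V (Finset V) ⟨x⟩ (Gam G lev) (Gam G lev x)

theorem Gam_rep (x : V) : Gam G lev (rep G lev x) = Gam G lev x :=
  @Function.invFun_eq _ _ ⟨x⟩ (Gam G lev) (Gam G lev x) ⟨x, rfl⟩

theorem rep_eq {x y : V} (h : Gam G lev x = Gam G lev y) : rep G lev x = rep G lev y := by
  unfold rep; rw [h]

theorem rep_rep (x : V) : rep G lev (rep G lev x) = rep G lev x := rep_eq G lev (Gam_rep G lev x)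

theorem lev_rep (x : V) : lev (rep G lev x) = lev x := lev_eq_of_Gam_eq (Gam_rep G lev x)

def reps : Finset V := univ.filter fun c => rep G lev c = c

theorem overlap {L : ℕ} (hL : ∀ x, lev x < L) (v : V) :
    ((reps G lev).filter fun c => v ∈ Gam G lev c).card ≤ L := by
  have : ((reps G lev).filter fun c => v ∈ Gam G lev c).card ≤ (range L).card := by
    refine card_le_card_of_injOn lev (fun c _ => by simpa using hL c) ?_
    intro c hc c' hc' he
    simp only [reps, coe_filter, mem_filter, mem_univ, true_and, Set.mem_setOf_eq] at hc hc'
    rw [← hc.1, ← hc'.1]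
    exact rep_eq G lev (Gam_eq_of_mem hc.2 hc'.2 he)
  simpa using this

variable (S : Finset V)

def att (y : V) : Prop := ∃ z ∈ nb G (Gam G lev y), z ∈ S

theorem exists_unatt (x : V) : ∃ y, (¬ att G lev S y ∧ x ∈ Gam G lev y) ∧
    ∀ y', (¬ att G lev S y' ∧ x ∈ Gam G lev y') → lev y ≤ lev y' := by
  have hne : (univ.filter fun y => ¬ att G lev S y ∧ x ∈ Gam G lev y).Nonempty := by
    obtain ⟨y, hy, hmax⟩ := Finset.exists_max_image (univ.filter fun y => G.Reachable x y) lev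
      ⟨x, by simp⟩
    simp only [mem_filter, mem_univ, true_and] at hy hmax
    refine ⟨y, ?_⟩
    simp only [mem_filter, mem_univ, true_and]
    have hall : ∀ z, G.Reachable x z → z ∈ Gam G lev y := by
      intro z hz
      rw [mem_Gam]
      refine reach_restrict ?_ (hy.symm.trans hz)
      intro a b ha hab
      exact ⟨hab, hmax a (hy.trans ha), hmax b ((hy.trans ha).trans hab.reachable)⟩
    refine ⟨?_, hall x (SimpleGraph.Reachable.refl _)⟩
    rintro ⟨z, hz, -⟩
    obtain ⟨h1, u, hu, hadj⟩ := mem_nb.1 hz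
    apply h1
    apply hall
    exact (hy.trans ((mem_Gam.1 hu).mono (Gle_le _ _ _))).trans hadj.reachable
  obtain ⟨y, hy, hmin⟩ := Finset.exists_min_image _ lev hne
  simp only [mem_filter, mem_univ, true_and] at hy hmin
  exact ⟨y, hy, hmin⟩

def cla (x : V) : V := rep G lev (exists_unatt G lev S x).choose

theorem att_congr {x y : V} (h : Gam G lev x = Gam G lev y) : att G lev S x ↔ att G lev S y := by
  unfold att; rw [h]

theorem Gam_cla (x : V) : Gam G lev (cla G lev S x) = Gam G lev (exists_unatt G lev S x).choose :=
  Gam_rep _ _ _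

theorem cla_unatt (x : V) : ¬ att G lev S (cla G lev S x) := by
  rw [att_congr G lev S (Gam_cla G lev S x)]
  exact (exists_unatt G lev S x).choose_spec.1.1

theorem mem_cla (x : V) : x ∈ Gam G lev (cla G lev S x) := by
  rw [Gam_cla]
  exact (exists_unatt G lev S x).choose_spec.1.2

theorem cla_min {x y : V} (h : ¬ att G lev S y) (hx : x ∈ Gam G lev y) :
    lev (cla G lev S x) ≤ lev y := by
  rw [lev_eq_of_Gam_eq (Gam_cla G lev S x)]
  exact (exists_unatt G lev S x).choose_spec.2 y ⟨h, hx⟩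

theorem cla_sub {x y : V} (h : ¬ att G lev S y) (hx : x ∈ Gam G lev y) :
    Gam G lev (cla G lev S x) ⊆ Gam G lev y :=
  laminar (mem_cla G lev S x) hx (cla_min G lev S h hx)

theorem rep_cla (x : V) : rep G lev (cla G lev S x) = cla G lev S x := rep_rep _ _ _

theorem cla_eq_of_Gam {x y : V} (h : Gam G lev (cla G lev S x) = Gam G lev (cla G lev S y)) :
    cla G lev S x = cla G lev S y := by
  rw [← rep_cla G lev S x, ← rep_cla G lev S y]; exact rep_eq G lev h

theorem cla_congr {x y : V} (h : ∀ z, ¬ att G lev S z → (x ∈ Gam G lev z ↔ y ∈ Gam G lev z)) :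
    cla G lev S x = cla G lev S y := by
  apply cla_eq_of_Gam
  apply Subset.antisymm
  · exact cla_sub G lev S (cla_unatt G lev S y) ((h _ (cla_unatt G lev S y)).2 (mem_cla G lev S y))
  · exact cla_sub G lev S (cla_unatt G lev S x) ((h _ (cla_unatt G lev S x)).1 (mem_cla G lev S x))

theorem cla_rep (x : V) : cla G lev S (rep G lev x) = cla G lev S x := by
  apply cla_congr
  intro z _
  constructor
  · intro h
    exact Gam_sub_of_mem h (Gam_rep G lev x ▸ self_mem_Gam G lev x)
  · intro h
    exact Gam_sub_of_mem h (Gam_rep G lev x ▸ self_mem_Gam G lev (rep G lev x))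

theorem cla_of_unatt {x : V} (h : ¬ att G lev S x) : cla G lev S x = rep G lev x := by
  rw [← rep_cla]
  apply rep_eq
  apply Subset.antisymm
  · exact cla_sub G lev S h (self_mem_Gam _ _ _)
  · exact Gam_sub_of_mem (mem_cla G lev S x)

theorem cla_nb {r z : V} (hz : z ∈ nb G (Gam G lev r)) (hS : z ∈ S) :
    cla G lev S z = cla G lev S r := by
  apply cla_congr
  intro y hy
  constructor
  · intro h
    exact sub_of_nb hz h (self_mem_Gam _ _ _)
  · intro h
    by_contra hn
    apply hy
    obtain ⟨_, u, hu, hadj⟩ := mem_nb.1 hz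
    exact ⟨z, mem_nb.2 ⟨hn, u, Gam_sub_of_mem h hu, hadj⟩, hS⟩

/-- restrict a graph to a vertex set -/
def rst (T : SimpleGraph V) (X : Finset V) : SimpleGraph V where
  Adj x y := T.Adj x y ∧ x ∈ X ∧ y ∈ X
  symm := ⟨fun x y h => ⟨h.1.symm, h.2.2, h.2.1⟩⟩
  loopless := ⟨fun x h => T.loopless.irrefl x h.1⟩

theorem Gam_conn {x y : V} {c : V} (hx : x ∈ Gam G lev c) (hy : y ∈ Gam G lev c) :
    (rst G (Gam G lev c)).Reachable x y := by
  have key : ∀ y, y ∈ Gam G lev c → (rst G (Gam G lev c)).Reachable c y := by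
    intro y hy
    refine reach_restrict ?_ (mem_Gam.1 hy)
    intro a b ha hab
    exact ⟨hab.1, mem_Gam.2 ha, mem_Gam.2 (ha.trans hab.reachable)⟩
  exact (key x hx).symm.trans (key y hy)

theorem att_tree (r : V) (h : att G lev S r) : ∃ (z : V) (P : SimpleGraph V),
    z ∈ nb G (Gam G lev r) ∧ z ∈ S ∧ P ≤ G ∧ P.Reachable r z ∧ (∀ v, dg P v ≤ 2) ∧
    ∀ a b, P.Adj a b → (a ∈ Gam G lev r ∨ a = z) := by
  obtain ⟨z, hz, hzS⟩ := h
  obtain ⟨_, u, hu, hadj⟩ := mem_nb.1 hz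
  have hr : (rst G (insert z (Gam G lev r))).Reachable r z := by
    have h1 : (rst G (insert z (Gam G lev r))).Reachable r u :=
      (Gam_conn G lev (self_mem_Gam G lev r) hu).mono (fun a b (hab : (rst G (Gam G lev r)).Adj a b) =>
        ⟨hab.1, mem_insert_of_mem hab.2.1, mem_insert_of_mem hab.2.2⟩)
    have h2 : (rst G (insert z (Gam G lev r))).Adj u z :=
      ⟨hadj, mem_insert_of_mem hu, mem_insert_self _ _⟩
    exact h1.trans h2.reachable
  obtain ⟨P, hP, hPr, hd, _⟩ := path_graph _ hr
  refine ⟨z, P, hz, hzS, fun a b hab => (hP hab).1, hPr, hd, ?_⟩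
  intro a b hab
  rcases mem_insert.1 (hP hab).2.1 with h | h
  · exact Or.inr h
  · exact Or.inl h

/-- tree at a representative -/
theorem rep_tree (T : ℕ → SimpleGraph V) (hTle : ∀ i, T i ≤ Gle G lev i) (Δ : ℕ)
    (hTc : ∀ i u u', lev u = i → lev u' = i → (Gle G lev i).Reachable u u' → (T i).Reachable u u')
    (hTd : ∀ i v, dg (T i) v ≤ Δ) (r : V) : ∃ A : SimpleGraph V, A ≤ G ∧
      (∀ v, dg A v ≤ Δ + 2) ∧
      (∀ a b, A.Adj a b → a ∈ Gam G lev r ∨ (a ∈ S ∧ a ∈ nb G (Gam G lev r))) ∧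
      (∀ x, Gam G lev x = Gam G lev r → A.Reachable x r) ∧
      (att G lev S r → ∃ z ∈ nb G (Gam G lev r), z ∈ S ∧ A.Reachable r z) := by
  set B := rst (T (lev r)) (Gam G lev r) with hB
  have hBd : ∀ v, dg B v ≤ Δ := fun v => (dg_mono (show B ≤ T (lev r) from fun a b h => h.1) v).trans (hTd (lev r) v)
  have hBc : ∀ x, Gam G lev x = Gam G lev r → B.Reachable x r := by
    intro x hx
    have hl := lev_eq_of_Gam_eq hx
    have h1 : r ∈ Gam G lev x := hx ▸ self_mem_Gam G lev r
    rw [mem_Gam, hl] at h1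
    refine reach_restrict ?_ (hTc (lev r) x r hl rfl h1)
    intro a b ha hab
    have hxr : x ∈ Gam G lev r := hx ▸ self_mem_Gam G lev x
    have ha' : a ∈ Gam G lev r :=
      mem_Gam.2 ((mem_Gam.1 hxr).trans (ha.mono (hTle _)))
    exact ⟨hab, ha', mem_Gam.2 ((mem_Gam.1 ha').trans ((hab.reachable).mono (hTle _)))⟩
  have hBG : B ≤ G := fun a b h => (hTle _ h.1).1
  by_cases h : att G lev S r
  · obtain ⟨z, P, hz, hzS, hPG, hPr, hPd, hPm⟩ := att_tree G lev S r h
    refine ⟨B ⊔ P, sup_le hBG hPG, ?_, ?_, fun x hx => (hBc x hx).mono le_sup_left,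
      fun _ => ⟨z, hz, hzS, hPr.mono le_sup_right⟩⟩
    · intro v
      exact (dg_sup_le _ _ v).trans (Nat.add_le_add (hBd v) (hPd v))
    · intro a b hab
      rcases hab with hab | hab
      · exact Or.inl hab.2.1
      · rcases hPm a b hab with h | h
        · exact Or.inl h
        · exact Or.inr (h ▸ ⟨hzS, hz⟩)
  · refine ⟨B, hBG, fun v => (hBd v).trans (by omega), fun a b hab => Or.inl hab.2.1, hBc,
      fun h' => absurd h' h⟩

theorem length_eq_sum_count (l : List V) : l.length = ∑ v, l.count v := by
  induction l with
  | nil => simp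
  | cons a l ih =>
    simp only [List.length_cons, List.count_cons, sum_add_distrib, ← ih]
    simp

theorem dg_iSup_le {ι : Type*} [Fintype ι] (A : ι → SimpleGraph V) (v : V) :
    dg (⨆ i, A i) v ≤ ∑ i, dg (A i) v := by
  unfold dg
  refine le_trans (card_le_card ?_) card_biUnion_le
  intro w hw
  simpa [SimpleGraph.iSup_adj] using hw

theorem hier_exists (T : ℕ → SimpleGraph V) (hTle : ∀ i, T i ≤ Gle G lev i) (Δ : ℕ)
    (hTc : ∀ i u u', lev u = i → lev u' = i → (Gle G lev i).Reachable u u' → (T i).Reachable u u')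
    (hTd : ∀ i v, dg (T i) v ≤ Δ) (L : ℕ) (hL : ∀ x, lev x < L) :
    Nonempty (Hier G (Gam G lev) (reps G lev) S (L + L * (Δ + 2))) := by
  choose A hAG hAd hAm hAc hAz using rep_tree G lev S T hTle Δ hTc hTd
  -- union
  set Uc : V → SimpleGraph V := fun c => ⨆ r : {r : V // rep G lev r = r ∧ cla G lev S r = c}, A r.1
    with hUc
  have hUle : ∀ c, Uc c ≤ G := fun c => iSup_le fun r => hAG r.1
  have hUA : ∀ r, rep G lev r = r → A r ≤ Uc (cla G lev S r) := fun r hr =>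
    le_iSup (fun r' : {r' : V // rep G lev r' = r' ∧ cla G lev S r' = cla G lev S r} => A r'.1) ⟨r, hr, rfl⟩
  have hUreach : ∀ (k : ℕ) (x : V), L - lev x = k →
      (Uc (cla G lev S x)).Reachable (cla G lev S x) x := by
    intro k
    induction k using Nat.strong_induction_on with
    | _ k ih =>
    intro x hk
    have hr := rep_rep G lev x
    have hcr := cla_rep G lev S x
    have hxr : (Uc (cla G lev S x)).Reachable (rep G lev x) x := by
      have := (hAc (rep G lev x) x (Gam_rep G lev x).symm).symm
      exact this.mono (hcr ▸ hUA _ hr)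
    by_cases h : att G lev S x
    · have h' : att G lev S (rep G lev x) := (att_congr G lev S (Gam_rep G lev x)).2 h
      obtain ⟨z, hz, hzS, hrz⟩ := hAz _ h'
      have h1 := lev_lt_of_nb hz
      rw [lev_rep G lev x] at h1
      have h2 := cla_nb G lev S hz hzS
      rw [hcr] at h2
      have := hL z
      have h3 := ih (L - lev z) (by omega) z rfl
      rw [h2] at h3
      exact (h3.trans (hrz.mono (hcr ▸ hUA _ hr)).symm).trans hxr
    · have h1 := cla_of_unatt G lev S h
      rw [h1] at hxr ⊢
      exact hxr
  have hUK : ∀ c a b, (Uc c).Adj a b → a ∈ Gam G lev c := by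
    intro c a b hab
    rw [hUc] at hab
    simp only [SimpleGraph.iSup_adj] at hab
    obtain ⟨⟨r, hr, rfl⟩, hab⟩ := hab
    have h0 := mem_cla G lev S r
    rcases hAm r a b hab with h | ⟨hS, hn⟩
    · exact Gam_sub_of_mem h0 h
    · rw [← cla_nb G lev S hn hS]
      exact mem_cla G lev S a
  choose E hEch hEm hEc using fun c => euler (Uc c) c
  set R := (reps G lev).filter fun c => ¬ att G lev S c with hR
  have hRm : ∀ c, c ∈ R ↔ rep G lev c = c ∧ ¬ att G lev S c := fun c => by simp [hR, reps]
  have hclR : ∀ x, cla G lev S x ∈ R := fun x => (hRm _).2 ⟨rep_cla G lev S x, cla_unatt G lev S x⟩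
  have hcount : ∀ c v, (E c).count v ≤ 1 + dg (Uc c) v := hEc
  have hEK : ∀ c v, v ∈ E c → v ∈ Gam G lev c := by
    intro c v hv
    exact reach_inv (A := Uc c) (fun v => v ∈ Gam G lev c) (fun a b hab _ => hUK c b a hab.symm)
      ((hEm c v).1 hv) (self_mem_Gam _ _ _)
  refine ⟨⟨R, cla G lev S, fun c => if c ∈ R then E c else [], filter_subset _ _, hclR,
    mem_cla G lev S, ?_, ?_, fun c _ y hy => sub_of_nb hy (mem_cla G lev S y), ?_, ?_, ?_, ?_, ?_, ?_, ?_, ?_⟩⟩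
  · intro c hc
    rw [disjoint_left]
    intro z hz hzS
    exact ((hRm c).1 hc).2 ⟨z, hz, hzS⟩
  · intro c hc x hx
    exact cla_sub G lev S ((hRm c).1 hc).2 hx
  · intro x y hadj
    by_cases h1 : y ∈ Gam G lev (cla G lev S x)
    · by_cases h2 : x ∈ Gam G lev (cla G lev S y)
      · left
        apply cla_eq_of_Gam
        exact Subset.antisymm (cla_sub G lev S (cla_unatt G lev S y) h2)
          (cla_sub G lev S (cla_unatt G lev S x) h1)
      · exact Or.inr (Or.inr (mem_nb.2 ⟨h2, y, mem_cla G lev S y, hadj.symm⟩))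
    · exact Or.inr (Or.inl (mem_nb.2 ⟨h1, x, mem_cla G lev S x, hadj⟩))
  · have key : ∀ c x y, x ∈ nb G (Gam G lev c) → y ∈ nb G (Gam G lev c) →
        lev (cla G lev S x) ≤ lev (cla G lev S y) →
        cla G lev S x = cla G lev S y ∨ y ∈ nb G (Gam G lev (cla G lev S x)) := by
      intro c x y hx hy hl
      have h1 := sub_of_nb hx (mem_cla G lev S x)
      have h2 := sub_of_nb hy (mem_cla G lev S y)
      have h3 := laminar (h1 (self_mem_Gam G lev c)) (h2 (self_mem_Gam G lev c)) hl
      by_cases h4 : y ∈ Gam G lev (cla G lev S x)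
      · left
        apply cla_eq_of_Gam
        exact Subset.antisymm h3 (cla_sub G lev S (cla_unatt G lev S x) h4)
      · right
        obtain ⟨_, u, hu, hadj⟩ := mem_nb.1 hy
        exact mem_nb.2 ⟨h4, u, h1 hu, hadj⟩
    intro c hc x hx y hy
    rcases le_total (lev (cla G lev S x)) (lev (cla G lev S y)) with h | h
    · rcases key c x y hx hy h with h | h
      · exact Or.inl h
      · exact Or.inr (Or.inl h)
    · rcases key c y x hy hx h with h | h
      · exact Or.inl h.symm
      · exact Or.inr (Or.inr h)
  · intro B hB x
    obtain ⟨y, hy, hmax⟩ := Finset.exists_max_image (univ.filter fun y => B.Reachable x y) lev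
      ⟨x, by simp⟩
    simp only [mem_filter, mem_univ, true_and] at hy hmax
    refine ⟨y, hy, ?_⟩
    intro z hz
    apply Gam_sub_of_mem (mem_cla G lev S y)
    rw [mem_Gam]
    refine reach_restrict (A := B) ?_ (hy.symm.trans hz)
    intro a b ha hab
    exact ⟨hB hab, hmax a (hy.trans ha), hmax b ((hy.trans ha).trans hab.reachable)⟩
  · intro c v hv
    by_cases hc : c ∈ R
    · simp only [hc, if_true] at hv
      exact ⟨hc, hEK c v hv⟩
    · simp [hc] at hv
  · intro c
    by_cases hc : c ∈ R
    · simp only [hc, if_true]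
      exact (hEch c).imp fun a b h => hUle c h
    · simp [hc]
  · intro x
    simp only [hclR x, if_true]
    exact (hEm _ x).2 (hUreach _ x rfl)
  · intro v hv
    have h1 : ∀ c, (if c ∈ R then E c else []).count v ≤
        (if rep G lev c = c ∧ v ∈ Gam G lev c then 1 else 0) +
        ∑ r, (if rep G lev r = r ∧ cla G lev S r = c then dg (A r) v else 0) := by
      intro c
      by_cases hc : c ∈ R ∧ v ∈ E c
      · have h2 := hEK c v hc.2
        rw [if_pos hc.1, if_pos ⟨((hRm c).1 hc.1).1, h2⟩]
        refine (hcount c v).trans (Nat.add_le_add_left ?_ _)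
        rw [hUc]
        refine (dg_iSup_le _ v).trans ?_
        rw [← sum_filter]
        rw [← Finset.sum_subtype_eq_sum_filter]
        apply le_of_eq
        symm
        apply Finset.sum_bij (fun (x : Subtype _) _ => (⟨x.1, x.2⟩ : {r : V // rep G lev r = r ∧ cla G lev S r = c}))
        · simp
        · intro a _ b _ h
          exact Subtype.ext (congrArg (fun z : {r : V // rep G lev r = r ∧ cla G lev S r = c} => z.1) h)
        · intro b _
          exact ⟨⟨b.1, b.2⟩, by simp, rfl⟩
        · intro a _; rfl
      · have : (if c ∈ R then E c else []).count v = 0 := by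
          split_ifs with h
          · exact List.count_eq_zero.2 fun h' => hc ⟨h, h'⟩
          · simp
        rw [this]; exact Nat.zero_le _
    refine (sum_le_sum fun c _ => h1 c).trans ?_
    rw [sum_add_distrib]
    have hov := overlap G lev hL v
    apply Nat.add_le_add
    · rw [← card_filter]
      refine le_trans (le_of_eq ?_) hov
      congr 1; ext c; simp [reps]
    · rw [sum_comm]
      have h2 : ∀ r, ∑ c, (if rep G lev r = r ∧ cla G lev S r = c then dg (A r) v else 0) ≤
          if rep G lev r = r ∧ v ∈ Gam G lev r then Δ + 2 else 0 := by
        intro r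
        by_cases hr : rep G lev r = r
        · simp only [hr, true_and, sum_ite_eq, mem_univ, if_true]
          split_ifs with h
          · exact hAd r v
          · apply le_of_eq
            unfold dg
            rw [card_eq_zero, filter_eq_empty_iff]
            intro b _ hb
            rcases hAm r v b hb with h' | h'
            · exact h h'
            · exact hv h'.1
        · simp [hr]
      refine (sum_le_sum fun r _ => h2 r).trans ?_
      rw [← sum_filter, sum_const, smul_eq_mul]
      refine Nat.mul_le_mul_right _ (le_trans (le_of_eq ?_) hov)
      congr 1; ext c; simp [reps]
  · intro c
    have : ∀ v, (if c ∈ R then E c else []).count v ≤ Fintype.card V := by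
      intro v
      split_ifs
      · refine (hcount c v).trans ?_
        have := dg_lt_card (Uc c) v; omega
      · simp
    rw [length_eq_sum_count]
    refine (sum_le_sum fun v _ => this v).trans ?_
    rw [sum_const, card_univ, smul_eq_mul, sq]

end hier
end
end VFL

namespace VFL
set_option linter.all false
set_option autoImplicit false
open scoped Classical
open Finset
noncomputable section
universe u
variable {V : Type u} [Fintype V] [DecidableEq V]

/-! ### Section 5: query structure and sparsified edges -/

def aff (K : V → Finset V) (M : Finset V) (c : V) : Prop := ∃ v ∈ M, v ∈ K c

def badT (K : V → Finset V) (M : Finset V) (σ : Option V) : Prop := ∃ c, σ = some c ∧ aff K M c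

section query
variable {G : SimpleGraph V} {K : V → Finset V} {V0 S : Finset V} {Vis : ℕ}

def Rel (H : Hier G K V0 S Vis) (σ : Option V) (x y : V) : Prop :=
  (σ = none ∧ G.Adj x y) ∨ ∃ c, σ = some c ∧ c ∈ H.R ∧ x ∈ nb G (K c) ∧ y ∈ nb G (K c)

theorem Rel.symm {H : Hier G K V0 S Vis} {σ : Option V} {x y : V} (h : Rel H σ x y) :
    Rel H σ y x := by
  rcases h with ⟨h, h'⟩ | ⟨c, h1, h2, h3, h4⟩
  · exact Or.inl ⟨h, h'.symm⟩
  · exact Or.inr ⟨c, h1, h2, h4, h3⟩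

theorem Rel.cases {H : Hier G K V0 S Vis} {σ : Option V} {x y : V} (h : Rel H σ x y) :
    H.cl x = H.cl y ∨ y ∈ nb G (K (H.cl x)) ∨ x ∈ nb G (K (H.cl y)) := by
  rcases h with ⟨h, h'⟩ | ⟨c, h1, h2, h3, h4⟩
  · exact H.adj_cases x y h'
  · exact H.nb_cases c h2 x h3 y h4

theorem valid_reach (H : Hier G K V0 S Vis)
    (hK : ∀ c, ∀ x ∈ K c, ∀ y ∈ K c, (rst G (K c)).Reachable x y)
    {F M : Finset V} (hFM : F ⊆ M) {σ : Option V} {x y : V} (hx : x ∉ F) (hy : y ∉ F)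
    (hσ : ¬ badT K M σ) (h : Rel H σ x y) : (del G F).Reachable x y := by
  rcases h with ⟨h, h'⟩ | ⟨c, h1, h2, h3, h4⟩
  · have : (del G F).Adj x y := ⟨h', hx, hy⟩
    exact this.reachable
  · have hc : ∀ v ∈ K c, v ∉ F := fun v hv hF => hσ ⟨c, h1, v, hFM hF, hv⟩
    obtain ⟨_, u, hu, hux⟩ := mem_nb.1 h3
    obtain ⟨_, w, hw, hwy⟩ := mem_nb.1 h4
    have e1 : (del G F).Adj x u := ⟨hux.symm, hx, hc u hu⟩
    have e2 : (del G F).Adj w y := ⟨hwy, hc w hw, hy⟩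
    have e3 : (del G F).Reachable u w := (hK c u hu w hw).mono
      (show rst G (K c) ≤ del G F from fun a b hab => ⟨hab.1, hc a hab.2.1, hc b hab.2.2⟩)
    exact (e1.reachable.trans e3).trans e2.reachable

theorem crossing (H : Hier G K V0 S Vis) {F M : Finset V} (hFM : F ⊆ M) {s t : V}
    (hs : s ∈ M) (ht : t ∈ M) (hsF : s ∉ F) (htF : t ∉ F) (side : V → Bool)
    (hst : (del G F).Reachable s t) (hside : side s ≠ side t) :
    ∃ x y σ, x ∉ F ∧ y ∉ F ∧ aff K M (H.cl x) ∧ aff K M (H.cl y) ∧ ¬ badT K M σ ∧ Rel H σ x y ∧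
      side x ≠ side y := by
  by_contra hcon
  have hno : ∀ x y σ, x ∉ F → y ∉ F → aff K M (H.cl x) → aff K M (H.cl y) → ¬ badT K M σ →
      Rel H σ x y → side x = side y := by
    intro x y σ h1 h2 h3 h4 h5 h6
    by_contra h7
    exact hcon ⟨x, y, σ, h1, h2, h3, h4, h5, h6, h7⟩
  set GU : SimpleGraph V := rst G (univ.filter fun x => x ∉ F ∧ ¬ aff K M (H.cl x)) with hGU
  have hmemU : ∀ x, x ∈ (univ.filter fun x => x ∉ F ∧ ¬ aff K M (H.cl x)) ↔
      x ∉ F ∧ ¬ aff K M (H.cl x) := fun x => by simp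
  have haffM : ∀ x ∈ M, aff K M (H.cl x) := fun x hx => ⟨x, hx, H.mem_K x⟩
  have key := reach_inv (A := del G F) (fun x => x ∉ F ∧ (aff K M (H.cl x) → side x = side s) ∧
    (¬ aff K M (H.cl x) → ∀ z q, GU.Reachable x z → G.Adj z q → q ∉ F → aff K M (H.cl q) →
      side q = side s)) ?_ hst ⟨hsF, fun _ => rfl, fun h => absurd (haffM s hs) h⟩
  · exact hside (key.2.1 (haffM t ht)).symm
  · intro x y hxy hP
    obtain ⟨hxF, hP1, hP2⟩ := hP
    refine ⟨hxy.2.2, ?_, ?_⟩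
    · intro hy
      by_cases hx : aff K M (H.cl x)
      · rw [← hP1 hx]
        exact (hno x y none hxF hxy.2.2 hx hy (by rintro ⟨c, h, _⟩; cases h)
          (Or.inl ⟨rfl, hxy.1⟩)).symm
      · exact hP2 hx x y (SimpleGraph.Reachable.refl _) hxy.1 hxy.2.2 hy
    · intro hy z q hyz hzq hqF hq
      by_cases hx : aff K M (H.cl x)
      · obtain ⟨d, hyd, hd⟩ := H.top GU (fun a b hab => hab.1) y
        have hdU : d ∉ F ∧ ¬ aff K M (H.cl d) :=
          reach_inv (A := GU) (fun d => d ∉ F ∧ ¬ aff K M (H.cl d))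
            (fun a b (hab : GU.Adj a b) _ => (hmemU b).1 hab.2.2) hyd ⟨hxy.2.2, hy⟩
        have hnb : ∀ w w', GU.Reachable y w → G.Adj w w' → aff K M (H.cl w') →
            w' ∈ nb G (K (H.cl d)) := by
          intro w w' hw hadj haff
          refine mem_nb.2 ⟨?_, w, hd w hw, hadj⟩
          intro hin
          obtain ⟨v, hv, hvK⟩ := haff
          exact hdU.2 ⟨v, hv, H.cl_sub _ (H.cl_mem d) w' hin hvK⟩
        rw [← hP1 hx]
        refine (hno x q (some (H.cl d)) hxF hqF hx hq ?_ (Or.inr ⟨_, rfl, H.cl_mem d,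
          hnb y x (SimpleGraph.Reachable.refl _) hxy.1.symm hx, hnb z q hyz hzq hq⟩)).symm
        rintro ⟨c, hc, hc'⟩
        cases hc
        exact hdU.2 hc'
      · have : GU.Adj x y := ⟨hxy.1, (hmemU x).2 ⟨hxF, hx⟩, (hmemU y).2 ⟨hxy.2.2, hy⟩⟩
        exact hP2 hx z q (this.reachable.trans hyz) hzq hqF hq

/-! sparsified edges -/
variable {ιJ ιA ιB : Type}

def RG (H : Hier G K V0 S Vis) (tt : ιJ → Option V → ιA) (hh : ιJ → V → ιB) (j : ιJ) (a : ιA) :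
    SimpleGraph V where
  Adj x y := x ≠ y ∧ H.cl x = H.cl y ∧ hh j x = hh j y ∧ ∃ σ, tt j σ = a ∧ Rel H σ x y
  symm := ⟨fun x y ⟨h1, h2, h3, σ, h4, h5⟩ => ⟨h1.symm, h2.symm, h3.symm, σ, h4, h5.symm⟩⟩
  loopless := ⟨fun x h => h.1 rfl⟩

def par (T : SimpleGraph V) (x : V) : V := if h : x ≠ rt T x then (dep_step h).choose else x

theorem par_adj {T : SimpleGraph V} {x : V} (h : x ≠ rt T x) : T.Adj x (par T x) := by
  unfold par; rw [dif_pos h]; exact (dep_step h).choose_spec.1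

theorem par_dep {T : SimpleGraph V} {x : V} (h : x ≠ rt T x) : dep T (par T x) < dep T x := by
  unfold par; rw [dif_pos h]; exact (dep_step h).choose_spec.2

theorem par_sep (T : SimpleGraph V) (X : V → Prop) {x y : V} (h : T.Reachable x y)
    (hx : ¬ (X x ↔ X y)) : ∃ u, T.Reachable x u ∧ u ≠ rt T u ∧ ¬ (X u ↔ X (par T u)) := by
  by_contra hcon
  have key : ∀ (k : ℕ) (u : V), dep T u = k → T.Reachable x u → (X u ↔ X (rt T x)) := by
    intro k
    induction k using Nat.strong_induction_on with
    | _ k ih =>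
    intro u hk hu
    by_cases hr : u = rt T u
    · rw [rt_eq hu, ← hr]
    · have h1 : X u ↔ X (par T u) := by
        by_contra h2
        exact hcon ⟨u, hu, hr, h2⟩
      rw [h1]
      exact ih _ (hk ▸ par_dep hr) _ rfl (hu.trans (par_adj hr).reachable)
  exact hx ((key _ x rfl (SimpleGraph.Reachable.refl _)).trans (key _ y rfl h).symm)

abbrev Edg (V : Type u) (ιJ ιA : Type) := (ιJ × ιA × V) ⊕ (V × V × Option V)

section edges
variable (H : Hier G K V0 S Vis) (tt : ιJ → Option V → ιA) (hh : ιJ → V → ιB)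

def tail : Edg V ιJ ιA → V
  | Sum.inl (_, _, x) => x
  | Sum.inr (x, _, _) => x

def head : Edg V ιJ ιA → V
  | Sum.inl (j, a, x) => par (RG H tt hh j a) x
  | Sum.inr (_, y, _) => y

def etyp : Edg V ιJ ιA → Option V
  | Sum.inl (j, a, x) => if h : ∃ σ, tt j σ = a ∧ Rel H σ x (par (RG H tt hh j a) x) then h.choose else none
  | Sum.inr (_, _, σ) => σ

def pres : Edg V ιJ ιA → Prop
  | Sum.inl (j, a, x) => x ≠ rt (RG H tt hh j a) x
  | Sum.inr (x, y, σ) => y ∈ nb G (K (H.cl x)) ∧ H.cl x ≠ H.cl y ∧ Rel H σ x y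

theorem pres_inl {j : ιJ} {a : ιA} {x : V} (h : pres H tt hh (Sum.inl (j, a, x))) :
    tt j (etyp H tt hh (Sum.inl (j, a, x))) = a ∧
    Rel H (etyp H tt hh (Sum.inl (j, a, x))) x (head H tt hh (Sum.inl (j, a, x))) ∧
    H.cl x = H.cl (head H tt hh (Sum.inl (j, a, x))) ∧
    hh j x = hh j (head H tt hh (Sum.inl (j, a, x))) := by
  have h' : x ≠ rt (RG H tt hh j a) x := h
  obtain ⟨_, h2, h3, h4⟩ := par_adj h'
  have e : etyp H tt hh (Sum.inl (j, a, x)) = h4.choose := dif_pos h4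
  rw [e]
  exact ⟨h4.choose_spec.1, h4.choose_spec.2, h2, h3⟩

theorem pres_rel {e : Edg V ιJ ιA} (h : pres H tt hh e) :
    Rel H (etyp H tt hh e) (tail e) (head H tt hh e) := by
  rcases e with ⟨j, a, x⟩ | ⟨x, y, σ⟩
  · exact (pres_inl H tt hh h).2.1
  · exact h.2.2

def isIn : Edg V ιJ ιA → Prop
  | Sum.inl _ => True
  | Sum.inr _ => False

theorem pres_cl_in {e : Edg V ιJ ιA} (h : pres H tt hh e) (hi : isIn e) :
    H.cl (tail e) = H.cl (head H tt hh e) := by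
  rcases e with ⟨j, a, x⟩ | ⟨x, y, σ⟩
  · exact (pres_inl H tt hh h).2.2.1
  · exact absurd hi id

theorem pres_cl_cr {e : Edg V ιJ ιA} (h : pres H tt hh e) (hi : ¬ isIn e) :
    H.cl (tail e) ≠ H.cl (head H tt hh e) ∧ head H tt hh e ∈ nb G (K (H.cl (tail e))) := by
  rcases e with ⟨j, a, x⟩ | ⟨x, y, σ⟩
  · exact absurd trivial hi
  · exact ⟨h.2.1, h.1⟩

/-- good edges of class `c` -/
def goodE (F M : Finset V) (c : V) (e : Edg V ιJ ιA) : Prop :=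
  pres H tt hh e ∧ H.cl (tail e) = c ∧ ¬ badT K M (etyp H tt hh e) ∧ (isIn e → tail e ∉ F)

/-- the isolation event for query -/
def Iso (tt : ιJ → Option V → ιA) (hh : ιJ → V → ιB) (K : V → Finset V) (V0 F M : Finset V) : Prop :=
  ∀ x y σ, x ∉ F → y ∉ F → x ≠ y → ¬ badT K M σ → ∃ j, hh j x = hh j y ∧
    (∀ v ∈ F, hh j v ≠ hh j x) ∧ ∀ c ∈ V0, aff K M c → tt j (some c) ≠ tt j σ

theorem cross_good {F M : Finset V} (hiso : Iso tt hh K V0 F M) (X : V → Prop) {x y : V}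
    {σ : Option V} (hx : x ∉ F) (hy : y ∉ F) (hσ : ¬ badT K M σ) (hr : Rel H σ x y)
    (hcl : H.cl x = H.cl y) (hX : ¬ (X x ↔ X y)) :
    ∃ e, goodE H tt hh F M (H.cl x) e ∧ isIn e ∧ head H tt hh e ∉ F ∧
      ¬ (X (tail e) ↔ X (head H tt hh e)) := by
  have hne : x ≠ y := by rintro rfl; exact hX Iff.rfl
  obtain ⟨j, h1, h2, h3⟩ := hiso x y σ hx hy hne hσ
  have hadj : (RG H tt hh j (tt j σ)).Adj x y := ⟨hne, hcl, h1, σ, rfl, hr⟩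
  obtain ⟨u, hu, hur, huX⟩ := par_sep _ X hadj.reachable hX
  have hinv := reach_inv (A := RG H tt hh j (tt j σ)) (fun u => H.cl x = H.cl u ∧ hh j x = hh j u)
    (fun a b (hab : (RG H tt hh j (tt j σ)).Adj a b) h => ⟨h.1.trans hab.2.1, h.2.trans hab.2.2.1⟩) hu ⟨rfl, rfl⟩
  have hp : pres H tt hh (Sum.inl (j, tt j σ, u)) := hur
  obtain ⟨g1, g2, g3, g4⟩ := pres_inl H tt hh hp
  refine ⟨Sum.inl (j, tt j σ, u), ⟨hp, hinv.1.symm, ?_, ?_⟩, trivial, ?_, huX⟩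
  · rintro ⟨c, hc, haff⟩
    rw [hc] at g1 g2
    rcases g2 with ⟨h, _⟩ | ⟨c', h, hR, _⟩
    · cases h
    · cases h
      exact h3 c (H.R_sub hR) haff g1
  · intro _ hF
    exact h2 u hF hinv.2.symm
  · intro hF
    exact h2 _ hF (g4.symm.trans hinv.2.symm)

end edges
end query
end
end VFL

namespace VFL
set_option linter.all false
set_option autoImplicit false
open scoped Classical
open Finset
noncomputable section
universe u
variable {V : Type u} [Fintype V] [DecidableEq V]

/-! ### Section 6: the algebraic decoder -/

section alg
variable {Kf : Type} [Field Kf]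

def b2k (b : Bool) : Kf := if b = true then 1 else 0

/-- boundary difference of a cell colouring -/
def dchi (χ : V × ℕ → Bool) : V × ℕ → Kf
  | (c, 0) => b2k (χ (c, 0))
  | (c, q + 1) => b2k (χ (c, q)) + b2k (χ (c, q + 1))

theorem abel (h2 : ∀ a : Kf, a + a = 0) (χ : V × ℕ → Bool) (c : V) (g : ℕ → Kf) (m : ℕ) :
    ∑ q ∈ range (m + 1), dchi χ (c, q) * ∑ i ∈ range q, g i =
      ∑ i ∈ range m, b2k (χ (c, i)) * g i + b2k (χ (c, m)) * ∑ i ∈ range m, g i := by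
  induction m with
  | zero => simp
  | succ m ih =>
    rw [sum_range_succ, ih, sum_range_succ (fun i => b2k (χ (c, i)) * g i) m, sum_range_succ g m]
    have e : (dchi χ (c, m + 1) : Kf) = b2k (χ (c, m)) + b2k (χ (c, m + 1)) := rfl
    rw [e]
    have := h2 (b2k (χ (c, m)) * ∑ i ∈ range m, g i)
    linear_combination this

theorem poly_sum (p : Polynomial Kf) (Rd : ℕ) (h : p.natDegree < Rd) (y : Kf) :
    ∑ l : Fin Rd, p.coeff l * y ^ (l : ℕ) = p.eval y := by
  rw [Polynomial.eval_eq_sum_range' h, ← Fin.sum_univ_eq_sum_range (fun i => p.coeff i * y ^ i)]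

def ppoly (ν : V → Kf) (F N : Finset V) : Polynomial Kf :=
  (∏ v ∈ F, (Polynomial.X - Polynomial.C (ν v))) * ∏ v ∈ N, (Polynomial.X - Polynomial.C (ν v))

theorem ppoly_deg (ν : V → Kf) (F N : Finset V) : (ppoly ν F N).natDegree ≤ F.card + N.card := by
  unfold ppoly
  refine Polynomial.natDegree_mul_le.trans (Nat.add_le_add ?_ ?_)
  · exact (Polynomial.natDegree_prod_le _ _).trans (by simp)
  · exact (Polynomial.natDegree_prod_le _ _).trans (by simp)

theorem ppoly_eval (ν : V → Kf) (hν : Function.Injective ν) (F N : Finset V) (v : V) :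
    (ppoly ν F N).eval (ν v) = 0 ↔ v ∈ F ∨ v ∈ N := by
  unfold ppoly
  rw [Polynomial.eval_mul, mul_eq_zero, Polynomial.eval_prod, Polynomial.eval_prod,
    prod_eq_zero_iff, prod_eq_zero_iff]
  simp only [Polynomial.eval_sub, Polynomial.eval_X, Polynomial.eval_C, sub_eq_zero]
  constructor
  · rintro (⟨a, ha, h⟩ | ⟨a, ha, h⟩)
    · exact Or.inl (hν h ▸ ha)
    · exact Or.inr (hν h ▸ ha)
  · rintro (h | h)
    · exact Or.inl ⟨v, h, rfl⟩
    · exact Or.inr ⟨v, h, rfl⟩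

variable {E : Type u}

abbrev KRec (V : Type u) (Kf : Type) (Rd : ℕ) := (V × ℕ) × (Fin Rd → Kf)
abbrev NRec (V : Type u) := V × V × (V × ℕ)
abbrev BRec (V : Type u) (E : Type u) := E × (V × ℕ) × V × (V × ℕ)

/-- polynomial computed by the decoder -/
def dpoly (ν : V → Kf) (F : Finset V) (nbr : Finset (NRec V)) (χ : V × ℕ → Bool) (c : V) :
    Polynomial Kf :=
  (∏ v ∈ F, (Polynomial.X - Polynomial.C (ν v))) *
    ∏ r ∈ nbr.filter (fun r => r.1 = c ∧ χ r.2.2 = true), (Polynomial.X - Polynomial.C (ν r.2.1))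

def dtest {Rd : ℕ} (ν : V → Kf) (eid : E → ℕ) (α : Kf) (F : Finset V) (known : Finset (KRec V Kf Rd))
    (nbr : Finset (NRec V)) (bad : Finset (BRec V E)) (χ : V × ℕ → Bool) (c : V) : Kf :=
  (∑ r ∈ known.filter (fun r => r.1.1 = c),
    dchi χ r.1 * ∑ l : Fin Rd, (dpoly ν F nbr χ c).coeff l * r.2 l) +
  ∑ r ∈ bad.filter (fun r => r.2.1.1 = c),
    (b2k (χ r.2.1) + if r.2.2.2.1 = c then b2k (χ r.2.2.2) else 0) *
      α ^ eid r.1 * (dpoly ν F nbr χ c).eval (ν r.2.2.1)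

def live (fcell blk : Finset (V × ℕ)) (z : V × ℕ) : Prop :=
  (∃ b ∈ blk, b.1 = z.1 ∧ z.2 < b.2) ∧ z ∉ fcell

def Allow (fcell blk kp : Finset (V × ℕ)) (χ : V × ℕ → Bool) : Prop :=
  (∀ z, χ z = true → live fcell blk z) ∧ ∀ c i, (c, i + 1) ∉ kp → χ (c, i) = χ (c, i + 1)

def Pass {Rd : ℕ} (ν : V → Kf) (eid : E → ℕ) (α : Kf) (F : Finset V) (ps pt : V × ℕ)
    (known : Finset (KRec V Kf Rd)) (fcell blk : Finset (V × ℕ))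
    (nbr : Finset (NRec V)) (bad : Finset (BRec V E)) : Prop :=
  ∃ χ χ' : V × ℕ → Bool, Allow fcell blk (known.image fun r => r.1) χ ∧
    Allow fcell blk (known.image fun r => r.1) χ' ∧
    (∀ z, live fcell blk z → (χ z = true ∨ χ' z = true)) ∧
    (∀ z, ¬ (χ z = true ∧ χ' z = true)) ∧ χ ps = true ∧ χ' pt = true ∧
    ∀ b ∈ blk, dtest ν eid α F known nbr bad χ b.1 = 0 ∧ dtest ν eid α F known nbr bad χ' b.1 = 0

/-- allowed colourings are determined by the values at known positions -/
theorem Allow.ext {fcell blk kp : Finset (V × ℕ)} (h0 : ∀ b ∈ blk, (b.1, 0) ∈ kp)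
    {χ χ' : V × ℕ → Bool} (h : Allow fcell blk kp χ) (h' : Allow fcell blk kp χ')
    (he : ∀ z ∈ kp, χ z = χ' z) : χ = χ' := by
  funext z
  obtain ⟨c, i⟩ := z
  induction i with
  | zero =>
    by_cases hk : (c, 0) ∈ kp
    · exact he _ hk
    · have : ∀ χ : V × ℕ → Bool, Allow fcell blk kp χ → χ (c, 0) = false := by
        intro χ hχ
        by_contra hc
        obtain ⟨⟨b, hb, hb1, _⟩, _⟩ := hχ.1 (c, 0) (by simpa using hc)
        apply hk
        have := h0 b hb
        rwa [hb1] at this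
      rw [this _ h, this _ h']
  | succ i ih =>
    by_cases hk : (c, i + 1) ∈ kp
    · exact he _ hk
    · rw [← h.2 c i hk, ← h'.2 c i hk, ih]

section facts
variable {G : SimpleGraph V} {K : V → Finset V} {V0 S : Finset V} {Vis : ℕ}
variable {ιJ ιA ιB : Type} [Fintype ιJ] [Fintype ιA]
variable (H : Hier G K V0 S Vis) (tt : ιJ → Option V → ιA) (hh : ιJ → V → ιB)

def pos (x : V) : V × ℕ := (H.cl x, (H.W (H.cl x)).idxOf x)

theorem pos_lt (x : V) : (pos H x).2 < (H.W (H.cl x)).length := List.idxOf_lt_length_iff.2 (H.W_mem x)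

theorem pos_get (x : V) : (H.W (pos H x).1)[(pos H x).2]? = some x := by
  have h : (H.W (H.cl x)).idxOf x < (H.W (H.cl x)).length := pos_lt H x
  show (H.W (H.cl x))[(H.W (H.cl x)).idxOf x]? = some x
  rw [List.getElem?_eq_getElem h, List.getElem_idxOf]

theorem pos_inj : Function.Injective (pos H) := by
  intro x y h
  have h1 := pos_get H x
  rw [h, pos_get H y] at h1
  exact (Option.some.inj h1).symm

def occ (v : V) : Finset (V × ℕ) :=
  (univ ×ˢ range (Fintype.card V ^ 2)).filter fun z => (H.W z.1)[z.2]? = some v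

theorem mem_occ {v : V} {z : V × ℕ} : z ∈ occ H v ↔ (H.W z.1)[z.2]? = some v := by
  unfold occ
  simp only [mem_filter, mem_product, mem_univ, true_and, mem_range, and_iff_right_iff_imp]
  intro h
  obtain ⟨h1, _⟩ := List.getElem?_eq_some_iff.1 h
  exact h1.trans_le (H.W_len _)

def blkF (v : V) : Finset (V × ℕ) :=
  (H.R.filter fun c => v ∈ K c).image fun c => (c, (H.W c).length)

def fcellF (v : V) : Finset (V × ℕ) := if v ∈ S then ∅ else occ H v

def kpF (v : V) : Finset (V × ℕ) :=
  (fcellF H v ∪ (fcellF H v).image fun z => (z.1, z.2 + 1)) ∪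
    (blkF H v ∪ (blkF H v).image fun z => (z.1, 0))

def nbrF (v : V) : Finset (NRec V) :=
  (H.R.filter fun c => v ∈ K c).biUnion fun c => (nb G (K c)).image fun x => (c, x, pos H x)

def erec (e : Edg V ιJ ιA) : BRec V (Edg V ιJ ιA) :=
  (e, pos H (tail e), head H tt hh e, pos H (head H tt hh e))

def tailF (v : V) : Finset (BRec V (Edg V ιJ ιA)) :=
  ((univ : Finset (Edg V ιJ ιA)).filter fun e => pres H tt hh e ∧ isIn e ∧ tail e = v).image
    (erec H tt hh)

def typF (v : V) : Finset (BRec V (Edg V ιJ ιA)) :=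
  ((univ : Finset (Edg V ιJ ιA)).filter fun e => pres H tt hh e ∧
    ∃ c, etyp H tt hh e = some c ∧ v ∈ K c).image (erec H tt hh)

variable (Rd : ℕ) (ν : V → Kf) (eid : Edg V ιJ ιA → ℕ) (α : Kf)

def val (x : V) (l : Fin Rd) : Kf :=
  ∑ e ∈ (univ : Finset (Edg V ιJ ιA)).filter (fun e => pres H tt hh e ∧ H.cl (tail e) = H.cl x),
    ((if tail e = x then 1 else 0) + (if head H tt hh e = x then 1 else 0)) *
      α ^ eid e * ν (head H tt hh e) ^ (l : ℕ)

def cval (z : V × ℕ) (l : Fin Rd) : Kf := ∑ x ∈ univ.filter (fun x => pos H x = z),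
  val H tt hh Rd ν eid α x l

def Pvec (z : V × ℕ) (l : Fin Rd) : Kf := ∑ i ∈ range z.2, cval H tt hh Rd ν eid α (z.1, i) l

def knownF (v : V) : Finset (KRec V Kf Rd) :=
  (kpF H v).image fun z => (z, Pvec H tt hh Rd ν eid α z)

/-- weight of an edge -/
def wt (χ : V × ℕ → Bool) (c : V) (e : Edg V ιJ ιA) : Kf :=
  b2k (χ (pos H (tail e))) + if H.cl (head H tt hh e) = c then b2k (χ (pos H (head H tt hh e))) else 0

def qpoly (F : Finset V) (χ : V × ℕ → Bool) (c : V) : Polynomial Kf :=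
  ppoly ν F ((nb G (K c)).filter fun x => χ (pos H x) = true)

/-- the polynomial (in `α`) tested by the decoder -/
def Pol (F M : Finset V) (χ : V × ℕ → Bool) (c : V) : Polynomial Kf :=
  ∑ e ∈ (univ : Finset (Edg V ιJ ιA)).filter (goodE H tt hh F M c),
    Polynomial.C (wt H tt hh χ c e * (qpoly H ν F χ c).eval (ν (head H tt hh e))) *
      Polynomial.X ^ eid e

theorem Pol_eval (F M : Finset V) (χ : V × ℕ → Bool) (c : V) :
    (Pol H tt hh ν eid F M χ c).eval α =
    ∑ e ∈ (univ : Finset (Edg V ιJ ιA)).filter (goodE H tt hh F M c),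
      wt H tt hh χ c e * α ^ eid e * (qpoly H ν F χ c).eval (ν (head H tt hh e)) := by
  unfold Pol
  rw [Polynomial.eval_finset_sum]
  refine sum_congr rfl fun e _ => ?_
  simp only [Polynomial.eval_mul, Polynomial.eval_C, Polynomial.eval_pow, Polynomial.eval_X]
  ring

/-- all facts merged -/
def QP (M : Finset V) : Finset (V × ℕ) := M.biUnion (kpF H)

theorem mem_blk {M : Finset V} {b : V × ℕ} : b ∈ M.biUnion (blkF H) ↔
    b.1 ∈ H.R ∧ aff K M b.1 ∧ b.2 = (H.W b.1).length := by
  simp only [mem_biUnion, blkF, mem_image, mem_filter, aff]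
  constructor
  · rintro ⟨v, hv, c, ⟨hc, hvc⟩, rfl⟩
    exact ⟨hc, ⟨v, hv, hvc⟩, rfl⟩
  · rintro ⟨h1, ⟨v, hv, hvc⟩, h3⟩
    exact ⟨v, hv, b.1, ⟨h1, hvc⟩, Prod.ext rfl h3.symm⟩

theorem mem_fcell {F : Finset V} (hFS : Disjoint F S) {z : V × ℕ} : z ∈ F.biUnion (fcellF H) ↔
    ∃ v ∈ F, (H.W z.1)[z.2]? = some v := by
  simp only [mem_biUnion]
  refine exists_congr fun v => and_congr_right fun hv => ?_
  rw [fcellF, if_neg (disjoint_left.1 hFS hv), mem_occ]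

theorem live_iff {F M : Finset V} (hFS : Disjoint F S) {z : V × ℕ} :
    live (F.biUnion (fcellF H)) (M.biUnion (blkF H)) z ↔
      z.1 ∈ H.R ∧ aff K M z.1 ∧ ∃ w, (H.W z.1)[z.2]? = some w ∧ w ∉ F := by
  unfold live
  rw [mem_fcell H hFS]
  constructor
  · rintro ⟨⟨b, hb, h1, h2⟩, h3⟩
    rw [mem_blk] at hb
    rw [hb.2.2] at h2
    rw [h1] at hb h2
    refine ⟨hb.1, hb.2.1, _, List.getElem?_eq_getElem h2, fun hF => h3 ⟨_, hF, List.getElem?_eq_getElem h2⟩⟩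
  · rintro ⟨h1, h2, w, h3, h4⟩
    obtain ⟨h5, _⟩ := List.getElem?_eq_some_iff.1 h3
    refine ⟨⟨(z.1, (H.W z.1).length), (mem_blk H).2 ⟨h1, h2, rfl⟩, rfl, h5⟩, ?_⟩
    rintro ⟨v, hv, h6⟩
    rw [h3] at h6
    exact h4 (Option.some.inj h6 ▸ hv)

theorem known_sum {M : Finset V} (g : KRec V Kf Rd → Kf) (c : V) :
    ∑ r ∈ (M.biUnion (knownF H tt hh Rd ν eid α)).filter (fun r => r.1.1 = c), g r =
    ∑ z ∈ (QP H M).filter (fun z => z.1 = c), g (z, Pvec H tt hh Rd ν eid α z) := by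
  have e : (M.biUnion (knownF H tt hh Rd ν eid α)).filter (fun r => r.1.1 = c) =
      ((QP H M).filter (fun z => z.1 = c)).image fun z => (z, Pvec H tt hh Rd ν eid α z) := by
    unfold knownF QP
    ext r
    simp only [mem_filter, mem_biUnion, mem_image]
    constructor
    · rintro ⟨⟨v, hv, z, hz, rfl⟩, h⟩
      exact ⟨z, ⟨⟨v, hv, hz⟩, h⟩, rfl⟩
    · rintro ⟨z, ⟨⟨v, hv, hz⟩, h⟩, rfl⟩
      exact ⟨⟨v, hv, z, hz, rfl⟩, h⟩
  rw [e, sum_image]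
  intro a _ b _ h
  exact (Prod.ext_iff.1 h).1

theorem known_image {M : Finset V} :
    (M.biUnion (knownF H tt hh Rd ν eid α)).image (fun r => r.1) = QP H M := by
  unfold knownF QP
  ext z
  simp only [mem_image, mem_biUnion]
  constructor
  · rintro ⟨r, ⟨v, hv, z', hz', rfl⟩, rfl⟩
    exact ⟨v, hv, hz'⟩
  · rintro ⟨v, hv, hz⟩
    exact ⟨_, ⟨v, hv, z, hz, rfl⟩, rfl⟩

theorem dpoly_eq {F M : Finset V} (χ : V × ℕ → Bool) {c : V} (hc : c ∈ H.R) (ha : aff K M c) :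
    dpoly ν F (M.biUnion (nbrF H)) χ c = qpoly H ν F χ c := by
  unfold dpoly qpoly ppoly
  congr 1
  have e : (M.biUnion (nbrF H)).filter (fun r => r.1 = c ∧ χ r.2.2 = true) =
      ((nb G (K c)).filter fun x => χ (pos H x) = true).image fun x => (c, x, pos H x) := by
    ext r
    simp only [mem_filter, mem_biUnion, nbrF, mem_image]
    constructor
    · rintro ⟨⟨v, hv, c', ⟨_, _⟩, x, hx, rfl⟩, h, h'⟩
      simp only at h h'
      subst h
      exact ⟨x, ⟨hx, h'⟩, rfl⟩
    · rintro ⟨x, ⟨hx, h⟩, rfl⟩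
      obtain ⟨v, hv, hvc⟩ := ha
      exact ⟨⟨v, hv, c, ⟨hc, hvc⟩, x, hx, rfl⟩, rfl, h⟩
  rw [e, prod_image]
  intro a _ b _ h
  simpa using (Prod.ext_iff.1 (Prod.ext_iff.1 h).2).1

theorem bad_sum {F M : Finset V} (c : V) (g : BRec V (Edg V ιJ ιA) → Kf) :
    ∑ r ∈ (F.biUnion (tailF H tt hh) ∪ M.biUnion (typF H tt hh)).filter (fun r => r.2.1.1 = c), g r =
    ∑ e ∈ (univ : Finset (Edg V ιJ ιA)).filter (fun e => (pres H tt hh e ∧ H.cl (tail e) = c) ∧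
      ¬ goodE H tt hh F M c e), g (erec H tt hh e) := by
  have e : (F.biUnion (tailF H tt hh) ∪ M.biUnion (typF H tt hh)).filter (fun r => r.2.1.1 = c) =
      ((univ : Finset (Edg V ιJ ιA)).filter (fun e => (pres H tt hh e ∧ H.cl (tail e) = c) ∧
        ¬ goodE H tt hh F M c e)).image (erec H tt hh) := by
    ext r
    simp only [mem_filter, mem_union, mem_biUnion, tailF, typF, mem_image, mem_univ, true_and]
    constructor
    · rintro ⟨⟨v, hv, e, ⟨h1, h2, h3⟩, rfl⟩ | ⟨v, hv, e, ⟨h1, c', h2, h3⟩, rfl⟩, h⟩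
      · exact ⟨e, ⟨⟨h1, h⟩, fun hg => hg.2.2.2 h2 (h3 ▸ hv)⟩, rfl⟩
      · exact ⟨e, ⟨⟨h1, h⟩, fun hg => hg.2.2.1 ⟨c', h2, v, hv, h3⟩⟩, rfl⟩
    · rintro ⟨e, ⟨⟨h1, h2⟩, hg⟩, rfl⟩
      refine ⟨?_, h2⟩
      by_cases hb : badT K M (etyp H tt hh e)
      · obtain ⟨c', h3, v, hv, hvc⟩ := hb
        exact Or.inr ⟨v, hv, e, ⟨h1, c', h3, hvc⟩, rfl⟩
      · left
        by_contra hcon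
        refine hg ⟨h1, h2, hb, fun hi hF => hcon ⟨_, hF, e, ⟨h1, hi, rfl⟩, rfl⟩⟩
  rw [e, sum_image]
  intro a _ b _ h
  exact (Prod.ext_iff.1 h).1


theorem wt_sum (F : Finset V) (χ : V × ℕ → Bool) (c : V) (φ : Polynomial Kf) (hφ : φ.natDegree < Rd) :
    ∑ x ∈ univ.filter (fun x => H.cl x = c), b2k (χ (pos H x)) *
      ∑ l : Fin Rd, φ.coeff l * val H tt hh Rd ν eid α x l =
    ∑ e ∈ (univ : Finset (Edg V ιJ ιA)).filter (fun e => pres H tt hh e ∧ H.cl (tail e) = c),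
      wt H tt hh χ c e * α ^ eid e * φ.eval (ν (head H tt hh e)) := by
  have h1 : ∀ x ∈ univ.filter (fun x => H.cl x = c),
      b2k (χ (pos H x)) * ∑ l : Fin Rd, φ.coeff l * val H tt hh Rd ν eid α x l =
      ∑ e ∈ (univ : Finset (Edg V ιJ ιA)).filter (fun e => pres H tt hh e ∧ H.cl (tail e) = c),
        (((if tail e = x then b2k (χ (pos H x)) else 0) +
          (if head H tt hh e = x then b2k (χ (pos H x)) else 0)) *
          α ^ eid e * φ.eval (ν (head H tt hh e))) := by
    intro x hx
    have hx' : H.cl x = c := by simpa using hx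
    unfold val
    rw [hx']
    simp only [mul_sum]
    rw [sum_comm]
    refine sum_congr rfl fun e _ => ?_
    rw [← poly_sum φ Rd hφ, mul_sum]
    refine sum_congr rfl fun l _ => ?_
    split_ifs <;> ring
  rw [sum_congr rfl h1, sum_comm]
  refine sum_congr rfl fun e he => ?_
  have he' : H.cl (tail e) = c := by simp at he; exact he.2
  rw [← sum_mul, ← sum_mul]
  congr 2
  rw [sum_add_distrib, sum_ite_eq, sum_ite_eq]
  simp [wt, he']

theorem sum_cells {c : V} (g : V → Kf) (χ : V × ℕ → Bool) :
    ∑ i ∈ range (H.W c).length, b2k (χ (c, i)) * ∑ x ∈ univ.filter (fun x => pos H x = (c, i)), g x =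
    ∑ x ∈ univ.filter (fun x => H.cl x = c), b2k (χ (pos H x)) * g x := by
  have h1 : ∀ i ∈ range (H.W c).length, b2k (χ (c, i)) *
      ∑ x ∈ univ.filter (fun x => pos H x = (c, i)), g x =
      ∑ x ∈ univ.filter (fun x => H.cl x = c), if (pos H x).2 = i then b2k (χ (pos H x)) * g x else 0 := by
    intro i _
    rw [mul_sum, ← sum_filter, filter_filter]
    have : (univ.filter fun x => pos H x = (c, i)) = univ.filter fun x => H.cl x = c ∧ (pos H x).2 = i := by
      ext x
      simp only [mem_filter, mem_univ, true_and, Prod.ext_iff]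
      exact Iff.rfl
    rw [← this]
    refine sum_congr rfl fun x hx => ?_
    have : pos H x = (c, i) := by simpa using hx
    rw [this]
  rw [sum_congr rfl h1, sum_comm]
  refine sum_congr rfl fun x hx => ?_
  have hx' : H.cl x = c := by simpa using hx
  rw [sum_ite_eq, if_pos]
  rw [mem_range, ← hx']
  exact pos_lt H x

theorem QP_ends {M : Finset V} {c : V} (hc : c ∈ H.R) (ha : aff K M c) :
    (c, 0) ∈ QP H M ∧ (c, (H.W c).length) ∈ QP H M := by
  obtain ⟨v, hv, hvc⟩ := ha
  have hb : (c, (H.W c).length) ∈ blkF H v := by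
    unfold blkF
    exact mem_image.2 ⟨c, mem_filter.2 ⟨hc, hvc⟩, rfl⟩
  refine ⟨mem_biUnion.2 ⟨v, hv, ?_⟩, mem_biUnion.2 ⟨v, hv, ?_⟩⟩
  · unfold kpF
    exact mem_union_right _ (mem_union_right _ (mem_image.2 ⟨_, hb, rfl⟩))
  · unfold kpF
    exact mem_union_right _ (mem_union_left _ hb)

theorem QP_le {M : Finset V} {z : V × ℕ} (h : z ∈ QP H M) : z.2 ≤ (H.W z.1).length := by
  obtain ⟨v, _, hz⟩ := mem_biUnion.1 h
  have hf : ∀ z ∈ fcellF H v, z.2 < (H.W z.1).length := by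
    intro z hz
    unfold fcellF at hz
    split_ifs at hz
    · simp at hz
    · exact (List.getElem?_eq_some_iff.1 ((mem_occ H).1 hz)).1
  have hb : ∀ z ∈ blkF H v, z.2 = (H.W z.1).length := by
    intro z hz
    obtain ⟨c, _, rfl⟩ := mem_image.1 hz
    rfl
  unfold kpF at hz
  simp only [mem_union, mem_image] at hz
  rcases hz with (hz | ⟨z', hz, rfl⟩) | (hz | ⟨z', hz, rfl⟩)
  · exact (hf z hz).le
  · exact hf z' hz
  · exact (hb z hz).le
  · exact Nat.zero_le _

theorem dtest_eq (h2 : ∀ a : Kf, a + a = 0) {F M : Finset V} (hFS : Disjoint F S)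
    {χ : V × ℕ → Bool}
    (hχ : Allow (F.biUnion (fcellF H)) (M.biUnion (blkF H)) (QP H M) χ) {c : V} (hc : c ∈ H.R)
    (ha : aff K M c) (hdeg : F.card + (nb G (K c)).card < Rd) :
    dtest ν eid α F (M.biUnion (knownF H tt hh Rd ν eid α)) (M.biUnion (nbrF H))
      (F.biUnion (tailF H tt hh) ∪ M.biUnion (typF H tt hh)) χ c =
    (Pol H tt hh ν eid F M χ c).eval α := by
  unfold dtest
  rw [dpoly_eq H ν χ hc ha, known_sum, bad_sum, Pol_eval]
  set φ := qpoly H ν F χ c with hφ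
  have hφd : φ.natDegree < Rd := by
    refine (ppoly_deg ν F _).trans_lt (lt_of_le_of_lt ?_ hdeg)
    exact Nat.add_le_add_left (card_filter_le _ _) _
  -- known part
  have hlen : χ (c, (H.W c).length) = false := by
    by_contra h
    have := (live_iff H hFS).1 (hχ.1 (c, (H.W c).length) (by simpa using h))
    obtain ⟨_, _, w, hw, _⟩ := this
    simp at hw
  have hk : ∑ z ∈ (QP H M).filter (fun z => z.1 = c), dchi χ z *
      ∑ l : Fin Rd, φ.coeff l * Pvec H tt hh Rd ν eid α z l =
      ∑ e ∈ (univ : Finset (Edg V ιJ ιA)).filter (fun e => pres H tt hh e ∧ H.cl (tail e) = c),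
        wt H tt hh χ c e * α ^ eid e * φ.eval (ν (head H tt hh e)) := by
    rw [← wt_sum H tt hh Rd ν eid α F χ c φ hφd, ← sum_cells]
    have hP : ∀ q, ∑ l : Fin Rd, φ.coeff l * Pvec H tt hh Rd ν eid α (c, q) l =
        ∑ i ∈ range q, ∑ x ∈ univ.filter (fun x => pos H x = (c, i)),
          ∑ l : Fin Rd, φ.coeff l * val H tt hh Rd ν eid α x l := by
      intro q
      unfold Pvec cval
      simp only [mul_sum]
      rw [sum_comm]
      refine sum_congr rfl fun i _ => ?_
      rw [sum_comm]
    have hab := abel h2 χ c (fun i => ∑ x ∈ univ.filter (fun x => pos H x = (c, i)),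
          ∑ l : Fin Rd, φ.coeff l * val H tt hh Rd ν eid α x l) (H.W c).length
    rw [hlen] at hab
    simp only [b2k, Bool.false_eq_true, if_false, zero_mul, add_zero] at hab
    simp only [b2k]
    rw [← hab]
    have hsub : (QP H M).filter (fun z => z.1 = c) ⊆ (range ((H.W c).length + 1)).image fun q => (c, q) := by
      intro z hz
      rw [mem_filter] at hz
      have := QP_le H hz.1
      refine mem_image.2 ⟨z.2, mem_range.2 ?_, Prod.ext hz.2.symm rfl⟩
      rw [← hz.2]; omega
    rw [sum_subset hsub]
    · rw [sum_image (by intro a _ b _ h; exact (Prod.ext_iff.1 h).2)]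
      refine sum_congr rfl fun q _ => ?_
      rw [hP]
    · intro z hz hz'
      obtain ⟨q, hq, rfl⟩ := mem_image.1 hz
      have hq' : (c, q) ∉ QP H M := fun h => hz' (mem_filter.2 ⟨h, rfl⟩)
      cases q with
      | zero => exact absurd (QP_ends H hc ha).1 hq'
      | succ q =>
        have e : (dchi χ (c, q + 1) : Kf) = b2k (χ (c, q)) + b2k (χ (c, q + 1)) := rfl
        rw [e, hχ.2 c q hq', h2, zero_mul]
  rw [hk]
  have hsplit := sum_filter_add_sum_filter_not ((univ : Finset (Edg V ιJ ιA)).filter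
    (fun e => pres H tt hh e ∧ H.cl (tail e) = c)) (goodE H tt hh F M c)
    (fun e => wt H tt hh χ c e * α ^ eid e * φ.eval (ν (head H tt hh e)))
  rw [filter_filter, filter_filter] at hsplit
  rw [← hsplit]
  have e1 : (univ : Finset (Edg V ιJ ιA)).filter (fun e => (pres H tt hh e ∧ H.cl (tail e) = c) ∧
      goodE H tt hh F M c e) = univ.filter (goodE H tt hh F M c) := by
    ext e
    simp only [mem_filter, mem_univ, true_and, and_iff_right_iff_imp]
    exact fun h => ⟨h.1, h.2.1⟩
  rw [e1, add_assoc]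
  refine (add_eq_left).2 ?_
  exact h2 _


/-- connected in `G - F` ⟹ not passing, on the good event -/
theorem sound (h2 : ∀ a : Kf, a + a = 0) (hν : Function.Injective ν) (hid : Function.Injective eid)
    {F M : Finset V} (hFS : Disjoint F S) (hFM : F ⊆ M) {s t : V} (hs : s ∈ M) (ht : t ∈ M)
    (hsF : s ∉ F) (htF : t ∉ F) (hiso : Iso tt hh K V0 F M)
    (hdeg : ∀ c ∈ H.R, F.card + (nb G (K c)).card < Rd)
    (hα : ∀ χ, Allow (F.biUnion (fcellF H)) (M.biUnion (blkF H)) (QP H M) χ → ∀ c,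
      Pol H tt hh ν eid F M χ c ≠ 0 → (Pol H tt hh ν eid F M χ c).eval α ≠ 0)
    (hst : (del G F).Reachable s t) :
    ¬ Pass ν eid α F (pos H s) (pos H t) (M.biUnion (knownF H tt hh Rd ν eid α))
      (F.biUnion (fcellF H)) (M.biUnion (blkF H)) (M.biUnion (nbrF H))
      (F.biUnion (tailF H tt hh) ∪ M.biUnion (typF H tt hh)) := by
  rintro ⟨χ, χ', hA, hA', hcov, hdis, hps, hpt, htest⟩
  rw [known_image] at hA hA'
  have hcov' : ∀ x, x ∉ F → aff K M (H.cl x) → χ (pos H x) = true ∨ χ' (pos H x) = true := by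
    intro x hx ha
    exact hcov _ ((live_iff H hFS).2 ⟨H.cl_mem x, ha, x, pos_get H x, hx⟩)
  -- test vanishes
  have hvan : ∀ χ₁, Allow (F.biUnion (fcellF H)) (M.biUnion (blkF H)) (QP H M) χ₁ →
      (∀ b ∈ M.biUnion (blkF H), dtest ν eid α F (M.biUnion (knownF H tt hh Rd ν eid α))
        (M.biUnion (nbrF H)) (F.biUnion (tailF H tt hh) ∪ M.biUnion (typF H tt hh)) χ₁ b.1 = 0) →
      ∀ e, goodE H tt hh F M (H.cl (tail e)) e → aff K M (H.cl (tail e)) →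
        wt H tt hh χ₁ (H.cl (tail e)) e * (qpoly H ν F χ₁ (H.cl (tail e))).eval (ν (head H tt hh e)) = 0 := by
    intro χ₁ h1 h3 e he ha
    set c := H.cl (tail e) with hc
    have hcR : c ∈ H.R := H.cl_mem _
    have h4 := h3 (c, (H.W c).length) ((mem_blk H).2 ⟨hcR, ha, rfl⟩)
    rw [dtest_eq H tt hh Rd ν eid α h2 hFS h1 hcR ha (hdeg c hcR)] at h4
    have h5 : Pol H tt hh ν eid F M χ₁ c = 0 := by
      by_contra h; exact hα χ₁ h1 c h h4
    have h6 : (Pol H tt hh ν eid F M χ₁ c).coeff (eid e) = 0 := by rw [h5]; simp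
    unfold Pol at h6
    rw [Polynomial.finset_sum_coeff] at h6
    simp only [Polynomial.coeff_C_mul, Polynomial.coeff_X_pow, hid.eq_iff, mul_ite, mul_one,
      mul_zero] at h6
    rw [sum_ite_eq, if_pos (by simpa using he)] at h6
    exact h6
  have hv1 := hvan χ hA fun b hb => (htest b hb).1
  have hv2 := hvan χ' hA' fun b hb => (htest b hb).2
  have hside : χ (pos H s) ≠ χ (pos H t) := by
    intro h
    exact hdis _ ⟨h ▸ hps, hpt⟩
  obtain ⟨x, y, σ, hx, hy, hax, hay, hσ, hr, hxy⟩ :=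
    crossing H hFM hs ht hsF htF (fun x => χ (pos H x)) hst hside
  by_cases hcl : H.cl x = H.cl y
  · obtain ⟨e, he, hi, hF, hX⟩ := cross_good H tt hh hiso (fun x => χ (pos H x) = true) hx hy hσ hr hcl
      (by intro h; exact hxy (Bool.eq_iff_iff.2 h))
    have hcle := pres_cl_in H tt hh he.1 hi
    have ht : H.cl (tail e) = H.cl x := he.2.1
    have h7 := hv1 e (by rw [ht]; exact he) (by rw [ht]; exact hax)
    rcases mul_eq_zero.1 h7 with h | h
    · unfold wt at h
      rw [if_pos hcle.symm] at h
      unfold b2k at h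
      by_cases a1 : χ (pos H (tail e)) = true <;> by_cases a2 : χ (pos H (head H tt hh e)) = true <;>
        simp_all
    · unfold qpoly at h
      rw [ppoly_eval ν hν] at h
      rcases h with h | h
      · exact hF h
      · rw [mem_filter, mem_nb, hcle] at h
        exact h.1.1 (H.mem_K _)
  · -- cross edge
    have hcross : ∀ x y : V, x ∉ F → y ∉ F → aff K M (H.cl x) → Rel H σ x y →
        H.cl x ≠ H.cl y → y ∈ nb G (K (H.cl x)) →
        χ (pos H x) ≠ χ (pos H y) → aff K M (H.cl y) → False := by
      intro x y hx hy hax hr hcl hnb hxy hay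
      have hp : pres H tt hh (Sum.inr (x, y, σ)) := ⟨hnb, hcl, hr⟩
      have hg : goodE H tt hh F M (H.cl x) (Sum.inr (x, y, σ)) := ⟨hp, rfl, hσ, fun h => absurd h id⟩
      have key : ∀ χ₁ : V × ℕ → Bool, χ₁ (pos H x) = true → χ₁ (pos H y) = false →
          wt H tt hh χ₁ (H.cl x) (Sum.inr (x, y, σ)) *
            (qpoly H ν F χ₁ (H.cl x)).eval (ν (head H tt hh (Sum.inr (x, y, σ)))) ≠ 0 := by
        intro χ₁ h1 h3 h
        rcases mul_eq_zero.1 h with h | h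
        · simp [wt, tail, head, h1, h3, b2k] at h
        · unfold qpoly at h
          rw [ppoly_eval ν hν] at h
          rcases h with h | h
          · exact hy h
          · rw [mem_filter] at h
            have := h.2
            simp only [head] at this
            rw [h3] at this
            cases this
      by_cases h1 : χ (pos H x) = true
      · refine key χ h1 ?_ (hv1 _ hg hax)
        by_contra h3
        exact hxy (h1.trans (by simpa using h3 : χ (pos H y) = true).symm)
      · have h4 : χ (pos H y) = true := by
          by_contra h3
          exact hxy (by simp at h1 h3; rw [h1, h3])
        have h5 := (hcov' x hx hax).resolve_left h1
        refine key χ' h5 ?_ (hv2 _ hg hax)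
        by_contra h3
        exact hdis (pos H y) ⟨h4, by simpa using h3⟩
    rcases hr.cases with h | h | h
    · exact hcl h
    · exact hcross x y hx hy hax hr hcl h hxy hay
    · exact hcross y x hy hx hay hr.symm (Ne.symm hcl) h hxy.symm hax

theorem complete (h2 : ∀ a : Kf, a + a = 0) (hν : Function.Injective ν)
    (hK : ∀ c, ∀ x ∈ K c, ∀ y ∈ K c, (rst G (K c)).Reachable x y)
    {F M : Finset V} (hFS : Disjoint F S) (hFM : F ⊆ M) {s t : V} (hs : s ∈ M) (ht : t ∈ M)
    (hsF : s ∉ F) (htF : t ∉ F)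
    (hdeg : ∀ c ∈ H.R, F.card + (nb G (K c)).card < Rd)
    (hst : ¬ (del G F).Reachable s t) :
    Pass ν eid α F (pos H s) (pos H t) (M.biUnion (knownF H tt hh Rd ν eid α))
      (F.biUnion (fcellF H)) (M.biUnion (blkF H)) (M.biUnion (nbrF H))
      (F.biUnion (tailF H tt hh) ∪ M.biUnion (typF H tt hh)) := by
  have haffM : ∀ x ∈ M, aff K M (H.cl x) := fun x hx => ⟨x, hx, H.mem_K x⟩
  -- colouring by a union of components
  set col : (V → Prop) → V × ℕ → Bool := fun X z => decide (z.1 ∈ H.R ∧ aff K M z.1 ∧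
    ∃ w, (H.W z.1)[z.2]? = some w ∧ w ∉ F ∧ X w) with hcol
  have hpos : ∀ X x, col X (pos H x) = true ↔ aff K M (H.cl x) ∧ x ∉ F ∧ X x := by
    intro X x
    rw [hcol]
    simp only [decide_eq_true_eq, pos_get, Option.some.injEq]
    constructor
    · rintro ⟨_, h, w, rfl, h'⟩; exact ⟨h, h'⟩
    · rintro ⟨h, h'⟩; exact ⟨H.cl_mem x, h, x, rfl, h'⟩
  have hallow : ∀ X : V → Prop, (∀ x y, (del G F).Reachable x y → (X x ↔ X y)) →
      Allow (F.biUnion (fcellF H)) (M.biUnion (blkF H)) (QP H M) (col X) := by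
    intro X hX
    refine ⟨?_, ?_⟩
    · intro z hz
      rw [live_iff H hFS]
      simp only [hcol, decide_eq_true_eq] at hz
      obtain ⟨h1, h3, w, h4, h5, _⟩ := hz
      exact ⟨h1, h3, w, h4, h5⟩
    · intro c i hi
      rw [Bool.eq_iff_iff]
      simp only [hcol, decide_eq_true_eq]
      refine and_congr_right fun hc => and_congr_right fun ha => ?_
      have hne : i + 1 ≠ (H.W c).length := fun h => hi (h ▸ (QP_ends H hc ha).2)
      have hF : ∀ v ∈ F, (H.W c)[i]? ≠ some v ∧ (H.W c)[i+1]? ≠ some v := by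
        intro v hv
        have hvS := disjoint_left.1 hFS hv
        constructor
        · intro h
          apply hi
          refine mem_biUnion.2 ⟨v, hFM hv, mem_union_left _ (mem_union_right _ (mem_image.2 ⟨(c, i), ?_, rfl⟩))⟩
          unfold fcellF
          rw [if_neg hvS, mem_occ]; exact h
        · intro h
          apply hi
          refine mem_biUnion.2 ⟨v, hFM hv, mem_union_left _ (mem_union_left _ ?_)⟩
          unfold fcellF
          rw [if_neg hvS, mem_occ]; exact h
      by_cases hl : i + 1 < (H.W c).length
      · have e1 := List.getElem?_eq_getElem (l := H.W c) (i := i) (by omega)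
        have e2 := List.getElem?_eq_getElem hl
        have hadj := List.isChain_iff_getElem.1 (H.W_chain c) i hl
        rw [e1, e2]
        rw [e1, e2] at hF
        have f1 : (H.W c)[i] ∉ F := fun h => (hF _ h).1 rfl
        have f2 : (H.W c)[i+1] ∉ F := fun h => (hF _ h).2 rfl
        have hadj' : (del G F).Adj (H.W c)[i] (H.W c)[i+1] := ⟨hadj, f1, f2⟩
        have := hX _ _ hadj'.reachable
        constructor
        · rintro ⟨w, hw, h⟩
          cases hw
          exact ⟨_, rfl, f2, this.1 h.2⟩
        · rintro ⟨w, hw, h⟩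
          cases hw
          exact ⟨_, rfl, f1, this.2 h.2⟩
      · rw [List.getElem?_eq_none (by omega), List.getElem?_eq_none (by omega)]
  have htest : ∀ X : V → Prop, (∀ x y, (del G F).Reachable x y → (X x ↔ X y)) →
      ∀ b ∈ M.biUnion (blkF H), dtest ν eid α F (M.biUnion (knownF H tt hh Rd ν eid α))
        (M.biUnion (nbrF H)) (F.biUnion (tailF H tt hh) ∪ M.biUnion (typF H tt hh)) (col X) b.1 = 0 := by
    intro X hX b hb
    obtain ⟨hcR, ha, _⟩ := (mem_blk H).1 hb
    rw [dtest_eq H tt hh Rd ν eid α h2 hFS (hallow X hX) hcR ha (hdeg _ hcR), Pol_eval]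
    refine sum_eq_zero fun e he => ?_
    have hg : goodE H tt hh F M b.1 e := by simpa using he
    obtain ⟨hp, hct, hσ, htF⟩ := hg
    have hrel := pres_rel H tt hh hp
    by_cases hhF : head H tt hh e ∈ F
    · have : (qpoly H ν F (col X) b.1).eval (ν (head H tt hh e)) = 0 :=
        (ppoly_eval ν hν _ _ _).2 (Or.inl hhF)
      rw [this, mul_zero]
    by_cases hi : isIn e
    · have hcl := pres_cl_in H tt hh hp hi
      have hre := hX _ _ (valid_reach H hK hFM (htF hi) hhF hσ hrel)
      have e1 : col X (pos H (tail e)) = col X (pos H (head H tt hh e)) := by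
        rw [Bool.eq_iff_iff, hpos, hpos, hcl, hre]
        simp [htF hi, hhF]
      have : wt H tt hh (col X) b.1 e = (0 : Kf) := by
        unfold wt
        rw [if_pos (hcl ▸ hct), e1, h2]
      rw [this]; ring
    · obtain ⟨hcl, hnb⟩ := pres_cl_cr H tt hh hp hi
      by_cases hc : col X (pos H (tail e)) = true
      · obtain ⟨_, htF', hXt⟩ := (hpos X _).1 hc
        have hre := hX _ _ (valid_reach H hK hFM htF' hhF hσ hrel)
        have : (qpoly H ν F (col X) b.1).eval (ν (head H tt hh e)) = 0 := by
          refine (ppoly_eval ν hν _ _ _).2 (Or.inr (mem_filter.2 ⟨hct ▸ hnb, ?_⟩))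
          rw [hpos]
          refine ⟨?_, hhF, hre.1 hXt⟩
          obtain ⟨v, hv, hvK⟩ := ha
          exact ⟨v, hv, H.nb_sup _ hcR _ (hct ▸ hnb) hvK⟩
        rw [this, mul_zero]
      · have : wt H tt hh (col X) b.1 e = (0 : Kf) := by
          unfold wt
          rw [if_neg (fun h => hcl (hct.trans h.symm))]
          simp [b2k, hc]
        rw [this]; ring
  have hX1 : ∀ x y, (del G F).Reachable x y → ((del G F).Reachable s x ↔ (del G F).Reachable s y) :=
    fun x y h => ⟨fun h' => h'.trans h, fun h' => h'.trans h.symm⟩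
  have hX2 : ∀ x y, (del G F).Reachable x y → (¬ (del G F).Reachable s x ↔ ¬ (del G F).Reachable s y) :=
    fun x y h => not_congr (hX1 x y h)
  refine ⟨col fun x => (del G F).Reachable s x, col fun x => ¬ (del G F).Reachable s x,
    ?_, ?_, ?_, ?_, ?_, ?_, fun b hb => ⟨htest _ hX1 b hb, htest _ hX2 b hb⟩⟩
  · rw [known_image]; exact hallow _ hX1
  · rw [known_image]; exact hallow _ hX2
  · intro z hz
    obtain ⟨h1, h3, w, h4, h5⟩ := (live_iff H hFS).1 hz
    simp only [hcol, decide_eq_true_eq]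
    by_cases h : (del G F).Reachable s w
    · exact Or.inl ⟨h1, h3, w, h4, h5, h⟩
    · exact Or.inr ⟨h1, h3, w, h4, h5, h⟩
  · rintro z ⟨h1, h3⟩
    simp only [hcol, decide_eq_true_eq] at h1 h3
    obtain ⟨_, _, w, h4, _, h5⟩ := h1
    obtain ⟨_, _, w', h6, _, h7⟩ := h3
    rw [h4] at h6
    cases h6
    exact h7 h5
  · exact (hpos _ _).2 ⟨haffM s hs, hsF, SimpleGraph.Reachable.refl _⟩
  · exact (hpos _ _).2 ⟨haffM t ht, htF, hst⟩

end facts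
end alg
end
end VFL

namespace VFL
set_option linter.all false
set_option autoImplicit false
open scoped Classical
open Finset
noncomputable section
universe u v

/-! ### Section 7: uniform probability -/

section prob
variable {X : Type u} [Fintype X] {Y : Type v} [Fintype Y]

def pr (P : X → Prop) : ℝ := ((univ.filter P).card : ℝ) / Fintype.card X

theorem pr_nonneg (P : X → Prop) : 0 ≤ pr P := by unfold pr; positivity

theorem pr_mono {P Q : X → Prop} (h : ∀ x, P x → Q x) : pr P ≤ pr Q := by
  unfold pr
  gcongr
  intro hx
  exact h _ hx

theorem pr_congr {P Q : X → Prop} (h : ∀ x, P x ↔ Q x) : pr P = pr Q := by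
  have : P = Q := by funext x; exact propext (h x)
  rw [this]

theorem pr_le_one (P : X → Prop) : pr P ≤ 1 := by
  unfold pr
  apply div_le_one_of_le₀
  · exact_mod_cast card_le_univ _
  · positivity

theorem pr_true [Nonempty X] : pr (fun _ : X => True) = 1 := by
  unfold pr
  have : (Fintype.card X : ℝ) ≠ 0 := by exact_mod_cast Fintype.card_ne_zero
  simp [this]

theorem pr_false : pr (fun _ : X => False) = 0 := by
  unfold pr
  simp

theorem pr_add_not (P Q : X → Prop) : pr Q = pr (fun x => P x ∧ Q x) + pr (fun x => ¬ P x ∧ Q x) := by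
  unfold pr
  rw [← add_div, ← Nat.cast_add]
  congr 2
  rw [← card_filter_add_card_filter_not (s := univ.filter Q) P, filter_filter, filter_filter]
  congr 2
  · ext x; simp [and_comm]
  · ext x; simp [and_comm]

theorem pr_or (P Q : X → Prop) : pr (fun x => P x ∨ Q x) ≤ pr P + pr Q := by
  unfold pr
  rw [← add_div, ← Nat.cast_add]
  gcongr
  refine le_trans (card_le_card (t := univ.filter P ∪ univ.filter Q) ?_) (card_union_le _ _)
  intro x hx
  simpa using hx

theorem pr_ex {ι : Type*} (s : Finset ι) (P : ι → X → Prop) :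
    pr (fun x => ∃ i ∈ s, P i x) ≤ ∑ i ∈ s, pr (P i) := by
  induction s using Finset.induction_on with
  | empty => simp [pr]
  | insert a s ha ih =>
    rw [sum_insert ha]
    refine le_trans (le_trans (pr_mono ?_) (pr_or (P a) (fun x => ∃ i ∈ s, P i x))) ?_
    · rintro x ⟨i, hi, h⟩
      rcases mem_insert.1 hi with rfl | hi
      · exact Or.inl h
      · exact Or.inr ⟨i, hi, h⟩
    · gcongr

theorem pr_ex_le {ι : Type*} (s : Finset ι) (P : ι → X → Prop) (ε : ℝ) (h : ∀ i ∈ s, pr (P i) ≤ ε) :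
    pr (fun x => ∃ i ∈ s, P i x) ≤ s.card * ε := by
  refine (pr_ex s P).trans ((sum_le_sum h).trans ?_)
  simp

theorem pr_prod (P : X → Prop) (Q : Y → Prop) : pr (fun z : X × Y => P z.1 ∧ Q z.2) = pr P * pr Q := by
  unfold pr
  rw [Fintype.card_prod, div_mul_div_comm, ← Nat.cast_mul, ← Nat.cast_mul, ← card_product]
  congr 3
  ext z; simp

theorem pr_fst {P : X × Y → Prop} {ε : ℝ} (hε : 0 ≤ ε) (h : ∀ x, pr (fun y => P (x, y)) ≤ ε) : pr P ≤ ε := by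
  unfold pr at *
  have e : (univ.filter P).card = ∑ x : X, (univ.filter fun y => P (x, y)).card := by
    rw [← card_sigma]
    refine card_nbij' (fun z => ⟨z.1, z.2⟩) (fun z => (z.1, z.2)) ?_ ?_ ?_ ?_
    · intro z hz; simpa using hz
    · intro z hz; simpa using hz
    · intro z hz; rfl
    · intro z hz; rfl
  rcases isEmpty_or_nonempty X with hX | hX
  · rw [e]; simp [hε]
  rcases isEmpty_or_nonempty Y with hY | hY
  · rw [e]; simp [hε]
  have hx : (0:ℝ) < Fintype.card X := by exact_mod_cast Fintype.card_pos
  have hy : (0:ℝ) < Fintype.card Y := by exact_mod_cast Fintype.card_pos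
  rw [Fintype.card_prod, div_le_iff₀ (by push_cast; positivity), e]
  push_cast
  calc (∑ x : X, ((univ.filter fun y => P (x, y)).card : ℝ)) ≤ ∑ x : X, ε * Fintype.card Y := by
        refine sum_le_sum fun x _ => ?_
        have := h x
        rwa [div_le_iff₀ hy] at this
    _ = _ := by simp; ring

theorem pr_equiv (e : X ≃ Y) (P : Y → Prop) : pr (fun x => P (e x)) = pr P := by
  unfold pr
  rw [Fintype.card_congr e]
  congr 2
  refine card_bij (fun x _ => e x) ?_ ?_ ?_
  · intro x hx; simpa using hx
  · intro a _ b _ h; exact e.injective h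
  · intro y hy; exact ⟨e.symm y, by simpa using hy, by simp⟩

theorem pr_snd {P : X × Y → Prop} {ε : ℝ} (hε : 0 ≤ ε) (h : ∀ y, pr (fun x => P (x, y)) ≤ ε) : pr P ≤ ε := by
  rw [← pr_equiv (Equiv.prodComm Y X) P]
  exact pr_fst hε h

theorem pr_pi {ι : Type*} [Fintype ι] [DecidableEq ι] (B : ι → X → Prop) :
    pr (fun ω : ι → X => ∀ j, B j (ω j)) = ∏ j, pr (B j) := by
  unfold pr
  rw [prod_div_distrib]
  congr 1
  · rw [← Nat.cast_prod, ← Fintype.card_piFinset]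
    congr 2
    ext ω; simp
  · simp

theorem pr_pi_pow {J : ℕ} (B : X → Prop) : pr (fun ω : Fin J → X => ∀ j, B (ω j)) = pr B ^ J := by
  rw [pr_pi (fun _ => B)]; simp

theorem pr_pi_one {J : ℕ} [Nonempty X] (B : X → Prop) (h : Fin J) :
    pr (fun ω : Fin J → X => B (ω h)) = pr B := by
  have := pr_pi (X := X) (fun j : Fin J => fun x => j = h → B x)
  rw [prod_eq_single h] at this
  · simp only [forall_eq, forall_const] at this
    exact this
  · intro j _ hj
    simp only [hj, false_imp_iff]
    exact pr_true
  · simp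

/-- uniform coordinate -/
theorem pr_coord {W : Type u} [Fintype W] [DecidableEq W] {m : ℕ} (x : W) (g : (W → Fin m) → Fin m)
    (Q : (W → Fin m) → Prop) (hg : ∀ h a, g (Function.update h x a) = g h)
    (hQ : ∀ h a, Q (Function.update h x a) ↔ Q h) :
    pr (fun h => h x = g h ∧ Q h) = pr Q / m := by
  rcases Nat.eq_zero_or_pos m with rfl | hm
  · haveI : IsEmpty (W → Fin 0) := ⟨fun h => (h x).elim0⟩
    simp [pr]
  have key : (univ.filter Q).card = (univ.filter fun h => h x = g h ∧ Q h).card * m := by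
    have e : ((univ.filter fun h => h x = g h ∧ Q h) ×ˢ (univ : Finset (Fin m))).card =
        (univ.filter fun h => h x = g h ∧ Q h).card * m := by
      rw [card_product, card_univ, Fintype.card_fin]
    rw [← e]
    refine card_nbij' (fun h => (Function.update h x (g h), h x))
      (fun z => Function.update z.1 x z.2) ?_ ?_ ?_ ?_
    · intro h hh
      simp at hh
      simp [hg, hQ, hh]
    · rintro ⟨h, a⟩ hh
      simp at hh
      simp [hQ, hh]
    · intro h hh
      simp
    · rintro ⟨h, a⟩ hh
      simp at hh
      simp [hg, ← hh.1]
  unfold pr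
  rw [key]
  have : (m : ℝ) ≠ 0 := by positivity
  push_cast
  field_simp
  congr!

variable {W : Type u} [Fintype W] [DecidableEq W] {m : ℕ}

theorem pr_hit [NeZero m] (v : W) (a : Fin m) : pr (fun h : W → Fin m => h v = a) = 1 / m := by
  have := pr_coord (W := W) v (fun _ => a) (fun _ => True) (by simp) (by simp)
  rw [pr_true] at this
  rw [← this]
  exact pr_congr (by simp)

theorem pr_avoid [NeZero m] (N : Finset W) (a : Fin m) :
    pr (fun h : W → Fin m => ∀ v ∈ N, h v ≠ a) = (1 - 1 / (m : ℝ)) ^ N.card := by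
  induction N using Finset.induction_on with
  | empty => simp [pr_true]
  | insert w N hw ih =>
    have h1 := pr_coord (W := W) w (fun _ => a) (fun h => ∀ v ∈ N, h v ≠ a) (by simp) (by
      intro h b
      refine forall₂_congr fun v hv => ?_
      rw [Function.update_of_ne (by rintro rfl; exact hw hv)])
    have h2 := pr_add_not (fun h : W → Fin m => h w = a) (fun h => ∀ v ∈ N, h v ≠ a)
    rw [h1] at h2
    rw [card_insert_of_notMem hw, pow_succ, ← ih]
    have h3 : pr (fun h : W → Fin m => ∀ v ∈ insert w N, h v ≠ a) =
        pr (fun h : W → Fin m => ¬ h w = a ∧ ∀ v ∈ N, h v ≠ a) := pr_congr (by simp)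
    rw [h3]
    linear_combination -h2

theorem pr_eq2 [NeZero m] {x y : W} (hxy : x ≠ y) : pr (fun h : W → Fin m => h x = h y) = 1 / m := by
  have := pr_coord (W := W) (m := m) x (fun h => h y) (fun _ => True)
    (by intro h a; rw [Function.update_of_ne hxy.symm]) (by simp)
  rw [pr_true] at this
  rw [← this]
  exact pr_congr (by simp)

theorem pr_eq3 [NeZero m] {x y v : W} (hxy : x ≠ y) (hvx : v ≠ x) (hvy : v ≠ y) :
    pr (fun h : W → Fin m => h v = h x ∧ h x = h y) = 1 / m / m := by
  rw [pr_coord (W := W) (m := m) v (fun h => h x) (fun h => h x = h y), pr_eq2 hxy]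
  · intro h a; rw [Function.update_of_ne hvx.symm]
  · intro h a; rw [Function.update_of_ne hvx.symm, Function.update_of_ne hvy.symm]

/-- isolation of a pair -/
theorem pr_pair {f : ℕ} (hf : 1 ≤ f) (F : Finset W) (hF : F.card ≤ f) {x y : W} (hxy : x ≠ y)
    (hx : x ∉ F) (hy : y ∉ F) :
    1 / (4 * f : ℝ) ≤ pr (fun h : W → Fin (2 * f) => h x = h y ∧ ∀ v ∈ F, h v ≠ h x) := by
  haveI : NeZero (2 * f) := ⟨by omega⟩
  have h1 := pr_add_not (fun h : W → Fin (2 * f) => ∃ v ∈ F, h v = h x) (fun h => h x = h y)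
  rw [pr_eq2 hxy] at h1
  have h2 : pr (fun h : W → Fin (2 * f) => (∃ v ∈ F, h v = h x) ∧ h x = h y) ≤
      F.card * (1 / (2 * f : ℕ) / (2 * f : ℕ)) := by
    refine le_trans (pr_mono ?_) (pr_ex_le F (fun v h => h v = h x ∧ h x = h y) _ ?_)
    · rintro h ⟨⟨v, hv, h1⟩, h2⟩
      exact ⟨v, hv, h1, h2⟩
    · intro v hv
      rw [pr_eq3 hxy (by rintro rfl; exact hx hv) (by rintro rfl; exact hy hv)]
  have h3 : pr (fun h : W → Fin (2 * f) => h x = h y ∧ ∀ v ∈ F, h v ≠ h x) =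
      pr (fun h : W → Fin (2 * f) => (¬ ∃ v ∈ F, h v = h x) ∧ h x = h y) := by
    refine pr_congr fun h => ?_
    push Not
    exact and_comm
  rw [h3]
  have hf' : (1:ℝ) ≤ f := by exact_mod_cast hf
  have hF' : (F.card : ℝ) ≤ f := by exact_mod_cast hF
  have h4 : (F.card : ℝ) * (1 / (2 * f : ℕ) / (2 * f : ℕ)) ≤ f * (1 / (2 * f : ℕ) / (2 * f : ℕ)) := by
    gcongr
  have h5 : (f : ℝ) * (1 / (2 * f : ℕ) / (2 * f : ℕ)) = 1 / (4 * f) := by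
    push_cast; field_simp; norm_num
  have h6 : (1 : ℝ) / (2 * f : ℕ) = 2 * (1 / (4 * f)) := by
    push_cast; field_simp; norm_num
  linarith

/-- isolation of a type -/
theorem pr_typ {A : ℕ} (Q : Finset W) (hQ : 2 * Q.card ≤ A) (hA : 1 ≤ A) (σ : W) (hσ : σ ∉ Q) :
    1 / 2 ≤ pr (fun h : W → Fin A => ∀ c ∈ Q, h c ≠ h σ) := by
  haveI : NeZero A := ⟨by omega⟩
  have h1 := pr_add_not (fun h : W → Fin A => ∃ c ∈ Q, h c = h σ) (fun _ => True)
  rw [pr_true] at h1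
  have h2 : pr (fun h : W → Fin A => (∃ c ∈ Q, h c = h σ) ∧ True) ≤ Q.card * (1 / A) := by
    refine le_trans (pr_mono ?_) (pr_ex_le Q (fun c h => h c = h σ) _ ?_)
    · rintro h ⟨h, _⟩; exact h
    · intro v hv
      rw [pr_eq2 (by rintro rfl; exact hσ hv)]
  have h3 : pr (fun h : W → Fin A => ∀ c ∈ Q, h c ≠ h σ) =
      pr (fun h : W → Fin A => (¬ ∃ c ∈ Q, h c = h σ) ∧ True) := by
    refine pr_congr fun h => ?_
    push Not
    simp
  rw [h3]
  have hA' : (0:ℝ) < A := by exact_mod_cast hA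
  have hQ' : 2 * (Q.card : ℝ) ≤ A := by exact_mod_cast hQ
  have h4 : (Q.card : ℝ) * (1 / A) ≤ 1 / 2 := by
    rw [mul_one_div, div_le_div_iff₀ hA' (by norm_num)]; linarith
  linarith

theorem pr_field {Kf : Type} [Field Kf] [Fintype Kf] {ι : Type*} (s : Finset ι)
    (P : ι → Polynomial Kf) (D : ℕ) (hD : ∀ i, (P i).natDegree ≤ D) :
    pr (fun a : Kf => ∃ i ∈ s, P i ≠ 0 ∧ (P i).eval a = 0) ≤ s.card * (D / Fintype.card Kf) := by
  refine pr_ex_le s _ _ fun i _ => ?_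
  unfold pr
  gcongr
  by_cases h : P i = 0
  · simp [h]
  · refine le_trans (le_trans (card_le_card ?_) ((P i).roots.toFinset_card_le.trans (P i).card_roots')) (hD i)
    intro a ha
    simp only [mem_filter, mem_univ, true_and] at ha
    rw [Multiset.mem_toFinset, Polynomial.mem_roots h]
    exact ha.2

/-- numeric: `(1-1/m)^(m d) ≤ 2^{-d}` -/
theorem pow_decay (m d : ℕ) (hm : 1 ≤ m) : (1 - 1 / (m : ℝ)) ^ (m * d) ≤ (1 / 2) ^ d := by
  rw [pow_mul]
  have h0 : (1:ℝ) ≤ m := by exact_mod_cast hm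
  have h1 : 0 ≤ 1 - 1 / (m : ℝ) := by
    rw [sub_nonneg, div_le_one (by linarith)]; exact h0
  refine pow_le_pow_left₀ (by positivity) ?_ d
  have h2 : 1 - 1 / (m : ℝ) ≤ Real.exp (- (1 / m)) := by
    have := Real.add_one_le_exp (-(1 / (m:ℝ)))
    linarith
  calc (1 - 1 / (m : ℝ)) ^ m ≤ (Real.exp (- (1 / m))) ^ m := pow_le_pow_left₀ h1 h2 m
    _ = Real.exp (-1) := by
      rw [← Real.exp_nat_mul]; congr 1; field_simp
    _ ≤ 1 / 2 := by
      rw [Real.exp_neg, one_div]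
      apply inv_anti₀ (by norm_num)
      have := Real.add_one_le_exp (1:ℝ)
      linarith

end prob
end
end VFL

namespace VFL
set_option linter.all false
set_option autoImplicit false
open scoped Classical
open Finset
noncomputable section
universe u
variable {V : Type u} [Fintype V] [DecidableEq V]

/-! ### Section 8: sizes of the fact sets and events -/

theorem count_idx (l : List V) (v : V) (m : ℕ) :
    ((range m).filter fun i => l[i]? = some v).card ≤ l.count v := by
  induction l generalizing m with
  | nil => simp
  | cons a l ih =>
    have hsub : ((range m).filter fun i => (a :: l)[i]? = some v) ⊆
        (if a = v then {0} else ∅) ∪ ((range m).filter fun i => l[i]? = some v).image Nat.succ := by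
      intro i hi
      simp only [mem_filter, mem_range] at hi
      rcases i with _ | i
      · have : a = v := by simpa using hi.2
        simp [this]
      · refine mem_union_right _ (mem_image.2 ⟨i, ?_, rfl⟩)
        simp only [mem_filter, mem_range]
        exact ⟨by omega, by simpa using hi.2⟩
    refine (card_le_card hsub).trans ((card_union_le _ _).trans ?_)
    have h1 := (card_image_le (s := (range m).filter fun i => l[i]? = some v) (f := Nat.succ)).trans (ih m)
    rw [List.count_cons]
    by_cases h : a = v
    · simp only [h, if_true, card_singleton, beq_self_eq_true]
      omega
    · have h' : (a == v) = false := by simpa using h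
      simp only [h, h', if_false, card_empty, Bool.false_eq_true]
      omega

section cards
variable {G : SimpleGraph V} {K : V → Finset V} {V0 S : Finset V} {Vis : ℕ}
variable {ιJ ιA ιB : Type} [Fintype ιJ] [Fintype ιA] {Kf : Type} [Field Kf]
variable (H : Hier G K V0 S Vis) (tt : ιJ → Option V → ιA) (hh : ιJ → V → ιB)
variable (Rd : ℕ) (ν : V → Kf) (eid : Edg V ιJ ιA → ℕ) (α : Kf)

theorem fcell_card (v : V) : (fcellF H v).card ≤ Vis := by
  unfold fcellF
  split_ifs with h
  · simp
  · have hsub : occ H v ⊆ univ.biUnion fun c => ((range (Fintype.card V ^ 2)).filter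
        fun i => (H.W c)[i]? = some v).image fun i => (c, i) := by
      intro z hz
      simp only [occ, mem_filter, mem_product, mem_univ, true_and] at hz
      simp only [mem_biUnion, mem_univ, true_and, mem_image, mem_filter]
      exact ⟨z.1, z.2, hz, rfl⟩
    refine (card_le_card hsub).trans (card_biUnion_le.trans ((sum_le_sum fun c _ => ?_).trans (H.W_vis v h)))
    exact card_image_le.trans (count_idx _ _ _)

variable {L : ℕ} (hov : ∀ v, (V0.filter fun c => v ∈ K c).card ≤ L)

theorem ov_R (hov : ∀ v, (V0.filter fun c => v ∈ K c).card ≤ L) (v : V) :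
    (H.R.filter fun c => v ∈ K c).card ≤ L :=
  (card_le_card (filter_subset_filter _ H.R_sub)).trans (hov v)

theorem blk_card (hov : ∀ v, (V0.filter fun c => v ∈ K c).card ≤ L) (v : V) : (blkF H v).card ≤ L :=
  card_image_le.trans (ov_R H hov v)

theorem kp_card (hov : ∀ v, (V0.filter fun c => v ∈ K c).card ≤ L) (v : V) :
    (kpF H v).card ≤ 2 * Vis + 2 * L := by
  unfold kpF
  have h1 := fcell_card H v
  have h2 := blk_card H hov v
  have h3 := card_image_le (s := fcellF H v) (f := fun z : V × ℕ => (z.1, z.2 + 1))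
  have h4 := card_image_le (s := blkF H v) (f := fun z : V × ℕ => (z.1, 0))
  refine (card_union_le _ _).trans ?_
  have h5 := card_union_le (fcellF H v) ((fcellF H v).image fun z : V × ℕ => (z.1, z.2 + 1))
  have h6 := card_union_le (blkF H v) ((blkF H v).image fun z : V × ℕ => (z.1, 0))
  omega

theorem known_card (hov : ∀ v, (V0.filter fun c => v ∈ K c).card ≤ L) (v : V) :
    (knownF H tt hh Rd ν eid α v).card ≤ 2 * Vis + 2 * L :=
  card_image_le.trans (kp_card H hov v)

theorem QP_card (hov : ∀ v, (V0.filter fun c => v ∈ K c).card ≤ L) (M : Finset V) :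
    (QP H M).card ≤ M.card * (2 * Vis + 2 * L) :=
  card_biUnion_le_card_mul _ _ _ fun v _ => kp_card H hov v

variable {D : ℕ}

theorem nbr_card (hov : ∀ v, (V0.filter fun c => v ∈ K c).card ≤ L)
    (hD : ∀ c ∈ H.R, (nb G (K c)).card ≤ D) (v : V) : (nbrF H v).card ≤ L * D := by
  unfold nbrF
  refine (card_biUnion_le_card_mul _ _ D fun c hc => ?_).trans (Nat.mul_le_mul_right _ (ov_R H hov v))
  exact card_image_le.trans (hD c (mem_filter.1 hc).1)

theorem tail_card (v : V) : (tailF H tt hh v).card ≤ Fintype.card ιJ * Fintype.card ιA := by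
  unfold tailF
  refine card_image_le.trans ?_
  have hsub : ((univ : Finset (Edg V ιJ ιA)).filter fun e => pres H tt hh e ∧ isIn e ∧ tail e = v) ⊆
      (univ : Finset (ιJ × ιA)).image fun p => Sum.inl (p.1, p.2, v) := by
    intro e he
    simp only [mem_filter, mem_univ, true_and] at he
    rcases e with ⟨j, a, x⟩ | ⟨x, y, σ⟩
    · refine mem_image.2 ⟨(j, a), mem_univ _, ?_⟩
      have : x = v := he.2.2
      simp [this]
    · exact absurd he.2.1 id
  refine (card_le_card hsub).trans (card_image_le.trans ?_)
  simp

theorem typ_card (hov : ∀ v, (V0.filter fun c => v ∈ K c).card ≤ L)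
    (hD : ∀ c ∈ H.R, (nb G (K c)).card ≤ D) (v : V) :
    (typF H tt hh v).card ≤ L * (Fintype.card ιJ * D + D * D) := by
  unfold typF
  refine card_image_le.trans ?_
  have hsub : ((univ : Finset (Edg V ιJ ιA)).filter fun e => pres H tt hh e ∧
      ∃ c, etyp H tt hh e = some c ∧ v ∈ K c) ⊆
      (H.R.filter fun c => v ∈ K c).biUnion fun c =>
        ((univ ×ˢ nb G (K c)).image fun p : ιJ × V => Sum.inl (p.1, tt p.1 (some c), p.2)) ∪
        ((nb G (K c) ×ˢ nb G (K c)).image fun p : V × V => Sum.inr (p.1, p.2, some c)) := by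
    intro e he
    simp only [mem_filter, mem_univ, true_and] at he
    obtain ⟨h1, c, h2, h3⟩ := he
    have hr := pres_rel H tt hh h1
    rw [h2] at hr
    rcases hr with ⟨h, _⟩ | ⟨c', h, hR, hx, hy⟩
    · cases h
    cases h
    refine mem_biUnion.2 ⟨c, mem_filter.2 ⟨hR, h3⟩, ?_⟩
    rcases e with ⟨j, a, x⟩ | ⟨x, y, σ⟩
    · refine mem_union_left _ (mem_image.2 ⟨(j, x), mem_product.2 ⟨mem_univ _, hx⟩, ?_⟩)
      have := (pres_inl H tt hh h1).1
      rw [h2] at this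
      simp [this]
    · refine mem_union_right _ (mem_image.2 ⟨(x, y), mem_product.2 ⟨hx, hy⟩, ?_⟩)
      have : σ = some c := h2
      simp [this]
  refine (card_le_card hsub).trans ((card_biUnion_le_card_mul _ _ (Fintype.card ιJ * D + D * D) ?_).trans
    (Nat.mul_le_mul_right _ (ov_R H hov v)))
  intro c hc
  have hc' := hD c (mem_filter.1 hc).1
  refine (card_union_le _ _).trans (Nat.add_le_add (card_image_le.trans ?_) (card_image_le.trans ?_))
  · rw [card_product, card_univ]; exact Nat.mul_le_mul_left _ hc'
  · rw [card_product]; exact Nat.mul_le_mul hc' hc'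

theorem Pol_deg {I : ℕ} (hI : ∀ e, eid e ≤ I) (F M : Finset V) (χ : V × ℕ → Bool) (c : V) :
    (Pol H tt hh ν eid F M χ c).natDegree ≤ I := by
  unfold Pol
  refine Polynomial.natDegree_sum_le_of_forall_le _ _ fun e _ => ?_
  exact (Polynomial.natDegree_C_mul_X_pow_le _ _).trans (hI e)

theorem alpha_event [Fintype Kf] {I : ℕ} (hI : ∀ e, eid e ≤ I) (F M : Finset V) :
    pr (fun α : Kf => ¬ ∀ χ, Allow (F.biUnion (fcellF H)) (M.biUnion (blkF H)) (QP H M) χ → ∀ c,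
      Pol H tt hh ν eid F M χ c ≠ 0 → (Pol H tt hh ν eid F M χ c).eval α ≠ 0) ≤
    (2 ^ (QP H M).card * Fintype.card V : ℕ) * (I / Fintype.card Kf) := by
  set A := Allow (F.biUnion (fcellF H)) (M.biUnion (blkF H)) (QP H M) with hA
  set cho : Finset (V × ℕ) → V × ℕ → Bool := fun B =>
    if h : ∃ χ, A χ ∧ ∀ z ∈ QP H M, (χ z = true ↔ z ∈ B) then h.choose else fun _ => false with hcho
  have hall : ∀ χ, A χ → cho ((QP H M).filter fun z => χ z = true) = χ := by
    intro χ hχ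
    have hex : ∃ χ', A χ' ∧ ∀ z ∈ QP H M, (χ' z = true ↔ z ∈ (QP H M).filter fun z => χ z = true) :=
      ⟨χ, hχ, fun z hz => by simp [hz]⟩
    have e : cho ((QP H M).filter fun z => χ z = true) = hex.choose := dif_pos hex
    rw [e]
    refine Allow.ext ?_ hex.choose_spec.1 hχ ?_
    · intro b hb
      obtain ⟨h1, h2, _⟩ := (mem_blk H).1 hb
      exact (QP_ends H h1 h2).1
    · intro z hz
      have := hex.choose_spec.2 z hz
      simp only [mem_filter, hz, true_and] at this
      exact Bool.eq_iff_iff.2 this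
  have h := pr_field ((QP H M).powerset ×ˢ (univ : Finset V))
    (fun p => Pol H tt hh ν eid F M (cho p.1) p.2) I (fun p => Pol_deg H tt hh ν eid hI F M _ _)
  rw [card_product, card_powerset, card_univ] at h
  refine le_trans (pr_mono ?_) h
  intro a ha
  push Not at ha
  obtain ⟨χ, hχ, c, h1, h2⟩ := ha
  refine ⟨((QP H M).filter fun z => χ z = true, c), ?_, ?_⟩
  · simp
  · simp only [hall χ hχ]
    exact ⟨h1, h2⟩

end cards

section events

theorem pr_not {X : Type*} [Fintype X] [Nonempty X] (P : X → Prop) : pr (fun x => ¬ P x) = 1 - pr P := by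
  have := pr_add_not P (fun _ => True)
  rw [pr_true] at this
  simp only [and_true] at this
  linarith

theorem iso_event {f A J L : ℕ} (hf : 1 ≤ f) (hA : 1 ≤ A) (K : V → Finset V) (V0 F M : Finset V)
    (hov : ∀ v, (V0.filter fun c => v ∈ K c).card ≤ L) (hF : F.card ≤ f) (hM : 2 * (M.card * L) ≤ A) :
    pr (fun ω : Fin J → (Option V → Fin A) × (V → Fin (2 * f)) =>
      ¬ Iso (fun j => (ω j).1) (fun j => (ω j).2) K V0 F M) ≤
    (Fintype.card V * (Fintype.card V * (Fintype.card V + 1)) : ℕ) * (1 - 1 / (8 * f : ℕ)) ^ J := by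
  haveI : NeZero A := ⟨by omega⟩
  haveI : NeZero (2 * f) := ⟨by omega⟩
  set good : V → V → Option V → (Option V → Fin A) × (V → Fin (2 * f)) → Prop := fun x y σ q =>
    (∀ c ∈ (V0.filter (aff K M)).image some, q.1 c ≠ q.1 σ) ∧ (q.2 x = q.2 y ∧ ∀ v ∈ F, q.2 v ≠ q.2 x) with hgood
  have hstep : ∀ x y σ, x ∉ F → y ∉ F → x ≠ y → ¬ badT K M σ →
      pr (fun ω : Fin J → (Option V → Fin A) × (V → Fin (2 * f)) => ∀ j, ¬ good x y σ (ω j)) ≤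
        (1 - 1 / (8 * f : ℕ)) ^ J := by
    intro x y σ hx hy hxy hσ
    rw [pr_pi_pow (fun q => ¬ good x y σ q), pr_not]
    refine pow_le_pow_left₀ (sub_nonneg.2 (pr_le_one _)) ?_ J
    have h1 : pr (good x y σ) = _ := pr_prod
      (fun q : Option V → Fin A => ∀ c ∈ (V0.filter (aff K M)).image some, q c ≠ q σ)
      (fun q : V → Fin (2 * f) => q x = q y ∧ ∀ v ∈ F, q v ≠ q x)
    have h2 := pr_pair hf F hF hxy hx hy
    have h3 : (1:ℝ) / 2 ≤ pr (fun q : Option V → Fin A => ∀ c ∈ (V0.filter (aff K M)).image some, q c ≠ q σ) := by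
      refine pr_typ _ ?_ hA σ ?_
      · have e : V0.filter (aff K M) ⊆ M.biUnion fun v => V0.filter fun c => v ∈ K c := by
          intro c hc
          obtain ⟨hc, v, hv, hvc⟩ := mem_filter.1 hc
          exact mem_biUnion.2 ⟨v, hv, mem_filter.2 ⟨hc, hvc⟩⟩
        have := (card_le_card e).trans (card_biUnion_le_card_mul _ _ L fun v _ => hov v)
        have h' := card_image_le (s := V0.filter (aff K M)) (f := some)
        omega
      · intro h
        obtain ⟨c, hc, rfl⟩ := mem_image.1 h
        exact hσ ⟨c, rfl, (mem_filter.1 hc).2⟩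
    rw [h1]
    have h4 : (1:ℝ) / (8 * f : ℕ) = 1 / 2 * (1 / (4 * f)) := by
      have : (0:ℝ) < f := by exact_mod_cast hf
      push_cast; field_simp; norm_num
    rw [h4]
    have : (1:ℝ) / 2 * (1 / (4 * f)) ≤ _ := mul_le_mul h3 h2 (by positivity) (pr_nonneg _)
    linarith
  have hcard : ((univ : Finset (V × V × Option V)).card) =
      Fintype.card V * (Fintype.card V * (Fintype.card V + 1)) := by simp
  rw [← hcard]
  have hpos : (0:ℝ) ≤ 1 - 1 / (8 * f : ℕ) := by
    rw [sub_nonneg]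
    apply div_le_one_of_le₀
    · have : 1 ≤ 8 * f := by omega
      exact_mod_cast this
    · positivity
  refine le_trans (pr_mono ?_) (pr_ex_le univ (fun (p : V × V × Option V) ω => p.1 ∉ F ∧ p.2.1 ∉ F ∧
    p.1 ≠ p.2.1 ∧ ¬ badT K M p.2.2 ∧ ∀ j, ¬ good p.1 p.2.1 p.2.2 (ω j)) _ ?_)
  · intro ω hω
    unfold Iso at hω
    push Not at hω
    obtain ⟨x, y, σ, hx, hy, hxy, hσ, h⟩ := hω
    refine ⟨(x, y, σ), mem_univ _, hx, hy, hxy, hσ, ?_⟩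
    rintro j ⟨h1, h2, h3⟩
    obtain ⟨c, hc, hac, he⟩ := h j h2 h3
    exact h1 (some c) (mem_image_of_mem _ (mem_filter.2 ⟨hc, hac⟩)) he
  · rintro ⟨x, y, σ⟩ -
    by_cases hc : x ∉ F ∧ y ∉ F ∧ x ≠ y ∧ ¬ badT K M σ
    · refine le_trans (pr_mono ?_) (hstep x y σ hc.1 hc.2.1 hc.2.2.1 hc.2.2.2)
      intro ω h
      exact h.2.2.2.2
    · refine le_trans (pr_mono (Q := fun _ => False) ?_) ?_
      · intro ω h
        exact hc ⟨h.1, h.2.1, h.2.2.1, h.2.2.2.1⟩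
      · rw [pr_false]; positivity

theorem miss_event {f Hn : ℕ} [NeZero (2 * f)] (hf : 1 ≤ f) (F : Finset V) (hF : F.card ≤ f) :
    pr (fun φ : Fin Hn → V → Fin (2 * f) => ∀ h, ∃ v ∈ F, φ h v = 0) ≤ (1 / 2) ^ Hn := by
  rw [pr_pi_pow (fun q : V → Fin (2 * f) => ∃ v ∈ F, q v = 0)]
  refine pow_le_pow_left₀ (pr_nonneg _) ?_ Hn
  refine (pr_ex_le F (fun v (q : V → Fin (2 * f)) => q v = 0) (1 / (2 * f : ℕ)) ?_).trans ?_
  · intro v _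
    rw [pr_hit]
  · have h1 : (0:ℝ) < f := by exact_mod_cast hf
    have h2 : (F.card : ℝ) ≤ f := by exact_mod_cast hF
    push_cast
    rw [mul_one_div, div_le_div_iff₀ (by positivity) (by norm_num)]
    linarith

theorem hit_event {f Hn d : ℕ} [NeZero (2 * f)] (hf : 1 ≤ f) (B : V → Finset V) :
    pr (fun φ : Fin Hn → V → Fin (2 * f) => ∃ h x, 2 * f * d < (B x).card ∧ ∀ v ∈ B x, φ h v ≠ 0) ≤
      (Hn * Fintype.card V : ℕ) * (1 / 2) ^ d := by
  have hcard : (univ : Finset (Fin Hn × V)).card = Hn * Fintype.card V := by simp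
  rw [← hcard]
  refine le_trans (pr_mono ?_) (pr_ex_le univ (fun (p : Fin Hn × V) (φ : Fin Hn → V → Fin (2 * f)) =>
    2 * f * d < (B p.2).card ∧ ∀ v ∈ B p.2, φ p.1 v ≠ 0) _ ?_)
  · rintro φ ⟨h, x, h1⟩
    exact ⟨(h, x), mem_univ _, h1⟩
  · rintro ⟨h, x⟩ -
    by_cases hc : 2 * f * d < (B x).card
    · refine le_trans (pr_mono (Q := fun φ : Fin Hn → V → Fin (2 * f) => ∀ v ∈ B x, φ h v ≠ 0) ?_) ?_
      · intro φ hφ; exact hφ.2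
      · rw [pr_pi_one (fun q : V → Fin (2 * f) => ∀ v ∈ B x, q v ≠ 0) h, pr_avoid]
        refine le_trans ?_ (pow_decay (2 * f) d (by omega))
        have h0 : (1:ℝ) ≤ (2 * f : ℕ) := by exact_mod_cast (by omega : 1 ≤ 2 * f)
        have h1 : (0:ℝ) ≤ 1 - 1 / (2 * f : ℕ) := by
          rw [sub_nonneg, div_le_one (by linarith)]; exact h0
        refine pow_le_pow_of_le_one h1 ?_ hc.le
        have : (0:ℝ) ≤ 1 / (2 * f : ℕ) := by positivity
        linarith
    · refine le_trans (pr_mono (Q := fun _ => False) ?_) ?_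
      · intro φ hφ; exact hc hφ.1
      · rw [pr_false]; positivity

end events
end
end VFL

namespace VFL
set_option linter.all false
set_option autoImplicit false
open scoped Classical
open Finset
noncomputable section
universe u v

/-! ### Section 9: encodings, labels and the decoder -/

/-- objects of `X` satisfying `P` can be encoded with `a` bits -/
def Fits (X : Type u) (P : X → Prop) (a : ℕ) : Prop :=
  ∃ (T : Type) (_ : Fintype T) (enc : X → T), Fintype.card T ≤ 2 ^ a ∧
    ∀ x y, P x → P y → enc x = enc y → x = y

theorem Fits.fin (X : Type) [Fintype X] (a : ℕ) (h : Fintype.card X ≤ 2 ^ a) :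
    Fits X (fun _ => True) a := ⟨X, inferInstance, id, h, fun _ _ _ _ h => h⟩

theorem Fits.nat (N a : ℕ) (h : N < 2 ^ a) : Fits ℕ (fun x => x ≤ N) a := by
  refine ⟨Fin (N + 1), inferInstance, fun x => Fin.ofNat (N + 1) x, by simpa using h, ?_⟩
  intro x y hx hy he
  have := congrArg Fin.val he
  simp only [Fin.ofNat] at this
  rwa [Nat.mod_eq_of_lt (by omega), Nat.mod_eq_of_lt (by omega)] at this

theorem Fits.prod {X : Type u} {Y : Type v} {P : X → Prop} {Q : Y → Prop} {a b : ℕ}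
    (h : Fits X P a) (h' : Fits Y Q b) : Fits (X × Y) (fun z => P z.1 ∧ Q z.2) (a + b) := by
  obtain ⟨T, _, enc, h1, h2⟩ := h
  obtain ⟨T', _, enc', h1', h2'⟩ := h'
  refine ⟨T × T', inferInstance, fun z => (enc z.1, enc' z.2), ?_, ?_⟩
  · rw [Fintype.card_prod, pow_add]; exact Nat.mul_le_mul h1 h1'
  · rintro ⟨x, y⟩ ⟨x', y'⟩ hx hx' he
    have he' := Prod.ext_iff.1 he
    rw [h2 x x' hx.1 hx'.1 he'.1, h2' y y' hx.2 hx'.2 he'.2]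

theorem Fits.pi {X : Type u} {P : X → Prop} {a : ℕ} (m : ℕ) (h : Fits X P a) :
    Fits (Fin m → X) (fun z => ∀ i, P (z i)) (m * a) := by
  obtain ⟨T, _, enc, h1, h2⟩ := h
  refine ⟨Fin m → T, inferInstance, fun z i => enc (z i), ?_, ?_⟩
  · rw [Fintype.card_pi, mul_comm, pow_mul]
    simpa using Nat.pow_le_pow_left h1 m
  · intro x y hx hy he
    funext i
    exact h2 _ _ (hx i) (hy i) (congrFun he i)

theorem Fits.finset {X : Type u} {P : X → Prop} {a : ℕ} (m : ℕ) (h : Fits X P a) :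
    Fits (Finset X) (fun s => s.card ≤ m ∧ ∀ x ∈ s, P x) (m * (a + 1)) := by
  obtain ⟨T, _, enc, h1, h2⟩ := h
  refine ⟨Fin m → Option T, inferInstance, fun s i => (s.toList[(i : ℕ)]?).map enc, ?_, ?_⟩
  · rw [Fintype.card_pi, mul_comm, pow_mul]
    have : Fintype.card (Option T) ≤ 2 ^ (a + 1) := by
      rw [Fintype.card_option, pow_succ]
      have := Nat.one_le_two_pow (n := a)
      omega
    simpa using Nat.pow_le_pow_left this m
  · have key : ∀ s s' : Finset X, (s.card ≤ m ∧ ∀ x ∈ s, P x) → (s'.card ≤ m ∧ ∀ x ∈ s', P x) →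
        (fun i : Fin m => (s.toList[(i : ℕ)]?).map enc) = (fun i : Fin m => (s'.toList[(i : ℕ)]?).map enc) →
        s ⊆ s' := by
      intro s s' hs hs' he x hx
      obtain ⟨i, hi, hix⟩ := List.getElem_of_mem (mem_toList.2 hx)
      have hi' : i < m := by rw [length_toList] at hi; omega
      have h3 := congrFun he ⟨i, hi'⟩
      simp only [List.getElem?_eq_getElem hi, hix, Option.map_some] at h3
      obtain ⟨y, hy, hxy⟩ := Option.map_eq_some_iff.1 h3.symm
      have hy' : y ∈ s' := mem_toList.1 (List.mem_of_getElem? hy)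
      rwa [← h2 y x (hs'.2 y hy') (hs.2 x hx) hxy]
    intro s s' hs hs' he
    exact Subset.antisymm (key s s' hs hs' he) (key s' s hs' hs he.symm)

theorem Fits.mono {X : Type u} {P Q : X → Prop} {a b : ℕ} (h : Fits X P a) (hab : a ≤ b)
    (hQ : ∀ x, Q x → P x) : Fits X Q b := by
  obtain ⟨T, i, enc, h1, h2⟩ := h
  exact ⟨T, i, enc, h1.trans (Nat.pow_le_pow_right (by norm_num) hab),
    fun x y hx hy => h2 x y (hQ x hx) (hQ y hy)⟩

theorem Fits.bits {X : Type u} [Nonempty X] {P : X → Prop} {a : ℕ} (h : Fits X P a) :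
    ∃ (enc : X → Fin a → Bool) (dec : (Fin a → Bool) → X), ∀ x, P x → dec (enc x) = x := by
  obtain ⟨T, _, enc, h1, h2⟩ := h
  have : Fintype.card T ≤ Fintype.card (Fin a → Bool) := by simpa using h1
  obtain ⟨j⟩ := Function.Embedding.nonempty_of_card_le this
  refine ⟨fun x => j (enc x), fun y => Classical.epsilon fun x => P x ∧ j (enc x) = y, ?_⟩
  intro x hx
  have := Classical.epsilon_spec (p := fun x' => P x' ∧ j (enc x') = j (enc x)) ⟨x, hx, rfl⟩
  exact h2 _ _ this.1 hx (j.injective this.2)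

abbrev Facts (V E : Type u) (Kf : Type) (Rd : ℕ) :=
  Bool × (V × ℕ) × Finset (KRec V Kf Rd) × Finset (V × ℕ) × Finset (V × ℕ) × Finset (NRec V) ×
    Finset (BRec V E) × Finset (BRec V E)

abbrev Lab (V E : Type u) (Kf : Type) (Rd Hn : ℕ) := Kf × V × (Fin Hn → Facts V E Kf Rd)

section dec
variable {V : Type u} [Fintype V] [DecidableEq V] {E : Type u} {Kf : Type} [Field Kf] {Rd Hn : ℕ}
variable {ιJ ιA ιB : Type} [Fintype ιJ] [Fintype ιA]

def Dec (ν : V → Kf) (eid : Edg V ιJ ιA → ℕ) (ls lt : Lab V (Edg V ιJ ιA) Kf Rd Hn)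
    (lF : Finset (Lab V (Edg V ιJ ιA) Kf Rd Hn)) : Bool :=
  decide (¬ ∃ h : Fin Hn, (∀ l ∈ lF, (l.2.2 h).1 = false) ∧
    Pass ν eid ls.1 (lF.image fun l => l.2.1) (ls.2.2 h).2.1 (lt.2.2 h).2.1
      ((insert ls (insert lt lF)).biUnion fun l => (l.2.2 h).2.2.1)
      (lF.biUnion fun l => (l.2.2 h).2.2.2.1)
      ((insert ls (insert lt lF)).biUnion fun l => (l.2.2 h).2.2.2.2.1)
      ((insert ls (insert lt lF)).biUnion fun l => (l.2.2 h).2.2.2.2.2.1)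
      ((lF.biUnion fun l => (l.2.2 h).2.2.2.2.2.2.1) ∪
        ((insert ls (insert lt lF)).biUnion fun l => (l.2.2 h).2.2.2.2.2.2.2)))

variable {G : SimpleGraph V} {K : V → Finset V} {V0 : Finset V} {S : Fin Hn → Finset V} {Vis : ℕ}
variable (Hr : ∀ h, Hier G K V0 (S h) Vis) (tt : ιJ → Option V → ιA) (hh : ιJ → V → ιB)
variable (Rd) (ν : V → Kf) (eid : Edg V ιJ ιA → ℕ) (α : Kf)

def mkLab (v : V) : Lab V (Edg V ιJ ιA) Kf Rd Hn :=
  (α, v, fun h => (decide (v ∈ S h), pos (Hr h) v, knownF (Hr h) tt hh Rd ν eid α v,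
    fcellF (Hr h) v, blkF (Hr h) v, nbrF (Hr h) v, tailF (Hr h) tt hh v, typF (Hr h) tt hh v))

theorem Dec_correct (h2 : ∀ a : Kf, a + a = 0) (hν : Function.Injective ν)
    (hid : Function.Injective eid) (hK : ∀ c, ∀ x ∈ K c, ∀ y ∈ K c, (rst G (K c)).Reachable x y)
    {F : Finset V} {s t : V} (hsF : s ∉ F) (htF : t ∉ F)
    (hex : ∃ h, Disjoint F (S h)) (hiso : Iso tt hh K V0 F (insert s (insert t F)))
    (hdeg : ∀ h, ∀ c ∈ (Hr h).R, F.card + (nb G (K c)).card < Rd)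
    (hα : ∀ h, ∀ χ, Allow (F.biUnion (fcellF (Hr h))) ((insert s (insert t F)).biUnion (blkF (Hr h)))
      (QP (Hr h) (insert s (insert t F))) χ → ∀ c,
      Pol (Hr h) tt hh ν eid F (insert s (insert t F)) χ c ≠ 0 →
        (Pol (Hr h) tt hh ν eid F (insert s (insert t F)) χ c).eval α ≠ 0) :
    ∀ lF, (∀ l, l ∈ lF ↔ ∃ v ∈ F, mkLab Rd Hr tt hh ν eid α v = l) → (
    Dec ν eid (mkLab Rd Hr tt hh ν eid α s) (mkLab Rd Hr tt hh ν eid α t) lF = true ↔ (del G F).Reachable s t) := by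
  intro lF hlF
  obtain rfl : lF = F.image (mkLab Rd Hr tt hh ν eid α) := by
    ext l
    rw [hlF, mem_image]
  have hM : insert (mkLab Rd Hr tt hh ν eid α s) (insert (mkLab Rd Hr tt hh ν eid α t)
      (F.image (mkLab Rd Hr tt hh ν eid α))) =
      (insert s (insert t F)).image (mkLab Rd Hr tt hh ν eid α) := by
    rw [image_insert, image_insert]
  have hFi : (F.image (mkLab Rd Hr tt hh ν eid α)).image (fun l => l.2.1) = F := by
    rw [image_image]
    exact image_id
  have hP : ∀ h, Disjoint F (S h) → (
    Pass ν eid α F (pos (Hr h) s) (pos (Hr h) t)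
      ((insert s (insert t F)).biUnion (knownF (Hr h) tt hh Rd ν eid α))
      (F.biUnion (fcellF (Hr h))) ((insert s (insert t F)).biUnion (blkF (Hr h)))
      ((insert s (insert t F)).biUnion (nbrF (Hr h)))
      (F.biUnion (tailF (Hr h) tt hh) ∪ (insert s (insert t F)).biUnion (typF (Hr h) tt hh)) ↔
      ¬ (del G F).Reachable s t) := by
    intro h hFS
    have hFM : F ⊆ insert s (insert t F) := fun x hx => by simp [hx]
    constructor
    · intro hp hst
      exact sound (Hr h) tt hh Rd ν eid α h2 hν hid hFS hFM (by simp) (by simp) hsF htF hiso (hdeg h)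
        (hα h) hst hp
    · intro hst
      exact complete (Hr h) tt hh Rd ν eid α h2 hν hK hFS hFM (by simp) (by simp) hsF htF (hdeg h) hst
  have hflag : ∀ h, (∀ l ∈ F.image (mkLab Rd Hr tt hh ν eid α), (l.2.2 h).1 = false) ↔ Disjoint F (S h) := by
    intro h
    rw [disjoint_left]
    simp only [mem_image, forall_exists_index, and_imp, forall_apply_eq_imp_iff₂, mkLab,
      decide_eq_false_iff_not]
  unfold Dec
  rw [hM, hFi]
  simp only [image_biUnion, hflag, decide_eq_true_eq]
  constructor
  · intro hn
    by_contra hst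
    obtain ⟨h, hFS⟩ := hex
    exact hn ⟨h, hFS, (hP h hFS).2 hst⟩
  · rintro hst ⟨h, hFS, hp⟩
    exact (hP h hFS).1 hp hst

/-- size constraints on positions -/
def PosOK (z : V × ℕ) : Prop := z.2 ≤ Fintype.card V ^ 2

theorem pos_ok (h : Fin Hn) (v : V) : PosOK (pos (Hr h) v) :=
  (pos_lt (Hr h) v).le.trans ((Hr h).W_len _)

theorem kp_ok (h : Fin Hn) (v : V) (z : V × ℕ) (hz : z ∈ kpF (Hr h) v) : PosOK z :=
  (QP_le (Hr h) (M := {v}) (by simpa [QP] using hz)).trans ((Hr h).W_len _)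

variable {Rd}

/-- all constraints on the facts -/
def FactsOK (a1 a2 a3 a4 a5 a6 : ℕ) (x : Facts V E Kf Rd) : Prop :=
  True ∧ PosOK x.2.1 ∧ (x.2.2.1.card ≤ a1 ∧ ∀ r ∈ x.2.2.1, PosOK r.1 ∧ True) ∧
    (x.2.2.2.1.card ≤ a2 ∧ ∀ r ∈ x.2.2.2.1, PosOK r) ∧
    (x.2.2.2.2.1.card ≤ a3 ∧ ∀ r ∈ x.2.2.2.2.1, PosOK r) ∧
    (x.2.2.2.2.2.1.card ≤ a4 ∧ ∀ r ∈ x.2.2.2.2.2.1, True ∧ True ∧ PosOK r.2.2) ∧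
    (x.2.2.2.2.2.2.1.card ≤ a5 ∧ ∀ r ∈ x.2.2.2.2.2.2.1, True ∧ PosOK r.2.1 ∧ True ∧ PosOK r.2.2.2) ∧
    (x.2.2.2.2.2.2.2.card ≤ a6 ∧ ∀ r ∈ x.2.2.2.2.2.2.2, True ∧ PosOK r.2.1 ∧ True ∧ PosOK r.2.2.2)

def LabOK (a1 a2 a3 a4 a5 a6 : ℕ) (x : Lab V E Kf Rd Hn) : Prop :=
  True ∧ True ∧ ∀ h, FactsOK a1 a2 a3 a4 a5 a6 (x.2.2 h)

variable (Rd)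

theorem mkLab_ok {L D : ℕ} (hov : ∀ v, (V0.filter fun c => v ∈ K c).card ≤ L)
    (hD : ∀ h, ∀ c ∈ (Hr h).R, (nb G (K c)).card ≤ D) (v : V) :
    LabOK (2 * Vis + 2 * L) Vis L (L * D) (Fintype.card ιJ * Fintype.card ιA)
      (L * (Fintype.card ιJ * D + D * D)) (mkLab Rd Hr tt hh ν eid α v) := by
  refine ⟨trivial, trivial, fun h => ⟨trivial, pos_ok Hr h v,
    ⟨known_card (Hr h) tt hh Rd ν eid α hov v, ?_⟩, ⟨fcell_card (Hr h) v, ?_⟩,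
    ⟨blk_card (Hr h) hov v, ?_⟩, ⟨nbr_card (Hr h) hov (hD h) v, ?_⟩,
    ⟨tail_card (Hr h) tt hh v, ?_⟩, ⟨typ_card (Hr h) tt hh hov (hD h) v, ?_⟩⟩⟩
  · intro r hr
    obtain ⟨z, hz, rfl⟩ := mem_image.1 (show r ∈ (kpF (Hr h) v).image _ from hr)
    exact ⟨kp_ok Hr h v z hz, trivial⟩
  · intro r hr
    exact kp_ok Hr h v r (mem_union_left _ (mem_union_left _ hr))
  · intro r hr
    exact kp_ok Hr h v r (mem_union_right _ (mem_union_left _ hr))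
  · intro r hr
    obtain ⟨c, _, h1⟩ := mem_biUnion.1 (show r ∈ Finset.biUnion _ _ from hr)
    obtain ⟨x, _, rfl⟩ := mem_image.1 h1
    exact ⟨trivial, trivial, pos_ok Hr h x⟩
  · intro r hr
    obtain ⟨e, _, rfl⟩ := mem_image.1 (show r ∈ Finset.image _ _ from hr)
    exact ⟨trivial, pos_ok Hr h _, trivial, pos_ok Hr h _⟩
  · intro r hr
    obtain ⟨e, _, rfl⟩ := mem_image.1 (show r ∈ Finset.image _ _ from hr)
    exact ⟨trivial, pos_ok Hr h _, trivial, pos_ok Hr h _⟩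

end dec

/-- number of bits -/
def factBits (lam k e Rd a1 a2 a3 a4 a5 a6 : ℕ) : ℕ :=
  1 + ((lam + (2 * lam + 1)) + (a1 * ((lam + (2 * lam + 1)) + Rd * k + 1) +
    (a2 * ((lam + (2 * lam + 1)) + 1) + (a3 * ((lam + (2 * lam + 1)) + 1) +
    (a4 * (lam + (lam + (lam + (2 * lam + 1))) + 1) +
    (a5 * (e + ((lam + (2 * lam + 1)) + (lam + (lam + (2 * lam + 1)))) + 1) +
     a6 * (e + ((lam + (2 * lam + 1)) + (lam + (lam + (2 * lam + 1)))) + 1)))))))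

theorem Lab_fits {V : Type} [Fintype V] [DecidableEq V] {E : Type} [Fintype E] {Kf : Type} [Fintype Kf]
    {Rd Hn lam k e : ℕ} (hV : Fintype.card V ≤ 2 ^ lam) (hE : Fintype.card E ≤ 2 ^ e)
    (hKf : Fintype.card Kf ≤ 2 ^ k) (a1 a2 a3 a4 a5 a6 : ℕ) :
    Fits (Lab V E Kf Rd Hn) (LabOK a1 a2 a3 a4 a5 a6)
      (k + (lam + Hn * factBits lam k e Rd a1 a2 a3 a4 a5 a6)) := by
  have fV : Fits V (fun _ => True) lam := Fits.fin V lam hV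
  have fE : Fits E (fun _ => True) e := Fits.fin E e hE
  have fK : Fits Kf (fun _ => True) k := Fits.fin Kf k hKf
  have fB : Fits Bool (fun _ => True) 1 := Fits.fin Bool 1 (by simp)
  have fN : Fits ℕ (fun x => x ≤ Fintype.card V ^ 2) (2 * lam + 1) := by
    apply Fits.nat
    have := Nat.pow_le_pow_left hV 2
    rw [← pow_mul, mul_comm lam 2] at this
    have h2 : 2 ^ (2 * lam + 1) = 2 ^ (2 * lam) * 2 := pow_succ _ _
    have h3 := Nat.one_le_two_pow (n := 2 * lam)
    omega
  have fP : Fits (V × ℕ) PosOK (lam + (2 * lam + 1)) :=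
    (fV.prod fN).mono le_rfl fun x hx => ⟨trivial, hx⟩
  have fR : Fits (Fin Rd → Kf) (fun _ => True) (Rd * k) := (fK.pi Rd).mono le_rfl fun x _ _ => trivial
  have fBR := fE.prod (fP.prod (fV.prod fP))
  have h := fK.prod (fV.prod ((fB.prod (fP.prod (((fP.prod fR).finset a1).prod ((fP.finset a2).prod
    ((fP.finset a3).prod (((fV.prod (fV.prod fP)).finset a4).prod
      ((fBR.finset a5).prod (fBR.finset a6)))))))).pi Hn))
  exact h.mono le_rfl fun x hx => hx

end
end VFL

namespace VFL
set_option linter.all false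
set_option autoImplicit false
open scoped Classical
open Finset
noncomputable section

/-! ### Section 10: parameters and the main construction -/

def pL (lam : ℕ) : ℕ := lam + 1
def pVis (lam : ℕ) : ℕ := pL lam + pL lam * ((7 * lam + 9) + 2)
def pH (g lam : ℕ) : ℕ := g * lam
def pD (g lam f : ℕ) : ℕ := 2 * f * ((2 * g + 1) * lam)
def pJ (g lam f : ℕ) : ℕ := 8 * f * ((g + 4) * lam)
def pA (lam f : ℕ) : ℕ := 2 * (3 * f * pL lam)
def pe (g lam : ℕ) : ℕ := (g + 15) * lam
def pQ (lam f : ℕ) : ℕ := 3 * f * (2 * pVis lam + 2 * pL lam)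
def pk (g lam f : ℕ) : ℕ := g * lam + pQ lam f + lam + pe g lam + g * lam
def pRd (g lam f : ℕ) : ℕ := f + pD g lam f + 1
def pb (g lam f : ℕ) : ℕ := pk g lam f + (lam + pH g lam *
  factBits lam (pk g lam f) (pe g lam) (pRd g lam f) (2 * pVis lam + 2 * pL lam) (pVis lam) (pL lam)
    (pL lam * pD g lam f) (pJ g lam f * pA lam f)
    (pL lam * (pJ g lam f * pD g lam f + pD g lam f * pD g lam f)))

theorem two_pow_ge (x : ℕ) : x ≤ 2 ^ x := (Nat.lt_two_pow_self).le

theorem edge_card {g lam f n : ℕ} (hlam : 1 ≤ lam) (hn : n ≤ 2 ^ lam) (hf : f ≤ 2 ^ lam) :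
    Fintype.card (Edg (Fin n) (Fin (pJ g lam f)) (Fin (pA lam f))) ≤ 2 ^ pe g lam := by
  have e : Fintype.card (Edg (Fin n) (Fin (pJ g lam f)) (Fin (pA lam f))) =
      pJ g lam f * (pA lam f * n) + n * (n * (n + 1)) := by simp
  rw [e]
  have h1 : pJ g lam f ≤ 2 ^ 3 * 2 ^ lam * 2 ^ ((g + 4) * lam) := by
    unfold pJ
    exact Nat.mul_le_mul (Nat.mul_le_mul (by norm_num) hf) (two_pow_ge _)
  have h0 : lam + 1 ≤ 2 ^ lam := Nat.lt_two_pow_self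
  have h2 : pA lam f ≤ 2 ^ 3 * 2 ^ lam * 2 ^ lam := by
    unfold pA pL
    have := Nat.mul_le_mul hf h0
    nlinarith
  have h3 : n + 1 ≤ 2 ^ (2 * lam) := by
    have e1 : 2 ^ (2 * lam) = 2 ^ lam * 2 ^ lam := by rw [← pow_add]; congr 1; omega
    have : 2 ≤ 2 ^ lam := by
      calc 2 = 2 ^ 1 := rfl
        _ ≤ 2 ^ lam := Nat.pow_le_pow_right (by norm_num) hlam
    nlinarith
  have h4 : pJ g lam f * (pA lam f * n) ≤
      2 ^ 3 * 2 ^ lam * 2 ^ ((g + 4) * lam) * (2 ^ 3 * 2 ^ lam * 2 ^ lam * 2 ^ lam) :=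
    Nat.mul_le_mul h1 (Nat.mul_le_mul h2 hn)
  have h5 : n * (n * (n + 1)) ≤ 2 ^ lam * (2 ^ lam * 2 ^ (2 * lam)) :=
    Nat.mul_le_mul hn (Nat.mul_le_mul hn h3)
  have h6 : 2 ^ 3 * 2 ^ lam * 2 ^ ((g + 4) * lam) * (2 ^ 3 * 2 ^ lam * 2 ^ lam * 2 ^ lam) =
      2 ^ (6 + 4 * lam + (g + 4) * lam) := by
    ring
  have h7 : 2 ^ lam * (2 ^ lam * 2 ^ (2 * lam)) = 2 ^ (4 * lam) := by
    rw [← pow_add, ← pow_add]; congr 1; omega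
  rw [h6] at h4
  rw [h7] at h5
  have h8 : 2 ^ (4 * lam) ≤ 2 ^ (6 + 4 * lam + (g + 4) * lam) :=
    Nat.pow_le_pow_right (by norm_num) (by omega)
  have h9 : 2 ^ (6 + 4 * lam + (g + 4) * lam + 1) ≤ 2 ^ pe g lam := by
    apply Nat.pow_le_pow_right (by norm_num)
    unfold pe
    nlinarith
  rw [pow_succ] at h9
  omega

theorem hier_all {n lam : ℕ} (G : SimpleGraph (Fin n)) (hn : n ≤ 2 ^ lam) :
    ∃ lev : Fin n → ℕ, (∀ v, ((reps G lev).filter fun c => v ∈ Gam G lev c).card ≤ pL lam) ∧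
      ∀ S, Nonempty (Hier G (Gam G lev) (reps G lev) S (pVis lam)) := by
  obtain ⟨lev, hlev⟩ := levels_exists G
  have hL : ∀ x, lev x < pL lam := by
    intro x
    have h1 := (hlev.pow x).trans (by simpa using hn)
    have := (Nat.pow_le_pow_iff_right (by norm_num : 1 < 2)).1 h1
    unfold pL; omega
  refine ⟨lev, overlap G lev hL, fun S => ?_⟩
  have hl : Fintype.card (Fin n) < 2 ^ (lam + 1) := by
    rw [Fintype.card_fin, pow_succ]
    have := Nat.one_le_two_pow (n := lam)
    omega
  have hT : ∀ i, ∃ T ≤ Gle G lev i, (∀ u u', lev u = i → lev u' = i → (Gle G lev i).Reachable u u' →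
      T.Reachable u u') ∧ ∀ v, dg T v ≤ 7 * lam + 9 := by
    intro i
    by_cases hi : i ≤ lam
    · obtain ⟨T, h1, h2, h3⟩ := steiner G lev hlev (lam + 1) hl i
      exact ⟨T, h1, h2, fun v => (h3 v).trans (by omega)⟩
    · refine ⟨⊥, bot_le, ?_, ?_⟩
      · intro u u' hu
        have := hL u
        unfold pL at this
        omega
      · intro v
        have : dg (⊥ : SimpleGraph (Fin n)) v = 0 := by simp [dg]
        omega
  choose T hT1 hT2 hT3 using hT
  exact hier_exists G lev S T hT1 (7 * lam + 9) hT2 hT3 (pL lam) hL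

theorem core {g lam f n : ℕ} (hlam : 1 ≤ lam) (hn1 : 1 ≤ n) (hn : n ≤ 2 ^ lam) (hf1 : 1 ≤ f)
    (hf : f ≤ 2 ^ lam) {Kf : Type} [Field Kf] [Fintype Kf] (h2 : ∀ a : Kf, a + a = 0)
    (hKf : Fintype.card Kf = 2 ^ pk g lam f) :
    ∃ D : (Fin (pb g lam f) → Bool) → (Fin (pb g lam f) → Bool) → Finset (Fin (pb g lam f) → Bool) → Bool,
    ∀ G : SimpleGraph (Fin n), ∃ (Ω : Type) (_ : Fintype Ω) (_ : Nonempty Ω)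
      (LV : Ω → Fin n → Fin (pb g lam f) → Bool), ∀ (s t : Fin n) (F : Finset (Fin n)), s ∉ F → t ∉ F →
      F.card ≤ f → pr (fun ω => ¬ (D (LV ω s) (LV ω t) (F.image (LV ω)) = true ↔ (del G F).Reachable s t)) ≤
        4 * (1 / 2 : ℝ) ^ (g * lam) := by
  have hE := edge_card (g := g) hlam hn hf
  have hlk : lam ≤ pk g lam f := by unfold pk; omega
  obtain ⟨ν⟩ : Nonempty (Fin n ↪ Kf) := by
    apply Function.Embedding.nonempty_of_card_le
    rw [hKf, Fintype.card_fin]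
    exact hn.trans (Nat.pow_le_pow_right (by norm_num) hlk)
  set E := Edg (Fin n) (Fin (pJ g lam f)) (Fin (pA lam f)) with hEdef
  set eid : E → ℕ := fun e => (Fintype.equivFin E e : ℕ) with heid
  have hid : Function.Injective eid := fun a b h => (Fintype.equivFin E).injective (Fin.ext h)
  have hI : ∀ e, eid e ≤ Fintype.card E := fun e => (Fintype.equivFin E e).isLt.le
  haveI : Nonempty (Lab (Fin n) E Kf (pRd g lam f) (pH g lam)) :=
    ⟨(0, ⟨0, hn1⟩, fun _ => (false, (⟨0, hn1⟩, 0), ∅, ∅, ∅, ∅, ∅, ∅))⟩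
  obtain ⟨enc, dec, hdec⟩ := (Lab_fits (V := Fin n) (E := E) (Kf := Kf) (Rd := pRd g lam f) (Hn := pH g lam)
    (lam := lam) (k := pk g lam f) (e := pe g lam) (by simpa using hn) hE hKf.le
    (2 * pVis lam + 2 * pL lam) (pVis lam) (pL lam)
    (pL lam * pD g lam f) (pJ g lam f * pA lam f)
    (pL lam * (pJ g lam f * pD g lam f + pD g lam f * pD g lam f))).bits
  refine ⟨fun a b l => Dec ν eid (dec a) (dec b) (l.image dec), fun G => ?_⟩
  obtain ⟨lev, hov, hH⟩ := hier_all G hn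
  haveI : NeZero (2 * f) := ⟨by omega⟩
  have hA1 : 1 ≤ pA lam f := by
    unfold pA pL
    have : 1 ≤ f * (lam + 1) := Nat.mul_pos hf1 (by omega)
    nlinarith
  haveI : NeZero (pA lam f) := ⟨by omega⟩
  set S : (Fin (pH g lam) → Fin n → Fin (2 * f)) → Fin (pH g lam) → Finset (Fin n) :=
    fun φ h => univ.filter fun v => φ h v = 0 with hS
  set Hr : ∀ (φ : Fin (pH g lam) → Fin n → Fin (2 * f)) (h : Fin (pH g lam)),
    Hier G (Gam G lev) (reps G lev) (S φ h) (pVis lam) := fun φ h => (hH (S φ h)).some with hHr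
  let Ω := (Fin (pH g lam) → Fin n → Fin (2 * f)) ×
    (Fin (pJ g lam f) → (Option (Fin n) → Fin (pA lam f)) × (Fin n → Fin (2 * f))) × Kf
  let lab : Ω → Fin n → Lab (Fin n) E Kf (pRd g lam f) (pH g lam) := fun ω v =>
    mkLab (pRd g lam f) (Hr ω.1) (fun j => (ω.2.1 j).1) (fun j => (ω.2.1 j).2) ν eid ω.2.2 v
  refine ⟨Ω, inferInstance, inferInstance, fun ω v => enc (lab ω v), ?_⟩
  intro s t F hs ht hF
  set M := insert s (insert t F) with hM
  have hMc : M.card ≤ 3 * f := by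
    have h1 := card_insert_le s (insert t F)
    have h2 := card_insert_le t F
    rw [hM]
    omega
  set E4 : Fin (pH g lam) → Ω → Prop := fun h ω =>
    ¬ ∀ χ, Allow (F.biUnion (fcellF (Hr ω.1 h))) (M.biUnion (blkF (Hr ω.1 h))) (QP (Hr ω.1 h) M) χ → ∀ c,
      Pol (Hr ω.1 h) (fun j => (ω.2.1 j).1) (fun j => (ω.2.1 j).2) ν eid F M χ c ≠ 0 →
      (Pol (Hr ω.1 h) (fun j => (ω.2.1 j).1) (fun j => (ω.2.1 j).2) ν eid F M χ c).eval ω.2.2 ≠ 0 with hE4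
  set E1 : Ω → Prop := fun ω => ∀ h, ∃ v ∈ F, ω.1 h v = 0 with hE1
  set E2 : Ω → Prop := fun ω => ∃ h x, 2 * f * ((2 * g + 1) * lam) < (nb G (Gam G lev x)).card ∧
    ∀ v ∈ nb G (Gam G lev x), ω.1 h v ≠ 0 with hE2
  set E3 : Ω → Prop := fun ω => ¬ Iso (fun j => (ω.2.1 j).1) (fun j => (ω.2.1 j).2) (Gam G lev)
    (reps G lev) F M with hE3
  -- correctness outside of the bad events
  have hgood : ∀ ω, ¬ (Dec ν eid (dec (enc (lab ω s))) (dec (enc (lab ω t)))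
      ((F.image fun v => enc (lab ω v)).image dec) = true ↔ (del G F).Reachable s t) →
      E1 ω ∨ E2 ω ∨ E3 ω ∨ ∃ h ∈ (univ : Finset (Fin (pH g lam))), E4 h ω := by
    intro ω hω
    by_contra hcon
    push Not at hcon
    obtain ⟨c1, c2, c3, c4⟩ := hcon
    apply hω
    have hD : ∀ h, ∀ c ∈ (Hr ω.1 h).R, (nb G (Gam G lev c)).card ≤ pD g lam f := by
      intro h c hc
      by_contra hlt
      apply c2
      refine ⟨h, c, by unfold pD at hlt; omega, ?_⟩
      intro v hv h0
      exact disjoint_left.1 ((Hr ω.1 h).unatt c hc) hv (mem_filter.2 ⟨mem_univ _, h0⟩)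
    have hok : ∀ v, dec (enc (lab ω v)) = lab ω v := by
      intro v
      apply hdec
      have := mkLab_ok (pRd g lam f) (Hr ω.1) (fun j => (ω.2.1 j).1) (fun j => (ω.2.1 j).2) ν eid ω.2.2 hov hD v
      simpa only [Fintype.card_fin] using this
    rw [hok, hok]
    refine Dec_correct (pRd g lam f) (Hr ω.1) (fun j => (ω.2.1 j).1) (fun j => (ω.2.1 j).2) ν eid ω.2.2 h2 ν.injective
      hid ?_ hs ht ?_ ?_ ?_ ?_ _ ?_
    · intro c x hx y hy
      exact Gam_conn G lev hx hy
    · have : ∃ h, ∀ v ∈ F, ω.1 h v ≠ 0 := by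
        by_contra h'
        push Not at h'
        exact c1 h'
      obtain ⟨h, hh⟩ := this
      refine ⟨h, disjoint_left.2 fun v hv hv' => hh v hv (mem_filter.1 hv').2⟩
    · by_contra h'
      exact c3 h'
    · intro h c hc
      have := hD h c hc
      unfold pRd
      omega
    · intro h
      have h' := c4 h (mem_univ _)
      exact h'
    · intro l
      simp only [mem_image, exists_exists_and_eq_and, hok]
      rfl
  -- probabilities
  have hε : (0:ℝ) ≤ (1 / 2 : ℝ) ^ (g * lam) := by positivity
  have hnR : (n : ℝ) ≤ 2 ^ lam := by exact_mod_cast hn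
  have p1 : pr E1 ≤ (1 / 2 : ℝ) ^ (g * lam) := by
    refine pr_snd hε fun y => ?_
    exact miss_event hf1 F hF
  have p2 : pr E2 ≤ (1 / 2 : ℝ) ^ (g * lam) := by
    refine pr_snd hε fun y => ?_
    refine (hit_event (d := (2 * g + 1) * lam) hf1 (fun x => nb G (Gam G lev x))).trans ?_
    have h1 : ((pH g lam * Fintype.card (Fin n) : ℕ) : ℝ) ≤ 2 ^ (g * lam) * 2 ^ lam := by
      rw [Fintype.card_fin]
      exact_mod_cast Nat.mul_le_mul (two_pow_ge (g * lam)) hn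
    calc ((pH g lam * Fintype.card (Fin n) : ℕ) : ℝ) * (1 / 2) ^ ((2 * g + 1) * lam)
        ≤ 2 ^ (g * lam) * 2 ^ lam * (1 / 2) ^ ((2 * g + 1) * lam) := by gcongr
      _ = (1 / 2 : ℝ) ^ (g * lam) := by
        have e : (2 * g + 1) * lam = g * lam + lam + g * lam := by ring
        rw [e, pow_add, pow_add]
        have e1 : (2:ℝ) ^ (g * lam) * (1 / 2) ^ (g * lam) = 1 := by rw [← mul_pow]; norm_num
        have e2 : (2:ℝ) ^ lam * (1 / 2) ^ lam = 1 := by rw [← mul_pow]; norm_num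
        linear_combination (2 ^ lam * (1 / 2) ^ lam * (1 / 2) ^ (g * lam)) * e1 + (1 / 2) ^ (g * lam) * e2
  have p3 : pr E3 ≤ (1 / 2 : ℝ) ^ (g * lam) := by
    refine pr_fst hε fun x => pr_snd hε fun y => ?_
    refine (iso_event (L := pL lam) hf1 hA1 (Gam G lev) (reps G lev) F M hov hF ?_).trans ?_
    · unfold pA
      exact Nat.mul_le_mul_left _ (Nat.mul_le_mul_right _ hMc)
    · have h3 : n + 1 ≤ 2 ^ (2 * lam) := by
        have e1 : 2 ^ (2 * lam) = 2 ^ lam * 2 ^ lam := by rw [← pow_add]; congr 1; omega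
        have : 2 ≤ 2 ^ lam := by
          calc 2 = 2 ^ 1 := rfl
            _ ≤ 2 ^ lam := Nat.pow_le_pow_right (by norm_num) hlam
        nlinarith
      have h1 : ((Fintype.card (Fin n) * (Fintype.card (Fin n) * (Fintype.card (Fin n) + 1)) : ℕ) : ℝ) ≤
          2 ^ lam * (2 ^ lam * 2 ^ (2 * lam)) := by
        rw [Fintype.card_fin]
        exact_mod_cast Nat.mul_le_mul hn (Nat.mul_le_mul hn h3)
      have h4 := pow_decay (8 * f) ((g + 4) * lam) (by omega)
      have h5 : pJ g lam f = 8 * f * ((g + 4) * lam) := rfl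
      rw [← h5] at h4
      refine (mul_le_mul h1 h4 ?_ (by positivity)).trans (le_of_eq ?_)
      · apply pow_nonneg
        rw [sub_nonneg]
        apply div_le_one_of_le₀
        · have : 1 ≤ 8 * f := by omega
          exact_mod_cast this
        · positivity
      · have e : (g + 4) * lam = lam + lam + 2 * lam + g * lam := by ring
        rw [e, pow_add, pow_add, pow_add]
        have e1 : (2:ℝ) ^ (2 * lam) * (1 / 2) ^ (2 * lam) = 1 := by rw [← mul_pow]; norm_num
        have e2 : (2:ℝ) ^ lam * (1 / 2) ^ lam = 1 := by rw [← mul_pow]; norm_num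
        calc (2:ℝ) ^ lam * (2 ^ lam * 2 ^ (2 * lam)) *
            ((1 / 2) ^ lam * (1 / 2) ^ lam * (1 / 2) ^ (2 * lam) * (1 / 2) ^ (g * lam))
            = ((2:ℝ) ^ lam * (1 / 2) ^ lam) * ((2:ℝ) ^ lam * (1 / 2) ^ lam) *
              ((2:ℝ) ^ (2 * lam) * (1 / 2) ^ (2 * lam)) * (1 / 2) ^ (g * lam) := by ring
          _ = _ := by rw [e1, e2]; ring
  have p4 : pr (fun ω => ∃ h ∈ (univ : Finset (Fin (pH g lam))), E4 h ω) ≤ (1 / 2 : ℝ) ^ (g * lam) := by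
    refine pr_fst hε fun x => pr_fst hε fun y => ?_
    refine (pr_ex_le univ (fun h (α : Kf) => E4 h (x, y, α)) (((2 ^ pQ lam f * 2 ^ lam : ℕ) : ℝ) *
      ((2 ^ pe g lam : ℕ) / (2 ^ pk g lam f : ℕ))) ?_).trans ?_
    · intro h _
      refine (alpha_event (Hr x h) (fun j => (y j).1) (fun j => (y j).2) ν eid hI F M).trans ?_
      rw [hKf]
      have hq : (QP (Hr x h) M).card ≤ pQ lam f :=
        (QP_card (Hr x h) hov M).trans (Nat.mul_le_mul_right _ hMc)
      have h1 : 2 ^ (QP (Hr x h) M).card * Fintype.card (Fin n) ≤ 2 ^ pQ lam f * 2 ^ lam := by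
        rw [Fintype.card_fin]
        exact Nat.mul_le_mul (Nat.pow_le_pow_right (by norm_num) hq) hn
      gcongr
    · have h1 : ((univ : Finset (Fin (pH g lam))).card : ℝ) ≤ 2 ^ (g * lam) := by
        rw [card_univ, Fintype.card_fin]
        exact_mod_cast two_pow_ge (g * lam)
      refine (mul_le_mul_of_nonneg_right h1 (by positivity)).trans (le_of_eq ?_)
      push_cast
      have e : (2:ℝ) ^ pk g lam f = 2 ^ (g * lam) * 2 ^ pQ lam f * 2 ^ lam * 2 ^ pe g lam * 2 ^ (g * lam) := by
        unfold pk
        rw [pow_add, pow_add, pow_add, pow_add]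
      rw [e, one_div, inv_pow]
      field_simp
  refine (pr_mono hgood).trans ((pr_or _ _).trans ?_)
  have q2 := pr_or E2 (fun ω => E3 ω ∨ ∃ h ∈ (univ : Finset (Fin (pH g lam))), E4 h ω)
  have q3 := pr_or E3 (fun ω => ∃ h ∈ (univ : Finset (Fin (pH g lam))), E4 h ω)
  linarith

end
end VFL

namespace VFL
set_option linter.all false
set_option autoImplicit false
open scoped Classical
open Finset
noncomputable section

/-! ### Section 11: size bound and final assembly -/

def Bd (X : ℕ → ℕ → ℕ) (b a : ℕ) : Prop :=
  ∃ C : ℕ, ∀ lam f : ℕ, 1 ≤ lam → 1 ≤ f → X lam f ≤ C * (f ^ b * lam ^ a)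

theorem Bd.const (k : ℕ) : Bd (fun _ _ => k) 0 0 := ⟨k, fun _ _ _ _ => by simp⟩
theorem Bd.lam : Bd (fun l _ => l) 0 1 := ⟨1, fun _ _ _ _ => by simp⟩
theorem Bd.ff : Bd (fun _ f => f) 1 0 := ⟨1, fun _ _ _ _ => by simp⟩
theorem Bd.mul {X Y : ℕ → ℕ → ℕ} {b a b' a' : ℕ} (h : Bd X b a) (h' : Bd Y b' a') :
    Bd (fun l f => X l f * Y l f) (b + b') (a + a') := by
  obtain ⟨C, hC⟩ := h
  obtain ⟨C', hC'⟩ := h'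
  refine ⟨C * C', fun l f hl hf => (Nat.mul_le_mul (hC l f hl hf) (hC' l f hl hf)).trans (le_of_eq ?_)⟩
  ring
theorem Bd.mono {X : ℕ → ℕ → ℕ} {b a b' a' : ℕ} (h : Bd X b a) (hb : b ≤ b') (ha : a ≤ a') : Bd X b' a' := by
  obtain ⟨C, hC⟩ := h
  exact ⟨C, fun l f hl hf => (hC l f hl hf).trans (Nat.mul_le_mul_left _
    (Nat.mul_le_mul (Nat.pow_le_pow_right hf hb) (Nat.pow_le_pow_right hl ha)))⟩
theorem Bd.add' {X Y : ℕ → ℕ → ℕ} {b a : ℕ} (h : Bd X b a) (h' : Bd Y b a) :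
    Bd (fun l f => X l f + Y l f) b a := by
  obtain ⟨C, hC⟩ := h
  obtain ⟨C', hC'⟩ := h'
  exact ⟨C + C', fun l f hl hf => (Nat.add_le_add (hC l f hl hf) (hC' l f hl hf)).trans (le_of_eq (by ring))⟩
theorem Bd.add {X Y : ℕ → ℕ → ℕ} {b a b' a' : ℕ} (h : Bd X b a) (h' : Bd Y b' a') :
    Bd (fun l f => X l f + Y l f) (max b b') (max a a') :=
  Bd.add' (h.mono (le_max_left _ _) (le_max_left _ _)) (h'.mono (le_max_right _ _) (le_max_right _ _))

theorem bd_L : Bd (fun l _ => pL l) 0 1 := Bd.add Bd.lam (Bd.const 1)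
theorem bd_Vis : Bd (fun l _ => pVis l) 0 2 :=
  Bd.add bd_L (Bd.mul bd_L (Bd.add (Bd.add (Bd.mul (Bd.const 7) Bd.lam) (Bd.const 9)) (Bd.const 2)))
theorem bd_H (g : ℕ) : Bd (fun l _ => pH g l) 0 1 := Bd.mul (Bd.const g) Bd.lam
theorem bd_D (g : ℕ) : Bd (fun l f => pD g l f) 1 1 :=
  Bd.mul (Bd.mul (Bd.const 2) Bd.ff) (Bd.mul (Bd.const (2 * g + 1)) Bd.lam)
theorem bd_J (g : ℕ) : Bd (fun l f => pJ g l f) 1 1 :=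
  Bd.mul (Bd.mul (Bd.const 8) Bd.ff) (Bd.mul (Bd.const (g + 4)) Bd.lam)
theorem bd_A : Bd (fun l f => pA l f) 1 1 :=
  Bd.mul (Bd.const 2) (Bd.mul (Bd.mul (Bd.const 3) Bd.ff) bd_L)
theorem bd_e (g : ℕ) : Bd (fun l _ => pe g l) 0 1 := Bd.mul (Bd.const (g + 15)) Bd.lam
theorem bd_Q : Bd (fun l f => pQ l f) 1 2 :=
  Bd.mul (Bd.mul (Bd.const 3) Bd.ff) (Bd.add (Bd.mul (Bd.const 2) bd_Vis) (Bd.mul (Bd.const 2) bd_L))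
theorem bd_k (g : ℕ) : Bd (fun l f => pk g l f) 1 2 :=
  Bd.add (Bd.add (Bd.add (Bd.add (Bd.mul (Bd.const g) Bd.lam) bd_Q) Bd.lam) (bd_e g))
    (Bd.mul (Bd.const g) Bd.lam)
theorem bd_Rd (g : ℕ) : Bd (fun l f => pRd g l f) 1 1 :=
  Bd.add (Bd.add Bd.ff (bd_D g)) (Bd.const 1)
theorem bd_w : Bd (fun l _ => l + (2 * l + 1)) 0 1 :=
  Bd.add Bd.lam (Bd.add (Bd.mul (Bd.const 2) Bd.lam) (Bd.const 1))
theorem bd_w3 (g : ℕ) : Bd (fun l _ => pe g l + ((l + (2 * l + 1)) + (l + (l + (2 * l + 1)))) + 1) 0 1 :=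
  Bd.add (Bd.add (bd_e g) (Bd.add bd_w (Bd.add Bd.lam bd_w))) (Bd.const 1)

theorem bd_fact (g : ℕ) : Bd (fun lam f =>
    factBits lam (pk g lam f) (pe g lam) (pRd g lam f) (2 * pVis lam + 2 * pL lam) (pVis lam) (pL lam)
    (pL lam * pD g lam f) (pJ g lam f * pA lam f)
    (pL lam * (pJ g lam f * pD g lam f + pD g lam f * pD g lam f))) 2 5 := by
  unfold factBits
  have x1 : Bd (fun lam f => (2 * pVis lam + 2 * pL lam) * ((lam + (2 * lam + 1)) + pRd g lam f * pk g lam f + 1)) 2 5 :=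
    Bd.mul (Bd.add (Bd.mul (Bd.const 2) bd_Vis) (Bd.mul (Bd.const 2) bd_L))
      (Bd.add (Bd.add bd_w (Bd.mul (bd_Rd g) (bd_k g))) (Bd.const 1))
  have x2 : Bd (fun lam f => pVis lam * ((lam + (2 * lam + 1)) + 1)) 0 3 :=
    Bd.mul bd_Vis (Bd.add bd_w (Bd.const 1))
  have x3 : Bd (fun lam f => pL lam * ((lam + (2 * lam + 1)) + 1)) 0 2 :=
    Bd.mul bd_L (Bd.add bd_w (Bd.const 1))
  have x4 : Bd (fun lam f => (pL lam * pD g lam f) * (lam + (lam + (lam + (2 * lam + 1))) + 1)) 1 3 :=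
    Bd.mul (Bd.mul bd_L (bd_D g)) (Bd.add (Bd.add Bd.lam (Bd.add Bd.lam bd_w)) (Bd.const 1))
  have x5 : Bd (fun lam f => (pJ g lam f * pA lam f) *
      (pe g lam + ((lam + (2 * lam + 1)) + (lam + (lam + (2 * lam + 1)))) + 1)) 2 3 :=
    Bd.mul (Bd.mul (bd_J g) bd_A) (bd_w3 g)
  have x6 : Bd (fun lam f => (pL lam * (pJ g lam f * pD g lam f + pD g lam f * pD g lam f)) *
      (pe g lam + ((lam + (2 * lam + 1)) + (lam + (lam + (2 * lam + 1)))) + 1)) 2 4 :=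
    Bd.mul (Bd.mul bd_L (Bd.add (Bd.mul (bd_J g) (bd_D g)) (Bd.mul (bd_D g) (bd_D g)))) (bd_w3 g)
  exact Bd.add (Bd.const 1) (Bd.add bd_w (Bd.add x1 (Bd.add x2 (Bd.add x3 (Bd.add x4 (Bd.add x5 x6))))))

theorem bd_b (g : ℕ) : Bd (fun lam f => pb g lam f) 2 6 :=
  Bd.add (bd_k g) (Bd.add Bd.lam (Bd.mul (bd_H g) (bd_fact g)))

theorem del_iff_induce {n : ℕ} (G : SimpleGraph (Fin n)) (F : Finset (Fin n)) (s t : Fin n)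
    (hs : s ∈ ((↑F : Set (Fin n))ᶜ)) (ht : t ∈ ((↑F : Set (Fin n))ᶜ)) :
    (del G F).Reachable s t ↔ (G.induce ((↑F : Set (Fin n))ᶜ)).Reachable ⟨s, hs⟩ ⟨t, ht⟩ := by
  constructor
  · intro h
    have := reach_inv (A := del G F) (fun v => ∃ hv : v ∈ ((↑F : Set (Fin n))ᶜ),
      (G.induce ((↑F : Set (Fin n))ᶜ)).Reachable ⟨s, hs⟩ ⟨v, hv⟩) ?_ h ⟨hs, SimpleGraph.Reachable.refl _⟩
    · exact this.2
    · rintro u v ⟨huv, hu, hv⟩ ⟨hu', hr⟩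
      have hv' : v ∈ ((↑F : Set (Fin n))ᶜ) := by simpa using hv
      refine ⟨hv', hr.trans (SimpleGraph.Adj.reachable ?_)⟩
      exact huv
  · intro h
    have := reach_inv (A := G.induce ((↑F : Set (Fin n))ᶜ)) (fun v => (del G F).Reachable s v.1) ?_ h
      (SimpleGraph.Reachable.refl _)
    · exact this
    · intro u v huv hr
      refine hr.trans (SimpleGraph.Adj.reachable ⟨huv, ?_, ?_⟩)
      · exact fun hm => u.2 (Finset.mem_coe.2 hm)
      · exact fun hm => v.2 (Finset.mem_coe.2 hm)

theorem sum_good {Ω : Type} [Fintype Ω] [Nonempty Ω] (P : Ω → Prop) (e : Fin (Fintype.card Ω) ≃ Ω) (ε : ℝ)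
    (h : pr (fun ω => ¬ P ω) ≤ ε) (Q : Fin (Fintype.card Ω) → Prop) [DecidablePred Q] (hQ : ∀ i, Q i ↔ P (e i)) :
    1 - ε ≤ ∑ i ∈ univ.filter Q, (1 / Fintype.card Ω : ℝ) := by
  have h1 : pr (fun i => P (e i)) = pr P := pr_equiv e P
  rw [pr_not] at h
  have h2 : ∑ i ∈ univ.filter Q, (1 / Fintype.card Ω : ℝ) = pr (fun i => P (e i)) := by
    unfold pr
    rw [sum_const, nsmul_eq_mul, mul_one_div, Fintype.card_fin]
    congr 3
    ext i
    simp [hQ]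
  linarith

theorem final (c : ℝ) (hc : 1 ≤ c) : ∃ C : ℝ, ∀ n f : ℕ, 2 ≤ n → 1 ≤ f →
      ∃ b : ℕ,
        (b : ℝ) ≤ C * (f : ℝ) ^ 2 * (Real.logb 2 n) ^ 6 ∧
        ∃ D : (Fin b → Bool) → (Fin b → Bool) → Finset (Fin b → Bool) → Bool,
          ∀ G : SimpleGraph (Fin n),
            ∃ (N : ℕ) (μ : Fin N → ℝ) (LV : Fin N → Fin n → Fin b → Bool),
              (∀ ω, 0 ≤ μ ω) ∧ (∑ ω, μ ω = 1) ∧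
              ∀ (s t : Fin n) (F : Finset (Fin n)) (hs : s ∉ F) (ht : t ∉ F),
                F.card ≤ f →
                1 - (n : ℝ) ^ (-c) ≤
                  ∑ ω ∈ Finset.univ.filter (fun ω =>
                      (D (LV ω s) (LV ω t) (F.image (LV ω)) = true ↔
                        (G.induce ((↑F : Set (Fin n))ᶜ)).Reachable
                          ⟨s, by simpa using hs⟩ ⟨t, by simpa using ht⟩)),
                    μ ω := by
  set c0 := ⌈c⌉₊ with hc0
  obtain ⟨C1, hC1⟩ := bd_b (c0 + 2)
  refine ⟨64 * C1, ?_⟩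
  intro n f hn hf
  set lam := Nat.clog 2 n with hlamdef
  have hlam : 1 ≤ lam := Nat.clog_pos (by norm_num) hn
  have hnl : n ≤ 2 ^ lam := Nat.le_pow_clog (by norm_num) n
  have hlt : 2 ^ (lam - 1) < n := Nat.pow_pred_clog_lt_self (by norm_num) (by omega)
  have hnR : (2:ℝ) ≤ n := by exact_mod_cast hn
  have hlog1 : 1 ≤ Real.logb 2 n := by
    rw [Real.le_logb_iff_rpow_le (by norm_num) (by linarith)]
    simpa using hnR
  have hlog2 : (lam : ℝ) ≤ 2 * Real.logb 2 n := by
    have h1 : ((lam - 1 : ℕ) : ℝ) ≤ Real.logb 2 n := by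
      rw [Real.le_logb_iff_rpow_le (by norm_num) (by linarith), Real.rpow_natCast]
      exact_mod_cast hlt.le
    rw [Nat.cast_sub hlam] at h1
    push_cast at h1
    linarith
  set f0 := min f n with hf0
  have hf01 : 1 ≤ f0 := le_min hf (by omega)
  have hf0f : f0 ≤ f := min_le_left _ _
  have hf0l : f0 ≤ 2 ^ lam := (min_le_right _ _).trans hnl
  refine ⟨pb (c0 + 2) lam f0, ?_, ?_⟩
  · have h1 : ((pb (c0 + 2) lam f0 : ℕ) : ℝ) ≤ C1 * ((f0:ℝ) ^ 2 * (lam:ℝ) ^ 6) := by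
      exact_mod_cast hC1 lam f0 hlam hf01
    have h2 : (f0:ℝ) ^ 2 ≤ (f:ℝ) ^ 2 := by
      have : (f0:ℝ) ≤ f := by exact_mod_cast hf0f
      gcongr
    have h3 : (lam:ℝ) ^ 6 ≤ (2 * Real.logb 2 n) ^ 6 := by gcongr
    calc ((pb (c0 + 2) lam f0 : ℕ) : ℝ) ≤ C1 * ((f0:ℝ) ^ 2 * (lam:ℝ) ^ 6) := h1
      _ ≤ C1 * ((f:ℝ) ^ 2 * (2 * Real.logb 2 n) ^ 6) := by gcongr
      _ = _ := by ring
  · have hk : pk (c0 + 2) lam f0 ≠ 0 := by unfold pk; omega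
    letI : Fintype (GaloisField 2 (pk (c0 + 2) lam f0)) := Fintype.ofFinite _
    have hcard : Fintype.card (GaloisField 2 (pk (c0 + 2) lam f0)) = 2 ^ pk (c0 + 2) lam f0 := by
      rw [← Nat.card_eq_fintype_card]
      exact GaloisField.card 2 _ hk
    obtain ⟨D, hD⟩ := core (g := c0 + 2) hlam (by omega : 1 ≤ n) hnl hf01 hf0l
      (Kf := GaloisField 2 (pk (c0 + 2) lam f0)) (fun a => CharTwo.add_self_eq_zero a) hcard
    refine ⟨D, fun G => ?_⟩
    obtain ⟨Ω, i1, i2, LV, h⟩ := hD G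
    have e : Fin (Fintype.card Ω) ≃ Ω := (Fintype.equivFin Ω).symm
    have hpos : (0:ℝ) < Fintype.card Ω := by exact_mod_cast Fintype.card_pos
    refine ⟨Fintype.card Ω, fun _ => 1 / Fintype.card Ω, fun i => LV (e i), fun _ => by positivity, ?_, ?_⟩
    · rw [sum_const, card_univ, Fintype.card_fin, nsmul_eq_mul]
      field_simp
    · intro s t F hs ht hF
      have hFn : F.card ≤ n := by simpa using card_le_univ F
      have h1 := h s t F hs ht (le_min hF hFn)
      refine sum_good _ e _ (h1.trans ?_) _ ?_
      · have hc' : c ≤ c0 := Nat.le_ceil c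
        have h2 : (n:ℝ) ^ c ≤ 2 ^ (c0 * lam) := by
          calc (n:ℝ) ^ c ≤ (n:ℝ) ^ (c0:ℝ) := Real.rpow_le_rpow_of_exponent_le (by linarith) hc'
            _ = (n:ℝ) ^ c0 := Real.rpow_natCast _ _
            _ ≤ ((2:ℝ) ^ lam) ^ c0 := by
              have : (n:ℝ) ≤ 2 ^ lam := by exact_mod_cast hnl
              gcongr
            _ = _ := by rw [← pow_mul, mul_comm]
        have h3 : (4:ℝ) * (1 / 2) ^ ((c0 + 2) * lam) ≤ (1 / 2) ^ (c0 * lam) := by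
          have e1 : (c0 + 2) * lam = c0 * lam + 2 * lam := by ring
          have e2 : (1 / 2 : ℝ) ^ (2 * lam) ≤ (1 / 2) ^ 2 :=
            pow_le_pow_of_le_one (by norm_num) (by norm_num) (by omega)
          rw [e1, pow_add]
          have : (0:ℝ) ≤ (1 / 2) ^ (c0 * lam) := by positivity
          nlinarith
        refine h3.trans ?_
        rw [Real.rpow_neg (by linarith), one_div, inv_pow]
        exact inv_anti₀ (Real.rpow_pos_of_pos (by linarith) _) h2
      · intro i
        rw [del_iff_induce G F s t (by simpa using hs) (by simpa using ht)]

end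

end VFL

/-- Randomized vertex-fault connectivity labels of size
`O(f² · log⁶ n)` bits, answering each fixed query correctly with probability
at least `1 − n^{−c}`. -/
theorem stmt_15 :
    ∀ c : ℝ, 1 ≤ c → ∃ C : ℝ, ∀ n f : ℕ, 2 ≤ n → 1 ≤ f →
      ∃ b : ℕ,
        (b : ℝ) ≤ C * (f : ℝ) ^ 2 * (Real.logb 2 n) ^ 6 ∧
        ∃ D : (Fin b → Bool) → (Fin b → Bool) → Finset (Fin b → Bool) → Bool,
          ∀ G : SimpleGraph (Fin n),
            ∃ (N : ℕ) (μ : Fin N → ℝ) (LV : Fin N → Fin n → Fin b → Bool),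
              (∀ ω, 0 ≤ μ ω) ∧ (∑ ω, μ ω = 1) ∧
              ∀ (s t : Fin n) (F : Finset (Fin n)) (hs : s ∉ F) (ht : t ∉ F),
                F.card ≤ f →
                1 - (n : ℝ) ^ (-c) ≤
                  ∑ ω ∈ Finset.univ.filter (fun ω =>
                      (D (LV ω s) (LV ω t) (F.image (LV ω)) = true ↔
                        (G.induce ((↑F : Set (Fin n))ᶜ)).Reachable
                          ⟨s, by simpa using hs⟩ ⟨t, by simpa using ht⟩)),
                    μ ω := by
  intro c hc
  exact VFL.final c hc
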